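/- arXiv:math-ph/0102029 — 3 statements merged into one kernel-verified Lean document; each statement's English description precedes it below -/
import Mathlib

section
/- Suppose q1 and q2 are continuous real-valued potentials on [0,1], each symmetric about the midpoint (qi(1/2 + x) = qi(1/2 − x) for all x ∈ [0,1/2], i = 1,2), a is an admissible boundary pulse, and u1, u2 are classical solutions of the heat problem for q1 and q2 respectively, with the same boundary data a. If ∂x u1(0,t) = ∂x u2(0,t) for all t > 0, then q1 = q2 on [0,1]. -/
/-- An admissible boundary pulse: integrable on `(0,∞)`, vanishing beyond some
`T > 0`, and not almost everywhere zero. -/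
def IsAdmissiblePulse (a : ℝ → ℝ) : Prop :=
  MeasureTheory.IntegrableOn a (Set.Ioi 0) ∧
  (∃ T > (0:ℝ), ∀ t > T, a t = 0) ∧
  ¬ (a =ᵐ[MeasureTheory.volume.restrict (Set.Ioi 0)] 0)

/-- `u` (with partial derivatives `ux`, `uxx` in `x` and `ut` in `t`) is a
classical solution of `u_t = u_xx - q(x) u` on `[0,1] × (0,∞)` with zero initial
data, `u(0,t) = 0` and `u(1,t) = a(t)`. -/
def IsHeatSolution (q a : ℝ → ℝ) (u ux uxx ut : ℝ → ℝ → ℝ) : Prop :=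
  ContinuousOn (fun p : ℝ × ℝ => u p.1 p.2) (Set.Icc 0 1 ×ˢ Set.Ici 0) ∧
  (∀ t > (0:ℝ), ∀ x ∈ Set.Icc (0:ℝ) 1, HasDerivAt (fun y => u y t) (ux x t) x) ∧
  (∀ t > (0:ℝ), ∀ x ∈ Set.Icc (0:ℝ) 1, HasDerivAt (fun y => ux y t) (uxx x t) x) ∧
  (∀ t > (0:ℝ), ContinuousOn (fun x => uxx x t) (Set.Icc 0 1)) ∧
  (∀ x ∈ Set.Icc (0:ℝ) 1, ∀ t > (0:ℝ), HasDerivAt (fun s => u x s) (ut x t) t) ∧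
  (∀ x ∈ Set.Icc (0:ℝ) 1, ContinuousOn (fun t => ut x t) (Set.Ioi 0)) ∧
  (∀ x ∈ Set.Ioo (0:ℝ) 1, ∀ t > (0:ℝ), ut x t = uxx x t - q x * u x t) ∧
  (∀ x ∈ Set.Icc (0:ℝ) 1, u x 0 = 0) ∧
  (∀ t > (0:ℝ), u 0 t = 0 ∧ u 1 t = a t)

/-- Exponential growth bound `|u| + |u_x| ≤ C e^{c t}` on `[0,1] × [0,∞)`. -/
def HeatGrowthBound (u ux : ℝ → ℝ → ℝ) (C c : ℝ) : Prop :=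
  ∀ x ∈ Set.Icc (0:ℝ) 1, ∀ t ∈ Set.Ici (0:ℝ), |u x t| + |ux x t| ≤ C * Real.exp (c * t)


namespace Borg
open MeasureTheory Set Filter Topology



/-- functions which are polynomial in the spectral parameter with continuous coefficients -/
def PolyFun (f : ℝ → ℂ → ℂ) : Prop :=
  ∃ (N : ℕ) (c : ℕ → ℝ → ℂ), (∀ j, Continuous (c j)) ∧
    ∀ x s, f x s = ∑ j ∈ Finset.range N, s ^ j * c j x

lemma PolyFun.continuous {f : ℝ → ℂ → ℂ} (h : PolyFun f) :
    Continuous (fun p : ℝ × ℂ => f p.1 p.2) := by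
  obtain ⟨N, c, hc, hf⟩ := h
  simp only [hf]
  refine continuous_finsetSum _ fun j _ => ?_
  exact (continuous_snd.pow j).mul ((hc j).comp continuous_fst)

lemma PolyFun.continuous_left {f : ℝ → ℂ → ℂ} (h : PolyFun f) (s : ℂ) :
    Continuous (fun x => f x s) :=
  h.continuous.comp (Continuous.prodMk_left s)

lemma PolyFun.differentiable {f : ℝ → ℂ → ℂ} (h : PolyFun f) (x : ℝ) :
    Differentiable ℂ (fun s => f x s) := by
  obtain ⟨N, c, hc, hf⟩ := h
  simp only [hf]
  fun_prop

lemma PolyFun.integral {f : ℝ → ℂ → ℂ} (h : PolyFun f) :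
    PolyFun (fun x s => ∫ t in (0:ℝ)..x, f t s) := by
  obtain ⟨N, c, hc, hf⟩ := h
  refine ⟨N, fun j x => ∫ t in (0:ℝ)..x, c j t, fun j => ?_, fun x s => ?_⟩
  · exact intervalIntegral.continuous_primitive (fun a b => (hc j).intervalIntegrable a b) 0
  · simp only [hf]
    rw [intervalIntegral.integral_finsetSum]
    · simp only [intervalIntegral.integral_const_mul]
    · intro j _
      exact (continuous_const.mul (hc j)).intervalIntegrable _ _

lemma PolyFun.mul_pot {f : ℝ → ℂ → ℂ} (h : PolyFun f) {q : ℝ → ℝ} (hq : Continuous q) :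
    PolyFun (fun x s => ((q x : ℂ) + s) * f x s) := by
  obtain ⟨N, c, hc, hf⟩ := h
  refine ⟨N + 1, fun j x => (if j < N then (q x : ℂ) * c j x else 0) +
    (if j = 0 then 0 else c (j - 1) x), fun j => ?_, fun x s => ?_⟩
  · refine Continuous.add ?_ ?_
    · split_ifs
      · exact (Complex.continuous_ofReal.comp hq).mul (hc j)
      · exact continuous_const
    · split_ifs
      · exact continuous_const
      · exact hc _
  · simp only [hf, mul_add, Finset.sum_add_distrib]
    rw [Finset.sum_range_succ, Finset.sum_range_succ' (fun j => s ^ j * if j = 0 then 0 else _)]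
    simp only [lt_irrefl, if_false, mul_zero, add_zero, if_true, Nat.add_sub_cancel,
      Nat.succ_ne_zero]
    rw [add_mul, Finset.mul_sum, Finset.mul_sum]
    congr 1
    · refine Finset.sum_congr rfl fun j hj => ?_
      rw [if_pos (Finset.mem_range.1 hj)]; ring
    · refine Finset.sum_congr rfl fun j hj => ?_
      ring

lemma norm_integral_pow_le {f : ℝ → ℂ} (hf : Continuous f) {C : ℝ} {n : ℕ}
    (h : ∀ t, ‖f t‖ ≤ C * |t| ^ n) (x : ℝ) :
    ‖∫ t in (0:ℝ)..x, f t‖ ≤ C * (|x| ^ (n + 1) / (n + 1)) := by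
  refine (intervalIntegral.norm_integral_le_integral_norm_uIoc).trans ?_
  have h2 := integral_pow_abs_sub_uIoc (a := 0) (b := x) n
  simp only [sub_zero] at h2
  rw [← h2, ← integral_const_mul]
  refine setIntegral_mono_on ?_ ?_ measurableSet_uIoc fun t _ => h t
  · exact (hf.norm.intervalIntegrable 0 x).def'
  · exact ((by fun_prop : Continuous fun t : ℝ => C * |t| ^ n).intervalIntegrable 0 x).def'

noncomputable def AB (q : ℝ → ℝ) : ℕ → (ℝ → ℂ → ℂ) × (ℝ → ℂ → ℂ)
  | 0 => (fun _ _ => 0, fun _ _ => 1)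
  | n + 1 => (fun x s => ∫ t in (0:ℝ)..x, (AB q n).2 t s,
      fun x s => ∫ t in (0:ℝ)..x, ((q t : ℂ) + s) * (AB q n).1 t s)

lemma AB_poly {q : ℝ → ℝ} (hq : Continuous q) (n : ℕ) :
    PolyFun (AB q n).1 ∧ PolyFun (AB q n).2 := by
  induction n with
  | zero =>
    exact ⟨⟨0, fun _ _ => 0, fun _ => continuous_const, fun x s => by simp [AB]⟩,
      ⟨1, fun _ _ => 1, fun _ => continuous_const, fun x s => by simp [AB]⟩⟩
  | succ n ih => exact ⟨ih.2.integral, (ih.1.mul_pot hq).integral⟩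

lemma AB_bound {q : ℝ → ℝ} (hq : Continuous q) {Q : ℝ} (hQ : ∀ x, |q x| ≤ Q) (s : ℂ) {M : ℝ}
    (hM : 1 + Q + ‖s‖ ≤ M) (n : ℕ) :
    ∀ x, ‖(AB q n).1 x s‖ ≤ M ^ n / n.factorial * |x| ^ n ∧
      ‖(AB q n).2 x s‖ ≤ M ^ n / n.factorial * |x| ^ n := by
  have hQ0 : 0 ≤ Q := (abs_nonneg _).trans (hQ 0)
  have hs0 := norm_nonneg s
  have hM1 : 1 ≤ M := by linarith
  induction n with
  | zero => intro x; simp [AB]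
  | succ n ih =>
    intro x
    have key : M * (M ^ n / n.factorial) * (|x| ^ (n + 1) / (n + 1)) =
      M ^ (n + 1) / (n + 1).factorial * |x| ^ (n + 1) := by
      rw [Nat.factorial_succ]; push_cast; field_simp; ring
    rw [← key]
    have hp := AB_poly hq n
    constructor
    · refine norm_integral_pow_le (hp.2.continuous_left s) (fun t => ((ih t).2).trans ?_) x
      have : 0 ≤ M ^ n / n.factorial * |t| ^ n := by positivity
      nlinarith
    · refine norm_integral_pow_le ((hp.1.mul_pot hq).continuous_left s) (fun t => ?_) x
      rw [norm_mul, mul_assoc]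
      refine mul_le_mul ?_ (ih t).1 (norm_nonneg _) (by linarith)
      refine (norm_add_le _ _).trans ?_
      rw [Complex.norm_real, Real.norm_eq_abs]
      linarith [hQ t]

/-- data of the fundamental solution -/
structure IsFund (q : ℝ → ℝ) (φ φ' : ℝ → ℂ → ℂ) : Prop where
  d1 : ∀ s x, HasDerivAt (fun y => φ y s) (φ' x s) x
  d2 : ∀ s x, HasDerivAt (fun y => φ' y s) (((q x : ℂ) + s) * φ x s) x
  z0 : ∀ s, φ 0 s = 0
  z1 : ∀ s, φ' 0 s = 1
  an : ∀ x, Differentiable ℂ (fun s => φ x s)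
  ct : Continuous (fun p : ℝ × ℂ => φ p.1 p.2)

lemma exists_fund {q : ℝ → ℝ} (hq : Continuous q) {Q : ℝ} (hQ : ∀ x, |q x| ≤ Q) :
    ∃ φ φ' : ℝ → ℂ → ℂ, IsFund q φ φ' := by
  have hQ0 : 0 ≤ Q := (abs_nonneg _).trans (hQ 0)
  have hsum : ∀ M R : ℝ, Summable fun n : ℕ => M ^ n / n.factorial * R ^ n := by
    intro M R
    refine (Real.summable_pow_div_factorial (M * R)).congr fun n => ?_
    rw [mul_pow]; ring
  have hb : ∀ (S R : ℝ) (n : ℕ) (x : ℝ) (s : ℂ), |x| ≤ R → ‖s‖ ≤ S →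
      ‖(AB q n).1 x s‖ ≤ (1 + Q + S) ^ n / n.factorial * R ^ n ∧
      ‖(AB q n).2 x s‖ ≤ (1 + Q + S) ^ n / n.factorial * R ^ n := by
    intro S R n x s hx hs
    have h := AB_bound hq hQ s (M := 1 + Q + S) (by linarith) n x
    have h2 : (1 + Q + S) ^ n / n.factorial * |x| ^ n ≤
        (1 + Q + S) ^ n / n.factorial * R ^ n := by
      have : 0 ≤ 1 + Q + S := by linarith [norm_nonneg s]
      gcongr
    exact ⟨h.1.trans h2, h.2.trans h2⟩
  have hsa : ∀ x s, Summable fun n => (AB q n).1 x s := fun x s =>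
    Summable.of_norm_bounded (hsum (1 + Q + ‖s‖) |x|) fun n => (hb _ _ n x s le_rfl le_rfl).1
  have hsb : ∀ x s, Summable fun n => (AB q n).2 x s := fun x s =>
    Summable.of_norm_bounded (hsum (1 + Q + ‖s‖) |x|) fun n => (hb _ _ n x s le_rfl le_rfl).2
  have hA0 : ∀ n s, (AB q n).1 0 s = 0 := by
    intro n s
    cases n <;> simp [AB]
  have hea : ∀ x s, ∑' n, (AB q n).1 x s = ∑' n, (AB q (n + 1)).1 x s := by
    intro x s
    rw [(hsa x s).tsum_eq_zero_add]; simp [AB]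
  have heb : ∀ x s, ∑' n, (AB q n).2 x s = 1 + ∑' n, (AB q (n + 1)).2 x s := by
    intro x s
    rw [(hsb x s).tsum_eq_zero_add]; simp [AB]
  have hmem : ∀ x : ℝ, x ∈ Ioo (-(|x| + 1)) (|x| + 1) := fun x =>
    ⟨by linarith [neg_abs_le x], by linarith [le_abs_self x]⟩
  have habs : ∀ {x y : ℝ}, y ∈ Ioo (-(|x| + 1)) (|x| + 1) → |y| ≤ |x| + 1 := fun h =>
    abs_le.2 ⟨h.1.le, h.2.le⟩
  have hmem0 : ∀ x : ℝ, (0:ℝ) ∈ Ioo (-(|x| + 1)) (|x| + 1) := fun x =>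
    ⟨by linarith [abs_nonneg x], by linarith [abs_nonneg x]⟩
  refine ⟨fun x s => ∑' n, (AB q n).1 x s, fun x s => ∑' n, (AB q n).2 x s,
    ⟨fun s x => ?_, fun s x => ?_, fun s => ?_, fun s => ?_, fun x => ?_, ?_⟩⟩
  · simp only [hea]
    refine hasDerivAt_tsum_of_isPreconnected (g := fun n y => (AB q (n + 1)).1 y s)
      (g' := fun n y => (AB q n).2 y s) (hsum (1 + Q + ‖s‖) (|x| + 1)) isOpen_Ioo
      isPreconnected_Ioo (fun n y _ => ?_) (fun n y hy => (hb _ _ n y s (habs hy) le_rfl).2)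
      (hmem0 x) ?_ (hmem x)
    · exact intervalIntegral.integral_hasDerivAt_right
        (((AB_poly hq n).2.continuous_left s).intervalIntegrable _ _)
        (((AB_poly hq n).2.continuous_left s).stronglyMeasurableAtFilter _ _)
        ((AB_poly hq n).2.continuous_left s).continuousAt
    · simp [hA0]
  · simp only [heb]
    rw [← tsum_mul_left]
    refine HasDerivAt.const_add _ ?_
    refine hasDerivAt_tsum_of_isPreconnected (g := fun n y => (AB q (n + 1)).2 y s)
      (g' := fun n y => ((q y : ℂ) + s) * (AB q n).1 y s)
      ((hsum (1 + Q + ‖s‖) (|x| + 1)).mul_left (Q + ‖s‖)) isOpen_Ioo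
      isPreconnected_Ioo (fun n y _ => ?_) (fun n y hy => ?_)
      (hmem0 x) ?_ (hmem x)
    · have hc := ((AB_poly hq n).1.mul_pot hq).continuous_left s
      exact intervalIntegral.integral_hasDerivAt_right (hc.intervalIntegrable _ _)
        (hc.stronglyMeasurableAtFilter _ _) hc.continuousAt
    · rw [norm_mul]
      refine mul_le_mul ?_ (hb _ _ n y s (habs hy) le_rfl).1 (norm_nonneg _)
        (by linarith [norm_nonneg s])
      refine (norm_add_le _ _).trans ?_
      rw [Complex.norm_real, Real.norm_eq_abs]
      linarith [hQ y]
    · exact (summable_nat_add_iff 1).2 (hsb 0 s)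
  · simp [hA0]
  · simp only [heb]
    simp [AB]
  · intro s
    have := Complex.differentiableOn_tsum_of_summable_norm
      (hsum (1 + Q + (‖s‖ + 1)) |x|) (F := fun n s => (AB q n).1 x s)
      (U := Metric.ball 0 (‖s‖ + 1)) (fun n => ((AB_poly hq n).1.differentiable x).differentiableOn)
      Metric.isOpen_ball (fun n w hw => (hb _ _ n x w le_rfl (mem_ball_zero_iff.1 hw).le).1)
    exact this.differentiableAt (Metric.isOpen_ball.mem_nhds (by simp))
  · rw [continuous_iff_continuousAt]
    rintro ⟨x, s⟩
    have := continuousOn_tsum (f := fun n (p : ℝ × ℂ) => (AB q n).1 p.1 p.2)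
      (s := Ioo (-(|x| + 1)) (|x| + 1) ×ˢ Metric.ball 0 (‖s‖ + 1))
      (fun n => (AB_poly hq n).1.continuous.continuousOn)
      (hsum (1 + Q + (‖s‖ + 1)) (|x| + 1))
      (fun n p hp => (hb _ _ n p.1 p.2 (habs hp.1) (mem_ball_zero_iff.1 hp.2).le).1)
    refine this.continuousAt ?_
    exact (isOpen_Ioo.prod Metric.isOpen_ball).mem_nhds ⟨hmem x, by simp⟩


lemma ode_uniq {q : ℝ → ℝ} {Q : ℝ} (hQ : ∀ x, |q x| ≤ Q) (s : ℂ) {y y' z z' : ℝ → ℂ}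
    (hy : ∀ x, HasDerivAt y (y' x) x) (hy' : ∀ x, HasDerivAt y' (((q x : ℂ) + s) * y x) x)
    (hz : ∀ x, HasDerivAt z (z' x) x) (hz' : ∀ x, HasDerivAt z' (((q x : ℂ) + s) * z x) x)
    (h0 : y 0 = z 0) (h0' : y' 0 = z' 0) : y = z ∧ y' = z' := by
  have hQ0 : 0 ≤ Q := (abs_nonneg _).trans (hQ 0)
  have hK : 0 ≤ 1 + Q + ‖s‖ := by positivity
  have key : (fun x => (y x, y' x)) = fun x => (z x, z' x) := by
    refine ODE_solution_unique_univ (v := fun t p => (p.2, ((q t : ℂ) + s) * p.1))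
      (s := fun _ => univ) (K := ⟨1 + Q + ‖s‖, hK⟩) (t₀ := 0) (fun t => ?_)
      (fun t => ⟨(hy t).prodMk (hy' t), mem_univ _⟩)
      (fun t => ⟨(hz t).prodMk (hz' t), mem_univ _⟩) (by simp [h0, h0'])
    refine LipschitzWith.lipschitzOnWith (LipschitzWith.of_dist_le_mul fun p r => ?_)
    change dist _ _ ≤ (1 + Q + ‖s‖) * dist p r
    rw [Prod.dist_eq, Prod.dist_eq]
    have hs := norm_nonneg s
    have hd1 : 0 ≤ dist p.1 r.1 := dist_nonneg
    have hd2 : 0 ≤ dist p.2 r.2 := dist_nonneg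
    refine max_le ?_ ?_
    · refine (le_max_right (dist p.1 r.1) (dist p.2 r.2)).trans ?_
      have : 0 ≤ max (dist p.1 r.1) (dist p.2 r.2) := hd1.trans (le_max_left _ _)
      nlinarith
    · rw [dist_eq_norm, ← mul_sub, norm_mul, ← dist_eq_norm]
      refine mul_le_mul ?_ (le_max_left _ _) hd1 hK
      refine (norm_add_le _ _).trans ?_
      rw [Complex.norm_real, Real.norm_eq_abs]
      linarith [hQ t]
  refine ⟨funext fun x => ?_, funext fun x => ?_⟩
  · exact congrArg Prod.fst (congrFun key x)
  · exact congrArg Prod.snd (congrFun key x)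

variable {q : ℝ → ℝ} {φ φ' : ℝ → ℂ → ℂ}

lemma IsFund.cont (h : IsFund q φ φ') (s : ℂ) : Continuous fun x => φ x s :=
  h.ct.comp (Continuous.prodMk_left s)

lemma IsFund.cont' (h : IsFund q φ φ') (s : ℂ) : Continuous fun x => φ' x s :=
  continuous_iff_continuousAt.2 fun x => (h.d2 s x).continuousAt

lemma hasDerivAt_conj {f : ℝ → ℂ} {f' : ℂ} {x : ℝ} (h : HasDerivAt f f' x) :
    HasDerivAt (fun y => (starRingEnd ℂ) (f y)) ((starRingEnd ℂ) f') x :=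
  (Complex.conjCLE.toContinuousLinearMap.hasFDerivAt.comp_hasDerivAt x h)

lemma IsFund.conj (h : IsFund q φ φ') {Q : ℝ} (hQ : ∀ x, |q x| ≤ Q) (s : ℂ) (x : ℝ) :
    φ x ((starRingEnd ℂ) s) = (starRingEnd ℂ) (φ x s) := by
  have := (ode_uniq hQ ((starRingEnd ℂ) s) (h.d1 _) (h.d2 _)
    (fun x => hasDerivAt_conj (h.d1 s x))
    (fun x => by simpa using hasDerivAt_conj (h.d2 s x)) (by simp [h.z0]) (by simp [h.z1])).1
  exact congrFun this x

lemma IsFund.real (h : IsFund q φ φ') {Q : ℝ} (hQ : ∀ x, |q x| ≤ Q) {s : ℂ} (hs : s.im = 0)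
    (x : ℝ) : (φ x s).im = 0 := by
  have := h.conj hQ s x
  rw [Complex.conj_eq_iff_im.2 hs] at this
  exact Complex.conj_eq_iff_im.1 this.symm

lemma IsFund.lagrange (h : IsFund q φ φ') (s s' : ℂ) (x : ℝ) :
    (s - s') * ∫ t in (0:ℝ)..x, φ t s * φ t s' = φ' x s * φ x s' - φ x s * φ' x s' := by
  have hd : ∀ t ∈ uIcc (0:ℝ) x, HasDerivAt (fun y => φ' y s * φ y s' - φ y s * φ' y s')
      ((s - s') * (φ t s * φ t s')) t := by
    intro t _
    refine HasDerivAt.congr_deriv (((h.d2 s t).mul (h.d1 s' t)).sub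
      ((h.d1 s t).mul (h.d2 s' t))) ?_
    ring
  have := intervalIntegral.integral_eq_sub_of_hasDerivAt hd
    ((continuous_const.mul ((h.cont s).mul (h.cont s'))).intervalIntegrable _ _)
  rw [intervalIntegral.integral_const_mul] at this
  rw [this]
  simp [h.z0]

lemma IsFund.pos (h : IsFund q φ φ') (s : ℂ) {x : ℝ} (hx : 0 < x) :
    0 < ∫ t in (0:ℝ)..x, ‖φ t s‖ ^ 2 := by
  refine intervalIntegral.integral_pos hx ((h.cont s).norm.pow 2).continuousOn
    (fun t _ => by positivity) ?_
  have h1 := (h.d1 s 0).eventually_ne (c := 0) (by rw [h.z1]; exact one_ne_zero)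
  have h2 : ∀ᶠ z in 𝓝[>] (0:ℝ), φ z s ≠ 0 :=
    h1.filter_mono (nhdsWithin_mono _ fun z hz => ne_of_gt hz)
  obtain ⟨c, hc, hc2⟩ := (h2.and (Ioo_mem_nhdsGT hx)).exists
  exact ⟨c, ⟨hc2.1.le, hc2.2.le⟩, by positivity⟩

lemma IsFund.real_zero (h : IsFund q φ φ') {Q : ℝ} (hQ : ∀ x, |q x| ≤ Q) {s : ℂ} {x : ℝ}
    (hx : 0 < x) (h0 : φ x s = 0) : s.im = 0 := by
  have hl := h.lagrange s ((starRingEnd ℂ) s) x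
  simp only [h.conj hQ] at hl
  rw [h0] at hl
  simp only [Complex.mul_conj, Complex.normSq_eq_norm_sq] at hl
  rw [intervalIntegral.integral_ofReal] at hl
  simp only [map_zero, mul_zero, zero_mul, sub_zero, mul_eq_zero] at hl
  rcases hl with hl | hl
  · exact Complex.conj_eq_iff_im.1 (sub_eq_zero.1 hl).symm
  · exact absurd (Complex.ofReal_eq_zero.1 hl) (h.pos s hx).ne'

lemma IsFund.refl1 (h : IsFund q φ φ') (s : ℂ) (x : ℝ) :
    HasDerivAt (fun y => φ (1 - y) s) (-φ' (1 - x) s) x := by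
  refine HasDerivAt.congr_deriv ((h.d1 s (1 - x)).scomp x ((hasDerivAt_id x).const_sub 1)) ?_
  simp

lemma IsFund.refl2 (h : IsFund q φ φ') (hsym : ∀ x, q (1 - x) = q x) (s : ℂ) (x : ℝ) :
    HasDerivAt (fun y => -φ' (1 - y) s) (((q x : ℂ) + s) * φ (1 - x) s) x := by
  refine HasDerivAt.congr_deriv
    ((h.d2 s (1 - x)).scomp x ((hasDerivAt_id x).const_sub 1)).neg ?_
  simp [hsym]

lemma IsFund.at_zero (h : IsFund q φ φ') {Q : ℝ} (hQ : ∀ x, |q x| ≤ Q)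
    (hsym : ∀ x, q (1 - x) = q x) {s : ℂ} (h0 : φ 1 s = 0) :
    (∀ x, φ (1 - x) s = -φ' 1 s * φ x s) ∧ (-φ' 1 s) * (-φ' 1 s) = 1 := by
  have := ode_uniq hQ s (h.refl1 s) (h.refl2 hsym s)
    (fun x => (h.d1 s x).const_mul (-φ' 1 s))
    (fun x => by
      refine HasDerivAt.congr_deriv ((h.d2 s x).const_mul (-φ' 1 s)) ?_
      ring) (by simp [h0, h.z0]) (by simp [h.z1])
  refine ⟨fun x => congrFun this.1 x, ?_⟩
  have h1 := congrFun this.2 1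
  simp only [sub_self, h.z1] at h1
  linear_combination h1

lemma IsFund.deriv_zero (h : IsFund q φ φ') {Q : ℝ} (hQ : ∀ x, |q x| ≤ Q) {s : ℂ}
    (h0 : φ 1 s = 0) :
    ∃ r : ℝ, 0 < r ∧ (-φ' 1 s) * deriv (fun z => φ 1 z) s = r := by
  refine ⟨∫ t in (0:ℝ)..1, ‖φ t s‖ ^ 2, h.pos s one_pos, ?_⟩
  have hs := h.real_zero hQ one_pos h0
  have e1 : ((∫ t in (0:ℝ)..1, ‖φ t s‖ ^ 2 : ℝ) : ℂ) = ∫ t in (0:ℝ)..1, φ t s * φ t s := by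
    rw [← intervalIntegral.integral_ofReal]
    congr 1
    funext t
    rw [← Complex.normSq_eq_norm_sq, ← Complex.mul_conj,
      Complex.conj_eq_iff_im.2 (h.real hQ hs t)]
  rw [e1]
  have hc : Continuous fun z => ∫ t in (0:ℝ)..1, φ t z * φ t s := by
    refine intervalIntegral.continuous_parametric_intervalIntegral_of_continuous
      (f := fun z t => φ t z * φ t s) ?_ continuous_const
    exact (h.ct.comp continuous_swap).mul ((h.cont s).comp continuous_snd)
  have t1 : Tendsto (fun z => ∫ t in (0:ℝ)..1, φ t z * φ t s) (𝓝[≠] s)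
      (𝓝 (∫ t in (0:ℝ)..1, φ t s * φ t s)) := hc.continuousAt.continuousWithinAt
  have t2 := ((h.an 1 s).hasDerivAt.tendsto_slope).const_mul (-φ' 1 s)
  refine tendsto_nhds_unique (t2.congr' ?_) t1
  filter_upwards [self_mem_nhdsWithin] with z hz
  have hz' : z - s ≠ 0 := sub_ne_zero.2 hz
  have hl := h.lagrange z s 1
  rw [h0] at hl
  rw [slope_def_field, h0]
  field_simp
  linear_combination -hl

lemma norm_sin_le (z : ℂ) : ‖Complex.sin z‖ ≤ Real.exp |z.im| := by
  rw [Complex.sin, norm_div, norm_mul, Complex.norm_I, mul_one, Complex.norm_ofNat]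
  have h1 := norm_sub_le (Complex.exp (-z * Complex.I)) (Complex.exp (z * Complex.I))
  rw [Complex.norm_exp, Complex.norm_exp] at h1
  simp only [Complex.mul_I_re, Complex.neg_im, neg_neg] at h1
  have h2 : Real.exp z.im ≤ Real.exp |z.im| := Real.exp_le_exp.2 (le_abs_self _)
  have h3 : Real.exp (-z.im) ≤ Real.exp |z.im| := Real.exp_le_exp.2 (neg_le_abs _)
  linarith

lemma IsFund.volterra (h : IsFund q φ φ') (hq : Continuous q) {k : ℂ} (hk : k ≠ 0) (x : ℝ) :
    φ x (-k ^ 2) - Complex.sin (k * x) / k =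
      ∫ t in (0:ℝ)..x, q t * φ t (-k ^ 2) * (Complex.sin (k * (x - t)) / k) := by
  have hd : ∀ t ∈ uIcc (0:ℝ) x, HasDerivAt
      (fun t : ℝ => φ' t (-k ^ 2) * (Complex.sin (k * (x - t)) / k) +
        φ t (-k ^ 2) * Complex.cos (k * (x - t)))
      (q t * φ t (-k ^ 2) * (Complex.sin (k * (x - t)) / k)) t := by
    intro t _
    have hl : HasDerivAt (fun t : ℝ => k * ((x:ℂ) - t)) (-k) t := by
      simpa using ((Complex.ofRealCLM.hasDerivAt (x := t)).const_sub (x : ℂ)).const_mul k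
    have hs : HasDerivAt (fun t : ℝ => Complex.sin (k * ((x:ℂ) - t)))
      (Complex.cos (k * ((x:ℂ) - t)) * (-k)) t := (Complex.hasDerivAt_sin _).comp t hl
    have hc : HasDerivAt (fun t : ℝ => Complex.cos (k * ((x:ℂ) - t)))
      (-Complex.sin (k * ((x:ℂ) - t)) * (-k)) t := (Complex.hasDerivAt_cos _).comp t hl
    refine HasDerivAt.congr_deriv
      (((h.d2 (-k ^ 2) t).mul (hs.div_const k)).add ((h.d1 (-k ^ 2) t).mul hc)) ?_
    field_simp
    ring
  have hcont : Continuous fun t : ℝ => q t * φ t (-k ^ 2) * (Complex.sin (k * (x - t)) / k) := by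
    have := h.cont (-k ^ 2)
    fun_prop
  rw [intervalIntegral.integral_eq_sub_of_hasDerivAt hd (hcont.intervalIntegrable _ _)]
  simp [h.z0, h.z1]

lemma IsFund.volterra_bound (h : IsFund q φ φ') (hq : Continuous q) {Q : ℝ} (hQ : ∀ x, |q x| ≤ Q)
    {k : ℂ} (hk : k ≠ 0) {Y : ℝ} (hY : ∀ x ∈ Icc (0:ℝ) 1, ‖φ x (-k ^ 2)‖ ≤ Y * Real.exp (|k.im| * x))
    {x : ℝ} (hx : x ∈ Icc (0:ℝ) 1) :
    ‖φ x (-k ^ 2) - Complex.sin (k * x) / k‖ ≤ Q * Y / ‖k‖ * Real.exp (|k.im| * x) := by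
  have hk' : 0 < ‖k‖ := norm_pos_iff.2 hk
  have hQ0 : 0 ≤ Q := (abs_nonneg _).trans (hQ 0)
  have hY0 : 0 ≤ Y := by
    have := (norm_nonneg _).trans (hY 0 (by simp))
    simpa using this
  rw [h.volterra hq hk]
  have : ∀ t ∈ Set.uIoc (0:ℝ) x, ‖(q t : ℂ) * φ t (-k ^ 2) * (Complex.sin (k * (x - t)) / k)‖ ≤
      Q * Y / ‖k‖ * Real.exp (|k.im| * x) := by
    intro t ht
    rw [uIoc_of_le hx.1] at ht
    rw [norm_mul, norm_mul, norm_div, Complex.norm_real, Real.norm_eq_abs]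
    have h1 := norm_sin_le (k * (x - t))
    have h2 : (k * ((x:ℂ) - t)).im = k.im * (x - t) := by simp [Complex.mul_im]
    rw [h2, abs_mul, abs_of_nonneg (sub_nonneg.2 ht.2)] at h1
    have h3 := hY t ⟨ht.1.le, ht.2.trans hx.2⟩
    have h4 : Real.exp (|k.im| * x) = Real.exp (|k.im| * t) * Real.exp (|k.im| * (x - t)) := by
      rw [← Real.exp_add]; congr 1; ring
    calc |q t| * ‖φ t (-k ^ 2)‖ * (‖Complex.sin (k * (x - t))‖ / ‖k‖)
        ≤ Q * (Y * Real.exp (|k.im| * t)) * (Real.exp (|k.im| * (x - t)) / ‖k‖) := by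
          gcongr
          exact hQ t
      _ = _ := by rw [h4]; ring
  refine (intervalIntegral.norm_integral_le_of_norm_le_const this).trans ?_
  rw [sub_zero, abs_of_nonneg hx.1]
  refine mul_le_of_le_one_right (by positivity) hx.2

lemma IsFund.bound (h : IsFund q φ φ') (hq : Continuous q) {Q : ℝ} (hQ : ∀ x, |q x| ≤ Q)
    {k : ℂ} (hk : k ≠ 0) (hkQ : 2 * Q ≤ ‖k‖) {x : ℝ} (hx : x ∈ Icc (0:ℝ) 1) :
    ‖φ x (-k ^ 2)‖ ≤ 2 / ‖k‖ * Real.exp (|k.im| * x) := by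
  have hk' : 0 < ‖k‖ := norm_pos_iff.2 hk
  have hcont : Continuous fun x => ‖φ x (-k ^ 2)‖ * Real.exp (-(|k.im| * x)) := by
    have := h.cont (-k ^ 2)
    fun_prop
  obtain ⟨x0, hx0, hmax⟩ := isCompact_Icc.exists_isMaxOn (nonempty_Icc.2 (zero_le_one' ℝ))
    hcont.continuousOn
  set Y := ‖φ x0 (-k ^ 2)‖ * Real.exp (-(|k.im| * x0)) with hYdef
  have hY : ∀ x ∈ Icc (0:ℝ) 1, ‖φ x (-k ^ 2)‖ ≤ Y * Real.exp (|k.im| * x) := by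
    intro x hx
    have h1 : ‖φ x (-k ^ 2)‖ * Real.exp (-(|k.im| * x)) ≤ Y := hmax hx
    rw [Real.exp_neg, ← div_eq_mul_inv, div_le_iff₀ (Real.exp_pos _)] at h1
    exact h1
  have h1 := h.volterra_bound hq hQ hk hY hx0
  have h2 : ‖Complex.sin (k * x0) / k‖ ≤ Real.exp (|k.im| * x0) / ‖k‖ := by
    rw [norm_div]
    have h1 := norm_sin_le (k * x0)
    have h2 : (k * (x0:ℂ)).im = k.im * x0 := by simp [Complex.mul_im]
    rw [h2, abs_mul, abs_of_nonneg hx0.1] at h1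
    gcongr
  have h3 : ‖φ x0 (-k ^ 2)‖ = Y * Real.exp (|k.im| * x0) := by
    rw [hYdef, mul_assoc, ← Real.exp_add]; simp
  have h4 : Y * Real.exp (|k.im| * x0) ≤
      Q * Y / ‖k‖ * Real.exp (|k.im| * x0) + Real.exp (|k.im| * x0) / ‖k‖ := by
    rw [← h3]
    have := norm_add_le (φ x0 (-k ^ 2) - Complex.sin (k * x0) / k) (Complex.sin (k * x0) / k)
    rw [sub_add_cancel] at this
    linarith
  have h5 : Y ≤ Q * Y / ‖k‖ + 1 / ‖k‖ := by
    have he := Real.exp_pos (|k.im| * x0)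
    refine le_of_mul_le_mul_right ?_ he
    calc _ ≤ _ := h4
      _ = _ := by ring
  have hY0 : 0 ≤ Y := by positivity
  have h6 : Y ≤ 2 / ‖k‖ := by
    rw [le_div_iff₀ hk']
    rw [← add_div, le_div_iff₀ hk'] at h5
    nlinarith
  exact (hY x hx).trans (by gcongr)

lemma IsFund.asymp (h : IsFund q φ φ') (hq : Continuous q) {Q : ℝ} (hQ : ∀ x, |q x| ≤ Q)
    {k : ℂ} (hk : k ≠ 0) (hkQ : 2 * Q ≤ ‖k‖) :
    ‖φ 1 (-k ^ 2) - Complex.sin k / k‖ ≤ Q * (2 / ‖k‖) / ‖k‖ * Real.exp |k.im| := by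
  have := h.volterra_bound hq hQ hk (fun x hx => h.bound hq hQ hk hkQ hx) (x := 1) (by simp)
  simpa using this


lemma exists_quotient {N D : ℂ → ℂ} (hN : Differentiable ℂ N) (hD : Differentiable ℂ D)
    (h : ∀ z, D z = 0 → N z = 0 ∧ deriv D z ≠ 0) :
    ∃ H : ℂ → ℂ, Differentiable ℂ H ∧ ∀ z, N z = H z * D z := by
  classical
  refine ⟨fun z => if D z = 0 then deriv N z / deriv D z else N z / D z, fun z0 => ?_,
    fun z => ?_⟩
  · by_cases h0 : D z0 = 0
    · obtain ⟨hN0, hD0⟩ := h z0 h0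
      have dN : DifferentiableAt ℂ (dslope N z0) z0 :=
        ((Complex.differentiableOn_dslope univ_mem).2 hN.differentiableOn).differentiableAt univ_mem
      have dD : DifferentiableAt ℂ (dslope D z0) z0 :=
        ((Complex.differentiableOn_dslope univ_mem).2 hD.differentiableOn).differentiableAt univ_mem
      have hne : dslope D z0 z0 ≠ 0 := by rwa [dslope_same]
      refine (dN.div dD hne).congr_of_eventuallyEq ?_
      filter_upwards [dD.continuousAt.eventually_ne hne] with z hz
      by_cases hzz : z = z0
      · subst hzz
        simp [h0, dslope_same]
      · have hs : z - z0 ≠ 0 := sub_ne_zero.2 hzz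
        have e1 : dslope D z0 z = D z / (z - z0) := by
          rw [dslope_of_ne _ hzz, slope_def_field, h0, sub_zero]
        have e2 : dslope N z0 z = N z / (z - z0) := by
          rw [dslope_of_ne _ hzz, slope_def_field, hN0, sub_zero]
        have hDz : D z ≠ 0 := by
          intro h'
          rw [e1, h', zero_div] at hz
          exact hz rfl
        rw [if_neg hDz]
        change _ = dslope N z0 z / dslope D z0 z
        rw [e1, e2]
        field_simp
    · refine ((hN z0).div (hD z0) h0).congr_of_eventuallyEq ?_
      filter_upwards [(hD z0).continuousAt.eventually_ne h0] with z hz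
      rw [if_neg hz]; rfl
  · by_cases h0 : D z = 0
    · simp [h0, (h z h0).1]
    · simp [h0]

lemma sin_lower {L : ℝ} (hL : 1 ≤ L) (hcos : Real.cos L = 0) {k : ℂ}
    (h : |k.im| = L ∨ |k.re| = L) : Real.exp |k.im| / 4 ≤ ‖Complex.sin k‖ := by
  rcases h with h | h
  · have h1 : ‖Complex.sin k‖ = ‖Complex.exp (-k * Complex.I) - Complex.exp (k * Complex.I)‖ / 2 := by
      rw [Complex.sin, norm_div, norm_mul, Complex.norm_I, mul_one, Complex.norm_ofNat]
    have h2 := abs_norm_sub_norm_le (Complex.exp (-k * Complex.I)) (Complex.exp (k * Complex.I))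
    rw [Complex.norm_exp, Complex.norm_exp] at h2
    simp only [Complex.mul_I_re, Complex.neg_im, neg_neg] at h2
    have h3 : Real.exp |k.im| - Real.exp (-|k.im|) ≤ |Real.exp k.im - Real.exp (-k.im)| := by
      rcases abs_cases k.im with ⟨e, _⟩ | ⟨e, _⟩
      · rw [e]; exact le_abs_self _
      · rw [e, neg_neg, abs_sub_comm]; exact le_abs_self _
    have h4 : 2 ≤ Real.exp |k.im| := by
      have := Real.add_one_le_exp |k.im|
      linarith
    have h5 : Real.exp (-|k.im|) ≤ 1 := Real.exp_le_one_iff.2 (by linarith)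
    linarith
  · have hc : Real.cos k.re = 0 := by rw [← Real.cos_abs, h, hcos]
    have hs : |Real.sin k.re| = 1 := by
      have := Real.sin_sq_add_cos_sq k.re
      rw [hc] at this
      rw [← sq_eq_sq₀ (abs_nonneg _) zero_le_one, sq_abs]
      linarith
    rw [Complex.sin_eq, ← Complex.ofReal_cos, ← Complex.ofReal_sin, hc, ← Complex.ofReal_cosh]
    simp only [Complex.ofReal_zero, zero_mul, add_zero, norm_mul, Complex.norm_real,
      Real.norm_eq_abs, hs, one_mul, abs_of_pos (Real.cosh_pos _)]
    rw [← Real.cosh_abs, Real.cosh_eq]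
    have := Real.exp_pos |k.im|
    have := Real.exp_pos (-|k.im|)
    linarith

lemma quotient_zero {q1 q2 : ℝ → ℝ} {φ1 φ1' φ2 φ2' : ℝ → ℂ → ℂ} (h1 : IsFund q1 φ1 φ1')
    (h2 : IsFund q2 φ2 φ2') (hq1 : Continuous q1) (hq2 : Continuous q2) {Q : ℝ}
    (hQ1 : ∀ x, |q1 x| ≤ Q) (hQ2 : ∀ x, |q2 x| ≤ Q) {x : ℝ} (hx : x ∈ Icc (0:ℝ) 1)
    {H : ℂ → ℂ} (hH : Differentiable ℂ H)
    (hHe : ∀ s, φ1 x s * φ2 (1 - x) s - φ2 x s * φ1 (1 - x) s = H s * φ1 1 s) :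
    ∀ s, H s = 0 := by
  have hQ0 : 0 ≤ Q := (abs_nonneg _).trans (hQ1 0)
  have key : ∀ k : ℂ, H (-k ^ 2) = 0 := by
    intro k0
    have hbd : ∀ n : ℕ, ‖k0‖ + 16 * Q + 1 ≤ n → ‖H (-k0 ^ 2)‖ ≤ 64 / n := by
      intro n hn
      have hn1 : (1:ℝ) ≤ n := by linarith [norm_nonneg k0]
      set L : ℝ := n * Real.pi + Real.pi / 2 with hLdef
      have hLn : (n:ℝ) ≤ L := by
        have := Real.pi_gt_three
        nlinarith
      have hcos : Real.cos L = 0 := by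
        rw [hLdef, Real.cos_add, Real.cos_pi_div_two, Real.sin_nat_mul_pi]; ring
      have hL1 : 1 ≤ L := hn1.trans hLn
      have hLL : -L < L := by linarith
      set U : Set ℂ := Ioo (-L) L ×ℂ Ioo (-L) L with hU
      have hUb : Bornology.IsBounded U := (Metric.isBounded_Ioo _ _).reProdIm (Metric.isBounded_Ioo _ _)
      have hdiff : Differentiable ℂ fun k : ℂ => H (-k ^ 2) := hH.comp (by fun_prop)
      refine Complex.norm_le_of_forall_mem_frontier_norm_le hUb hdiff.diffContOnCl
        (fun k hk => ?_) (z := k0) (subset_closure ?_)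
      · rw [hU, Complex.frontier_reProdIm, closure_Ioo hLL.ne, frontier_Ioo hLL] at hk
        have hor : |k.im| = L ∨ |k.re| = L := by
          rcases hk with hk | hk
          · left
            rcases hk.2 with e | e
            · rw [e, abs_neg, abs_of_nonneg (by linarith)]
            · rw [e, abs_of_nonneg (by linarith)]
          · right
            rcases hk.1 with e | e
            · rw [e, abs_neg, abs_of_nonneg (by linarith)]
            · rw [e, abs_of_nonneg (by linarith)]
        have hkL : L ≤ ‖k‖ := by
          rcases hor with e | e
          · rw [← e]; exact Complex.abs_im_le_norm k
          · rw [← e]; exact Complex.abs_re_le_norm k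
        have hkn : (n:ℝ) ≤ ‖k‖ := hLn.trans hkL
        have hk0 : 0 < ‖k‖ := by linarith
        have hkne : k ≠ 0 := norm_pos_iff.1 hk0
        have hkQ : 16 * Q ≤ ‖k‖ := by linarith [norm_nonneg k0]
        have hkQ2 : 2 * Q ≤ ‖k‖ := by linarith [norm_nonneg k0]
        have hx' : 1 - x ∈ Icc (0:ℝ) 1 := ⟨by linarith [hx.2], by linarith [hx.1]⟩
        have b1 := h1.bound hq1 hQ1 hkne hkQ2 hx
        have b2 := h2.bound hq2 hQ2 hkne hkQ2 hx
        have b1' := h1.bound hq1 hQ1 hkne hkQ2 hx'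
        have b2' := h2.bound hq2 hQ2 hkne hkQ2 hx'
        have as := h1.asymp hq1 hQ1 hkne hkQ2
        have sl := sin_lower hL1 hcos hor
        set E := Real.exp |k.im| with hE
        have hE0 : 0 < E := Real.exp_pos _
        have hprod : Real.exp (|k.im| * x) * Real.exp (|k.im| * (1 - x)) = E := by
          rw [← Real.exp_add, hE]; congr 1; ring
        have bN : ‖φ1 x (-k ^ 2) * φ2 (1 - x) (-k ^ 2) - φ2 x (-k ^ 2) * φ1 (1 - x) (-k ^ 2)‖ ≤
            8 / ‖k‖ ^ 2 * E := by
          refine (norm_sub_le _ _).trans ?_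
          rw [norm_mul, norm_mul]
          have c1 := mul_le_mul b1 b2' (norm_nonneg _) (by positivity)
          have c2 := mul_le_mul b2 b1' (norm_nonneg _) (by positivity)
          have e : 2 / ‖k‖ * Real.exp (|k.im| * x) * (2 / ‖k‖ * Real.exp (|k.im| * (1 - x))) =
            4 / ‖k‖ ^ 2 * E := by rw [← hprod]; field_simp; norm_num
          rw [e] at c1 c2
          have e2 : 8 / ‖k‖ ^ 2 * E = 4 / ‖k‖ ^ 2 * E + 4 / ‖k‖ ^ 2 * E := by ring
          rw [e2]
          exact add_le_add c1 c2
        have bD : E / (8 * ‖k‖) ≤ ‖φ1 1 (-k ^ 2)‖ := by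
          have t := norm_sub_norm_le (Complex.sin k / k) (Complex.sin k / k - φ1 1 (-k ^ 2))
          rw [sub_sub_cancel, norm_sub_rev (Complex.sin k / k), norm_div] at t
          have u1 : E / 4 / ‖k‖ ≤ ‖Complex.sin k‖ / ‖k‖ := by gcongr
          have u2 : Q * (2 / ‖k‖) / ‖k‖ * E ≤ E / (8 * ‖k‖) := by
            have : Q * (2 / ‖k‖) / ‖k‖ * E = (16 * Q / ‖k‖) * (E / (8 * ‖k‖)) := by
              field_simp; ring
            rw [this]
            exact mul_le_of_le_one_left (by positivity) ((div_le_one hk0).2 hkQ)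
          have u3 : E / 4 / ‖k‖ = E / (8 * ‖k‖) + E / (8 * ‖k‖) := by field_simp; norm_num
          linarith
        rw [hHe, norm_mul] at bN
        have v1 : ‖H (-k ^ 2)‖ * (E / (8 * ‖k‖)) ≤ 8 / ‖k‖ ^ 2 * E :=
          (mul_le_mul_of_nonneg_left bD (norm_nonneg _)).trans bN
        have v2 : 8 / ‖k‖ ^ 2 * E = (64 / ‖k‖) * (E / (8 * ‖k‖)) := by field_simp; norm_num
        rw [v2] at v1
        have v3 := le_of_mul_le_mul_right v1 (by positivity)
        refine v3.trans ?_
        gcongr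
      · have r1 := abs_le.1 (Complex.abs_re_le_norm k0)
        have r2 := abs_le.1 (Complex.abs_im_le_norm k0)
        exact ⟨⟨by linarith, by linarith⟩, ⟨by linarith, by linarith⟩⟩
    have hlim : Tendsto (fun n : ℕ => (64:ℝ) / n) atTop (𝓝 0) :=
      tendsto_const_div_atTop_nhds_zero_nat 64
    have : ‖H (-k0 ^ 2)‖ ≤ 0 := by
      refine ge_of_tendsto hlim ?_
      filter_upwards [tendsto_natCast_atTop_atTop.eventually_ge_atTop (‖k0‖ + 16 * Q + 1)] with n hn
      exact hbd n hn
    exact norm_le_zero_iff.1 this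
  intro s
  obtain ⟨k, hk⟩ := IsAlgClosed.exists_pow_nat_eq (-s) (n := 2) (by norm_num)
  have := key k
  rwa [hk, neg_neg] at this

lemma deriv_eq_of_eqOn {f g : ℝ → ℂ} {f' g' : ℂ} {x : ℝ} (hx : x ∈ Ioo (0:ℝ) 1)
    (he : ∀ y ∈ Ioo (0:ℝ) 1, f y = g y) (hf : HasDerivAt f f' x) (hg : HasDerivAt g g' x) :
    f' = g' := by
  refine hf.unique (hg.congr_of_eventuallyEq ?_)
  filter_upwards [isOpen_Ioo.mem_nhds hx] with y hy using he y hy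

theorem borg {q1 q2 : ℝ → ℝ} {φ1 φ1' φ2 φ2' : ℝ → ℂ → ℂ} (h1 : IsFund q1 φ1 φ1')
    (h2 : IsFund q2 φ2 φ2') (hq1 : Continuous q1) (hq2 : Continuous q2) {Q : ℝ}
    (hQ1 : ∀ x, |q1 x| ≤ Q) (hQ2 : ∀ x, |q2 x| ≤ Q)
    (hs1 : ∀ x, q1 (1 - x) = q1 x) (hs2 : ∀ x, q2 (1 - x) = q2 x)
    (hD : ∀ s, φ1 1 s = φ2 1 s) : ∀ x ∈ Ioo (0:ℝ) 1, q1 x = q2 x := by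
  have hDf : (fun s => φ1 1 s) = fun s => φ2 1 s := funext hD
  have hN : ∀ x ∈ Icc (0:ℝ) 1, ∀ s, φ1 x s * φ2 (1 - x) s - φ2 x s * φ1 (1 - x) s = 0 := by
    intro x hx
    obtain ⟨H, hH, hHe⟩ := exists_quotient
      (N := fun s => φ1 x s * φ2 (1 - x) s - φ2 x s * φ1 (1 - x) s) (D := fun s => φ1 1 s)
      (((h1.an x).mul (h2.an (1 - x))).sub ((h2.an x).mul (h1.an (1 - x)))) (h1.an 1) (by
        intro s hs
        have hs2' : φ2 1 s = 0 := by rw [← hD]; exact hs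
        obtain ⟨a1, c1⟩ := h1.at_zero hQ1 hs1 hs
        obtain ⟨a2, c2⟩ := h2.at_zero hQ2 hs2 hs2'
        obtain ⟨r1, r1p, e1⟩ := h1.deriv_zero hQ1 hs
        obtain ⟨r2, r2p, e2⟩ := h2.deriv_zero hQ2 hs2'
        rw [← hDf] at e2
        refine ⟨?_, ?_⟩
        · simp only [a1, a2]
          have hcc : -φ1' 1 s = -φ2' 1 s := by
            rcases mul_self_eq_one_iff.1 c1 with g1 | g1 <;>
            rcases mul_self_eq_one_iff.1 c2 with g2 | g2
            · rw [g1, g2]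
            · exfalso
              rw [g1] at e1; rw [g2] at e2
              have : ((r1 + r2 : ℝ) : ℂ) = 0 := by
                push_cast; rw [← e1, ← e2]; ring
              have := Complex.ofReal_eq_zero.1 this
              linarith
            · exfalso
              rw [g1] at e1; rw [g2] at e2
              have : ((r1 + r2 : ℝ) : ℂ) = 0 := by
                push_cast; rw [← e1, ← e2]; ring
              have := Complex.ofReal_eq_zero.1 this
              linarith
            · rw [g1, g2]
          rw [hcc]; ring
        · intro h0
          rw [h0, mul_zero] at e1
          have := Complex.ofReal_eq_zero.1 e1.symm
          linarith)
    intro s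
    have h0 := quotient_zero h1 h2 hq1 hq2 hQ1 hQ2 hx hH hHe s
    have := hHe s
    rw [h0, zero_mul] at this
    exact this
  set s : ℂ := Complex.I with hs
  have hne : ∀ x > 0, φ1 x s ≠ 0 := fun x hx h0 => by
    have := h1.real_zero hQ1 hx h0
    simp [hs] at this
  -- Wronskians
  have wr : ∀ {q : ℝ → ℝ} {φ φ' : ℝ → ℂ → ℂ} (h : IsFund q φ φ') (hsy : ∀ x, q (1 - x) = q x)
      (x : ℝ), φ' x s * φ (1 - x) s - φ x s * (-φ' (1 - x) s) = φ 1 s := by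
    intro q φ φ' h hsy x
    have hd : ∀ x, HasDerivAt (fun x => φ' x s * φ (1 - x) s - φ x s * (-φ' (1 - x) s)) 0 x := by
      intro x
      refine HasDerivAt.congr_deriv (((h.d2 s x).mul (h.refl1 s x)).sub
        ((h.d1 s x).mul (h.refl2 hsy s x))) ?_
      ring
    have := is_const_of_deriv_eq_zero (fun x => (hd x).differentiableAt) (fun x => (hd x).deriv) x 0
    rw [this]
    simp [h.z0, h.z1]
  have sq : ∀ x ∈ Ioo (0:ℝ) 1, φ1 x s * φ1 x s = φ2 x s * φ2 x s := by
    intro x hx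
    have ea := hN x ⟨hx.1.le, hx.2.le⟩ s
    have eb := deriv_eq_of_eqOn hx (fun y hy => hN y ⟨hy.1.le, hy.2.le⟩ s)
      (((h1.d1 s x).mul (h2.refl1 s x)).sub ((h2.d1 s x).mul (h1.refl1 s x)))
      (hasDerivAt_const x 0)
    have w1 := wr h1 hs1 x
    have w2 := wr h2 hs2 x
    rw [← hD] at w2
    refine mul_left_cancel₀ (hne 1 one_pos) ?_
    linear_combination (-φ1 x s * φ1 x s) * w2 + (φ2 x s * φ2 x s) * w1 -
      (φ1 x s * φ2 x s) * eb + (φ1' x s * φ2 x s + φ1 x s * φ2' x s) * ea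
  have sq' : ∀ x ∈ Ioo (0:ℝ) 1, φ1 x s * φ1' x s = φ2 x s * φ2' x s := by
    intro x hx
    have := deriv_eq_of_eqOn hx sq ((h1.d1 s x).mul (h1.d1 s x)) ((h2.d1 s x).mul (h2.d1 s x))
    linear_combination this / 2
  intro x hx
  have e1 := sq x hx
  have e2 := sq' x hx
  have e3 := deriv_eq_of_eqOn hx sq' ((h1.d1 s x).mul (h1.d2 s x)) ((h2.d1 s x).mul (h2.d2 s x))
  have hn := hne x hx.1
  have e4 : φ1' x s * φ1' x s = φ2' x s * φ2' x s := by
    refine mul_left_cancel₀ (mul_ne_zero hn hn) ?_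
    linear_combination (φ1 x s * φ1' x s + φ2 x s * φ2' x s) * e2 - φ2' x s * φ2' x s * e1
  have e5 : (q1 x : ℂ) = q2 x := by
    refine mul_left_cancel₀ (mul_ne_zero hn hn) ?_
    linear_combination e3 - e4 - ((q2 x : ℂ) + s) * e1
  exact_mod_cast e5


lemma second_deriv_nonpos {f f' : ℝ → ℝ} {fdd x : ℝ} (h1 : ∀ᶠ y in 𝓝 x, HasDerivAt f (f' y) y)
    (h2 : HasDerivAt f' fdd x) (hm : IsLocalMax f x) : fdd ≤ 0 := by
  by_contra hpos
  push Not at hpos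
  have e1 : deriv f =ᶠ[𝓝 x] f' := h1.mono fun y hy => hy.deriv
  have e2 : deriv (deriv f) x = fdd := by rw [e1.deriv_eq, h2.deriv]
  have hmin := isLocalMin_of_deriv_deriv_pos (f := f) (x₀ := x) (by rw [e2]; exact hpos)
    hm.deriv_eq_zero h1.self_of_nhds.continuousAt
  have hc : f =ᶠ[𝓝 x] fun _ => f x := by
    filter_upwards [hm, hmin] with y a b using le_antisymm a b
  have : deriv (deriv f) x = 0 := by
    rw [hc.deriv.deriv_eq]; simp
  linarith

lemma left_deriv_nonneg {f : ℝ → ℝ} {f' x : ℝ} (h : HasDerivAt f f' x)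
    (hm : ∀ᶠ y in 𝓝[<] x, f y ≤ f x) : 0 ≤ f' := by
  have ht := h.tendsto_slope.mono_left (nhdsWithin_mono x (fun y (hy : y < x) => ne_of_lt hy) :
    𝓝[<] x ≤ 𝓝[≠] x)
  refine ge_of_tendsto ht ?_
  filter_upwards [hm, self_mem_nhdsWithin] with y hy hyx
  rw [slope_def_field]
  have : y < x := hyx
  exact div_nonneg_of_nonpos (by linarith) (by linarith)

lemma heat_lip {q a : ℝ → ℝ} {u ux uxx ut : ℝ → ℝ → ℝ} (hq : Continuous q)
    (h : IsHeatSolution q a u ux uxx ut) {t : ℝ} (ht : 0 < t) :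
    ∃ M, ∀ τ ∈ Icc t (t + 1), ∀ x ∈ Icc (0:ℝ) 1, |u x τ - u x t| ≤ M * (τ - t) := by
  obtain ⟨hc, hx1, hx2, hxxc, ht1, ht1c, heq, hi, hbd⟩ := h
  obtain ⟨B1, hB1⟩ := isCompact_Icc.exists_bound_of_continuousOn (hxxc t ht)
  have hKsub : Icc (0:ℝ) 1 ×ˢ Icc t (t + 1) ⊆ Icc (0:ℝ) 1 ×ˢ Ici 0 :=
    prod_mono le_rfl fun y hy => ht.le.trans hy.1
  have hcK := hc.mono hKsub
  obtain ⟨B2, hB2⟩ := (isCompact_Icc.prod isCompact_Icc).exists_bound_of_continuousOn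
    ((hq.comp continuous_fst).continuousOn.mul hcK)
  obtain ⟨B3, hB3⟩ := isCompact_Icc.exists_bound_of_continuousOn
    ((ht1c 1 (by simp)).mono (fun y (hy : y ∈ Icc t (t + 1)) => ht.trans_le hy.1))
  have hB1p : 0 ≤ B1 := (norm_nonneg _).trans (hB1 0 (by simp))
  have hB2p : 0 ≤ B2 := (norm_nonneg _).trans (hB2 (0, t) ⟨by simp, by simp⟩)
  have hB3p : 0 ≤ B3 := (norm_nonneg _).trans (hB3 t (by simp))
  set M := B1 + B2 + B3 + 1 with hM
  have hone : ∀ σ : ℝ, |σ| = 1 → ∀ τ ∈ Icc t (t + 1), ∀ x ∈ Icc (0:ℝ) 1,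
      σ * (u x τ - u x t) ≤ M * (τ - t) := by
    intro σ hσ
    have hzc : ContinuousOn (fun p : ℝ × ℝ => σ * (u p.1 p.2 - u p.1 t) - M * (p.2 - t))
        (Icc (0:ℝ) 1 ×ˢ Icc t (t + 1)) := by
      have h2 : ContinuousOn (fun p : ℝ × ℝ => u p.1 t) (Icc (0:ℝ) 1 ×ˢ Icc t (t + 1)) := by
        refine hc.comp (f := fun p : ℝ × ℝ => (p.1, t)) (by fun_prop) ?_
        intro p hp
        exact ⟨hp.1, ht.le⟩
      exact (continuousOn_const.mul (hcK.sub h2)).sub (by fun_prop)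
    obtain ⟨⟨x0, τ0⟩, hp0, hmax⟩ := (isCompact_Icc.prod isCompact_Icc).exists_isMaxOn
      ⟨((0:ℝ), t), ⟨by simp, by simp⟩⟩ hzc
    have hx0 : x0 ∈ Icc (0:ℝ) 1 := hp0.1
    have hτ0 : τ0 ∈ Icc t (t + 1) := hp0.2
    have hmax' : ∀ x ∈ Icc (0:ℝ) 1, ∀ τ ∈ Icc t (t + 1), σ * (u x τ - u x t) - M * (τ - t) ≤
        σ * (u x0 τ0 - u x0 t) - M * (τ0 - t) := fun x hx τ hτ => hmax (mk_mem_prod hx hτ)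
    suffices hs : σ * (u x0 τ0 - u x0 t) - M * (τ0 - t) ≤ 0 by
      intro τ hτ x hx
      linarith [hmax' x hx τ hτ]
    have hτp : 0 < τ0 := ht.trans_le hτ0.1
    have hdt : 0 ≤ τ0 - t := sub_nonneg.2 hτ0.1
    rcases hτ0.1.eq_or_lt with e | hlt
    · subst e; simp
    rcases hx0.1.eq_or_lt with e | hx0l
    · subst e
      rw [(hbd τ0 hτp).1, (hbd t ht).1]
      have : 0 ≤ M * (τ0 - t) := by positivity
      linarith
    rcases hx0.2.eq_or_lt with e | hx0r
    · subst e
      have := (convex_Icc t (t + 1)).norm_image_sub_le_of_norm_hasDerivWithin_le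
        (f := fun s => u 1 s) (f' := fun s => ut 1 s) (C := B3) (x := t) (y := τ0)
        (fun s hs => (ht1 1 (by simp) s (ht.trans_le hs.1)).hasDerivWithinAt)
        (fun s hs => hB3 s hs) (by simp) hτ0
      rw [Real.norm_eq_abs, Real.norm_eq_abs, abs_of_nonneg hdt] at this
      have h3 : σ * (u 1 τ0 - u 1 t) ≤ |u 1 τ0 - u 1 t| := by
        refine (le_abs_self _).trans ?_
        rw [abs_mul, hσ, one_mul]
      have h4 : B3 * (τ0 - t) ≤ M * (τ0 - t) := by gcongr; linarith
      linarith
    exfalso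
    have d1 : 0 ≤ σ * ut x0 τ0 - M * 1 := by
      refine left_deriv_nonneg (f := fun τ => σ * (u x0 τ - u x0 t) - M * (τ - t)) (x := τ0) ?_ ?_
      · exact (((ht1 x0 hx0 τ0 hτp).sub_const _).const_mul σ).sub
          (((hasDerivAt_id τ0).sub_const t).const_mul M)
      · filter_upwards [Ioo_mem_nhdsLT hlt] with τ hτ
        exact hmax' x0 hx0 τ ⟨hτ.1.le, hτ.2.le.trans hτ0.2⟩
    have hnb : Ioo (0:ℝ) 1 ∈ 𝓝 x0 := isOpen_Ioo.mem_nhds ⟨hx0l, hx0r⟩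
    have d2 : σ * (uxx x0 τ0 - uxx x0 t) ≤ 0 := by
      refine second_deriv_nonpos (f := fun x => σ * (u x τ0 - u x t) - M * (τ0 - t))
        (f' := fun x => σ * (ux x τ0 - ux x t)) (x := x0) ?_ ?_ ?_
      · filter_upwards [hnb] with y hy
        have hy' : y ∈ Icc (0:ℝ) 1 := ⟨hy.1.le, hy.2.le⟩
        exact (((hx1 τ0 hτp y hy').sub (hx1 t ht y hy')).const_mul σ).sub_const _
      · exact ((hx2 τ0 hτp x0 hx0).sub (hx2 t ht x0 hx0)).const_mul σ
      · filter_upwards [hnb] with y hy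
        exact hmax' y ⟨hy.1.le, hy.2.le⟩ τ0 hτ0
    have e := heq x0 ⟨hx0l, hx0r⟩ τ0 hτp
    have b1 : |σ * uxx x0 t| ≤ B1 := by rw [abs_mul, hσ, one_mul]; exact hB1 x0 hx0
    have b2 : |σ * (q x0 * u x0 τ0)| ≤ B2 := by
      rw [abs_mul, hσ, one_mul]; exact hB2 (x0, τ0) ⟨hx0, hτ0⟩
    have b1' := (abs_le.1 b1).2
    have b2' := (abs_le.1 b2).1
    rw [e] at d1
    nlinarith
  refine ⟨M, fun τ hτ x hx => abs_le.2 ⟨?_, ?_⟩⟩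
  · have := hone (-1) (by simp) τ hτ x hx
    linarith
  · have := hone 1 (by simp) τ hτ x hx
    linarith

lemma slice_cont {u : ℝ → ℝ → ℝ}
    (hc : ContinuousOn (fun p : ℝ × ℝ => u p.1 p.2) (Icc 0 1 ×ˢ Ici 0)) {t : ℝ} (ht : 0 ≤ t) :
    ContinuousOn (fun x => u x t) (Icc (0:ℝ) 1) := by
  refine hc.comp (f := fun x : ℝ => (x, t)) (by fun_prop) ?_
  intro x hx
  exact ⟨hx, ht⟩

lemma moment_deriv {q a : ℝ → ℝ} {u ux uxx ut : ℝ → ℝ → ℝ} (hq : Continuous q)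
    (h : IsHeatSolution q a u ux uxx ut) {ψ ψ' : ℝ → ℝ} {s : ℝ}
    (hψ : ∀ x, HasDerivAt ψ (ψ' x) x) (hψ' : ∀ x, HasDerivAt ψ' ((q x + s) * ψ x) x)
    (hψ1 : ψ 1 = 0) (hψ1' : ψ' 1 = -1) {t : ℝ} (ht : 0 < t) :
    HasDerivWithinAt (fun τ => ∫ x in (0:ℝ)..1, ψ x * u x τ)
      (s * (∫ x in (0:ℝ)..1, ψ x * u x t) + (a t - ψ 0 * ux 0 t)) (Ioi t) t := by
  obtain ⟨M, hM⟩ := heat_lip hq h ht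
  obtain ⟨hc, hx1, hx2, hxxc, ht1, ht1c, heq, hi, hbd⟩ := h
  have hψc : Continuous ψ := continuous_iff_continuousAt.2 fun x => (hψ x).continuousAt
  have hψc' : Continuous ψ' := continuous_iff_continuousAt.2 fun x => (hψ' x).continuousAt
  have hintg : ∀ τ, 0 ≤ τ → IntervalIntegrable (fun x => ψ x * u x τ) volume 0 1 := by
    intro τ hτ
    refine ContinuousOn.intervalIntegrable ?_
    rw [uIcc_of_le zero_le_one]
    exact hψc.continuousOn.mul (slice_cont hc hτ)
  have hxxi : IntervalIntegrable (fun x => ψ x * uxx x t - (q x + s) * ψ x * u x t) volume 0 1 := by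
    refine ContinuousOn.intervalIntegrable ?_
    rw [uIcc_of_le zero_le_one]
    exact (hψc.continuousOn.mul (hxxc t ht)).sub
      (((hq.add continuous_const).mul hψc).continuousOn.mul (slice_cont hc ht.le))
  have key : ∫ x in (0:ℝ)..1, ψ x * ut x t =
      s * (∫ x in (0:ℝ)..1, ψ x * u x t) + (a t - ψ 0 * ux 0 t) := by
    have e1 : ∫ x in (0:ℝ)..1, ψ x * ut x t = ∫ x in (0:ℝ)..1,
        ((ψ x * uxx x t - (q x + s) * ψ x * u x t) + s * (ψ x * u x t)) := by
      rw [intervalIntegral.integral_of_le zero_le_one, intervalIntegral.integral_of_le zero_le_one,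
        integral_Ioc_eq_integral_Ioo, integral_Ioc_eq_integral_Ioo]
      refine setIntegral_congr_fun measurableSet_Ioo fun x hx => ?_
      rw [heq x hx t ht]; ring
    rw [e1, intervalIntegral.integral_add hxxi ((hintg t ht.le).const_mul s),
      intervalIntegral.integral_const_mul]
    have e2 := intervalIntegral.integral_eq_sub_of_hasDerivAt (a := 0) (b := 1)
      (f := fun x => ψ x * ux x t - ψ' x * u x t)
      (f' := fun x => ψ x * uxx x t - (q x + s) * ψ x * u x t) (fun x hx => by
        rw [uIcc_of_le zero_le_one] at hx
        refine HasDerivAt.congr_deriv (((hψ x).mul (hx2 t ht x hx)).sub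
          ((hψ' x).mul (hx1 t ht x hx))) ?_
        ring) hxxi
    rw [e2, hψ1, hψ1', (hbd t ht).1, (hbd t ht).2]
    ring
  rw [← key, hasDerivWithinAt_iff_tendsto_slope' self_notMem_Ioi]
  have hsl : ∀ᶠ τ in 𝓝[>] t, ∫ x in (0:ℝ)..1, ψ x * ((u x τ - u x t) / (τ - t)) =
      slope (fun τ => ∫ x in (0:ℝ)..1, ψ x * u x τ) t τ := by
    filter_upwards [self_mem_nhdsWithin] with τ hτ
    have hτ' : t < τ := hτ
    rw [slope_def_field, ← intervalIntegral.integral_sub (hintg τ (ht.trans hτ').le) (hintg t ht.le),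
      ← intervalIntegral.integral_div]
    congr 1
    funext x
    ring
  refine Tendsto.congr' hsl ?_
  obtain ⟨P, hP⟩ := isCompact_Icc.exists_bound_of_continuousOn (hψc.continuousOn (s := Icc (0:ℝ) 1))
  have hIoc : ∀ {x : ℝ}, x ∈ uIoc (0:ℝ) 1 → x ∈ Icc (0:ℝ) 1 := fun {x} hx => by
    rw [uIoc_of_le zero_le_one] at hx
    exact ⟨hx.1.le, hx.2⟩
  refine intervalIntegral.tendsto_integral_filter_of_dominated_convergence (fun _ => P * M)
    ?_ ?_ intervalIntegrable_const ?_
  · filter_upwards [self_mem_nhdsWithin] with τ hτ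
    have hτ' : t < τ := hτ
    rw [uIoc_of_le zero_le_one]
    refine ContinuousOn.aestronglyMeasurable ?_ measurableSet_Ioc
    refine ContinuousOn.mono ?_ Ioc_subset_Icc_self
    exact hψc.continuousOn.mul
      (((slice_cont hc (ht.trans hτ').le).sub (slice_cont hc ht.le)).div_const _)
  · filter_upwards [Ioc_mem_nhdsGT (show t < t + 1 by linarith)] with τ hτ
    refine Eventually.of_forall fun x hx => ?_
    have hx := hIoc hx
    have hp : 0 < τ - t := sub_pos.2 hτ.1
    rw [norm_mul]
    refine mul_le_mul (hP x hx) ?_ (norm_nonneg _) ((norm_nonneg _).trans (hP x hx))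
    rw [norm_div, Real.norm_eq_abs, Real.norm_eq_abs, abs_of_pos hp, div_le_iff₀ hp]
    exact hM τ ⟨hτ.1.le, hτ.2⟩ x hx
  · refine Eventually.of_forall fun x hx => ?_
    have hd := (ht1 x (hIoc hx) t ht).hasDerivWithinAt (s := Ioi t)
    rw [hasDerivWithinAt_iff_tendsto_slope' self_notMem_Ioi] at hd
    refine (hd.const_mul (ψ x)).congr fun τ => ?_
    rw [slope_def_field]

lemma moment_cont {u : ℝ → ℝ → ℝ}
    (hc : ContinuousOn (fun p : ℝ × ℝ => u p.1 p.2) (Icc 0 1 ×ˢ Ici 0)) {ψ : ℝ → ℝ}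
    (hψc : Continuous ψ) :
    ContinuousOn (fun τ => ∫ x in (0:ℝ)..1, ψ x * u x τ) (Ici 0) := by
  have e : ∀ τ ∈ Ici (0:ℝ), (∫ x in (0:ℝ)..1, ψ x * u x τ) =
      ∫ x in (0:ℝ)..1, ψ x * u (max 0 (min 1 x)) (max 0 τ) := by
    intro τ hτ
    refine intervalIntegral.integral_congr fun x hx => ?_
    rw [uIcc_of_le zero_le_one] at hx
    simp only [min_eq_right hx.2, max_eq_right hx.1, max_eq_right (show (0:ℝ) ≤ τ from hτ)]
  refine ContinuousOn.congr (Continuous.continuousOn ?_) e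
  refine intervalIntegral.continuous_parametric_intervalIntegral_of_continuous
    (f := fun τ x => ψ x * u (max 0 (min 1 x)) (max 0 τ)) ?_ continuous_const
  refine (hψc.comp continuous_snd).mul ?_
  refine hc.comp_continuous (f := fun p : ℝ × ℝ => (max 0 (min 1 p.2), max 0 p.1)) (by fun_prop) ?_
  intro p
  exact ⟨⟨le_max_left _ _, max_le zero_le_one (min_le_left _ _)⟩, mem_Ici.2 (le_max_left _ _)⟩

lemma flux_integrable {q a : ℝ → ℝ} {u ux uxx ut : ℝ → ℝ → ℝ}
    (h : IsHeatSolution q a u ux uxx ut) {C c : ℝ} (hc0 : 0 ≤ c) (hC0 : 0 ≤ C)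
    (hg : HeatGrowthBound u ux C c) {T : ℝ} (hT : 0 ≤ T) :
    IntervalIntegrable (fun t => ux 0 t) volume 0 T := by
  obtain ⟨hc, hx1, hx2, hxxc, ht1, ht1c, heq, hi, hbd⟩ := h
  rw [intervalIntegrable_iff_integrableOn_Ioc_of_le hT]
  have hlim : ∀ t ∈ Ioc 0 T, Tendsto (fun n : ℕ => ((n:ℝ) + 1) * u (1 / ((n:ℝ) + 1)) t) atTop
      (𝓝 (ux 0 t)) := by
    intro t ht
    have h1 := (hx1 t ht.1 0 (by simp)).tendsto_slope
    have h2 : Tendsto (fun n : ℕ => 1 / ((n:ℝ) + 1)) atTop (𝓝[≠] 0) := by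
      refine tendsto_nhdsWithin_iff.2 ⟨tendsto_one_div_add_atTop_nhds_zero_nat, ?_⟩
      refine Eventually.of_forall fun n => ?_
      have : (0:ℝ) < 1 / ((n:ℝ) + 1) := by positivity
      exact this.ne'
    refine (h1.comp h2).congr fun n => ?_
    simp only [Function.comp, slope_def_field, (hbd t ht.1).1, sub_zero]
    field_simp
  have hmeas : AEStronglyMeasurable (fun t => ux 0 t) (volume.restrict (Ioc 0 T)) := by
    refine aestronglyMeasurable_of_tendsto_ae atTop
      (f := fun (n : ℕ) t => ((n:ℝ) + 1) * u (1 / ((n:ℝ) + 1)) t) (fun n => ?_) ?_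
    · refine ContinuousOn.aestronglyMeasurable ?_ measurableSet_Ioc
      refine continuousOn_const.mul ?_
      refine hc.comp (f := fun t : ℝ => (1 / ((n:ℝ) + 1), t)) (by fun_prop) ?_
      intro t ht
      refine ⟨⟨by positivity, ?_⟩, ht.1.le⟩
      rw [div_le_one (by positivity)]
      have : (0:ℝ) ≤ n := by positivity
      linarith
    · exact (ae_restrict_iff' measurableSet_Ioc).2 (Eventually.of_forall hlim)
  refine Integrable.mono' (g := fun _ => C * Real.exp (c * T)) (integrable_const _) hmeas ?_
  refine (ae_restrict_iff' measurableSet_Ioc).2 (Eventually.of_forall fun t ht => ?_)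
  have h1 := hg 0 (by simp) t ht.1.le
  rw [Real.norm_eq_abs]
  have h2 : C * Real.exp (c * t) ≤ C * Real.exp (c * T) := by
    gcongr
    exact ht.2
  linarith [abs_nonneg (u 0 t)]

lemma moment_identity {q a : ℝ → ℝ} {u ux uxx ut : ℝ → ℝ → ℝ} (hq : Continuous q)
    (h : IsHeatSolution q a u ux uxx ut) {C c : ℝ} (hc0 : 0 ≤ c) (hC0 : 0 ≤ C)
    (hg : HeatGrowthBound u ux C c) (ha : IntegrableOn a (Ioi 0)) {ψ ψ' : ℝ → ℝ} {s : ℝ}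
    (hψ : ∀ x, HasDerivAt ψ (ψ' x) x) (hψ' : ∀ x, HasDerivAt ψ' ((q x + s) * ψ x) x)
    (hψ1 : ψ 1 = 0) (hψ1' : ψ' 1 = -1) {T : ℝ} (hT : 0 ≤ T) :
    (∫ t in (0:ℝ)..T, Real.exp (-s * t) * a t) -
      ψ 0 * (∫ t in (0:ℝ)..T, Real.exp (-s * t) * ux 0 t) =
      Real.exp (-s * T) * ∫ x in (0:ℝ)..1, ψ x * u x T := by
  have hψc : Continuous ψ := continuous_iff_continuousAt.2 fun x => (hψ x).continuousAt
  have hec : Continuous fun t : ℝ => Real.exp (-s * t) := by fun_prop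
  have hai : IntervalIntegrable a volume 0 T :=
    (intervalIntegrable_iff_integrableOn_Ioc_of_le hT).2 (ha.mono_set Ioc_subset_Ioi_self)
  have hfi := flux_integrable h hc0 hC0 hg hT
  have i1 := hai.continuousOn_mul hec.continuousOn
  have i2 := hfi.continuousOn_mul hec.continuousOn
  rw [← intervalIntegral.integral_const_mul, ← intervalIntegral.integral_sub i1 (i2.const_mul _)]
  have := intervalIntegral.integral_eq_sub_of_hasDeriv_right (a := 0) (b := T)
    (f := fun t => Real.exp (-s * t) * ∫ x in (0:ℝ)..1, ψ x * u x t)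
    (f' := fun t => Real.exp (-s * t) * a t - ψ 0 * (Real.exp (-s * t) * ux 0 t)) ?_ ?_
    (i1.sub (i2.const_mul _))
  · rw [this]
    have h0 : ∫ x in (0:ℝ)..1, ψ x * u x 0 = 0 := by
      have : ∫ x in (0:ℝ)..1, ψ x * u x 0 = ∫ x in (0:ℝ)..1, (0:ℝ) := by
        refine intervalIntegral.integral_congr fun x hx => ?_
        rw [uIcc_of_le zero_le_one] at hx
        rw [h.2.2.2.2.2.2.2.1 x hx, mul_zero]
      rw [this]; simp
    rw [h0]; ring
  · rw [uIcc_of_le hT]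
    exact hec.continuousOn.mul ((moment_cont h.1 hψc).mono fun t ht => ht.1)
  · intro t ht
    rw [min_eq_left hT] at ht
    have he : HasDerivAt (fun t : ℝ => Real.exp (-s * t)) (Real.exp (-s * t) * (-s * 1)) t :=
      ((hasDerivAt_id t).const_mul (-s)).exp
    refine HasDerivWithinAt.congr_deriv
      (he.hasDerivWithinAt.mul (moment_deriv hq h hψ hψ' hψ1 hψ1' ht.1)) ?_
    ring

lemma moment_decay {u ux : ℝ → ℝ → ℝ}
    {C c : ℝ} (hg : HeatGrowthBound u ux C c) {ψ : ℝ → ℝ} (hψc : Continuous ψ) {s : ℝ}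
    (hs : c < s) :
    Tendsto (fun T => Real.exp (-s * T) * ∫ x in (0:ℝ)..1, ψ x * u x T) atTop (𝓝 0) := by
  obtain ⟨P, hP⟩ := isCompact_Icc.exists_bound_of_continuousOn (hψc.continuousOn (s := Icc (0:ℝ) 1))
  have hlim : Tendsto (fun T : ℝ => P * C * Real.exp (-((s - c) * T))) atTop (𝓝 0) := by
    rw [show (0:ℝ) = P * C * 0 by ring]
    refine Tendsto.const_mul _ (Real.tendsto_exp_neg_atTop_nhds_zero.comp ?_)
    exact tendsto_id.const_mul_atTop (by linarith)
  refine squeeze_zero_norm' ?_ hlim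
  filter_upwards [eventually_ge_atTop 0] with T hT
  have hb : ‖∫ x in (0:ℝ)..1, ψ x * u x T‖ ≤ P * (C * Real.exp (c * T)) := by
    have := intervalIntegral.norm_integral_le_of_norm_le_const (a := 0) (b := 1)
      (f := fun x => ψ x * u x T) (C := P * (C * Real.exp (c * T))) (fun x hx => by
        rw [uIoc_of_le zero_le_one] at hx
        have hx' : x ∈ Icc (0:ℝ) 1 := ⟨hx.1.le, hx.2⟩
        have h1 := hg x hx' T hT
        rw [norm_mul]
        refine mul_le_mul (hP x hx') ?_ (norm_nonneg _) ((norm_nonneg _).trans (hP x hx'))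
        rw [Real.norm_eq_abs]
        linarith [abs_nonneg (ux x T)])
    simpa using this
  rw [norm_mul, Real.norm_eq_abs, abs_of_pos (Real.exp_pos _)]
  calc _ ≤ Real.exp (-s * T) * (P * (C * Real.exp (c * T))) := by gcongr
    _ = P * C * (Real.exp (-s * T) * Real.exp (c * T)) := by ring
    _ = _ := by rw [← Real.exp_add]; congr 2; ring


lemma laplace_diff {g : ℝ → ℂ} (hg : Continuous g) (T : ℝ) :
    Differentiable ℂ (fun z : ℂ => ∫ t in (0:ℝ)..T, Complex.exp (-z * t) * g t) := by
  intro z0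
  have hF : Continuous fun p : ℂ × ℝ => -(p.2:ℂ) * Complex.exp (-p.1 * p.2) * g p.2 := by fun_prop
  obtain ⟨M, hM⟩ := ((isCompact_closedBall z0 1).prod (isCompact_uIcc (a := (0:ℝ)) (b := T))
    ).exists_bound_of_continuousOn hF.continuousOn
  have := intervalIntegral.hasDerivAt_integral_of_dominated_loc_of_deriv_le (μ := volume)
    (a := 0) (b := T) (F := fun (z : ℂ) (t : ℝ) => Complex.exp (-z * t) * g t)
    (F' := fun (z : ℂ) (t : ℝ) => -(t:ℂ) * Complex.exp (-z * t) * g t) (x₀ := z0)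
    (bound := fun _ => M) (s := Metric.closedBall z0 1) (Metric.closedBall_mem_nhds z0 one_pos)
    (Eventually.of_forall fun z => Continuous.aestronglyMeasurable (by fun_prop))
    (Continuous.intervalIntegrable (by fun_prop) _ _)
    (Continuous.aestronglyMeasurable (by fun_prop))
    (Eventually.of_forall fun t ht z hz => hM (z, t) ⟨hz, uIoc_subset_uIcc ht⟩)
    (continuous_const.intervalIntegrable _ _)
    (Eventually.of_forall fun t ht z hz => by
      have h1 : HasDerivAt (fun z : ℂ => -z * (t:ℂ)) (-1 * (t:ℂ)) z :=
        ((hasDerivAt_id z).neg).mul_const _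
      refine (h1.cexp.mul_const (g t)).congr_deriv ?_
      ring)
  exact this.2.differentiableAt

lemma laplace_zero {g : ℝ → ℂ} (hg : Continuous g) {T : ℝ} (hT : 0 ≤ T) (h0 : ∀ t ≤ 0, g t = 0)
    (h1 : ∀ t > T, g t = 0)
    (hA : ∀ z : ℂ, ∫ t in (0:ℝ)..T, Complex.exp (-z * t) * g t = 0) : g = 0 := by
  have hsupp : Function.support g ⊆ Ioc 0 T := by
    intro t ht
    by_contra hn
    rw [mem_Ioc, not_and_or, not_lt, not_le] at hn
    exact ht (hn.elim (h0 t) (h1 t))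
  have hi : Integrable g := by
    refine hg.integrable_of_hasCompactSupport ?_
    exact HasCompactSupport.intro isCompact_Icc (K := Icc 0 T) fun t ht => by
      by_contra hn
      exact ht (Ioc_subset_Icc_self (hsupp hn))
  have hF : FourierTransform.fourier g = 0 := by
    ext w
    rw [Real.fourier_real_eq_integral_exp_smul]
    have := hA (2 * Real.pi * w * Complex.I)
    rw [intervalIntegral.integral_of_le hT, setIntegral_eq_integral_of_forall_compl_eq_zero] at this
    · rw [Pi.zero_apply, ← this]
      congr 1
      ext t
      rw [smul_eq_mul]
      congr 2
      push_cast
      ring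
    · intro t ht
      have : g t = 0 := by
        by_contra hn
        exact ht (hsupp hn)
      rw [this, mul_zero]
  have := hg.fourierInv_fourier_eq hi (by rw [hF]; exact integrable_zero _ _ _)
  rw [← this, hF]
  ext v
  rw [Real.fourierInv_eq']
  simp

lemma entire_alt {A D : ℂ → ℂ} (hA : Differentiable ℂ A) (hD : Differentiable ℂ D) {c : ℝ}
    (h : ∀ s : ℝ, c < s → A s * D s = 0) : (∀ z, A z = 0) ∨ (∀ z, D z = 0) := by
  have aA : AnalyticOnNhd ℂ A univ := hA.differentiableOn.analyticOnNhd isOpen_univ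
  have aD : AnalyticOnNhd ℂ D univ := hD.differentiableOn.analyticOnNhd isOpen_univ
  have hz : EqOn (fun z => A z * D z) 0 univ := by
    refine (aA.mul aD).eqOn_zero_of_preconnected_of_frequently_eq_zero isPreconnected_univ
      (z₀ := ((c + 1 : ℝ) : ℂ)) (mem_univ _) ?_
    have ht : Tendsto (fun n : ℕ => (((c + 1) + 1 / ((n:ℝ) + 1) : ℝ) : ℂ)) atTop
        (𝓝[≠] ((c + 1 : ℝ) : ℂ)) := by
      refine tendsto_nhdsWithin_iff.2 ⟨?_, Eventually.of_forall fun n => ?_⟩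
      · refine (Complex.continuous_ofReal.tendsto _).comp ?_
        simpa using tendsto_one_div_add_atTop_nhds_zero_nat.const_add (c + 1)
      · have : (0:ℝ) < 1 / ((n:ℝ) + 1) := by positivity
        intro he
        have := Complex.ofReal_injective he
        linarith
    refine ht.frequently (Eventually.frequently (Eventually.of_forall fun n => ?_))
    have : (0:ℝ) < 1 / ((n:ℝ) + 1) := by positivity
    exact h _ (by linarith)
  have := aA.eq_zero_or_eq_zero_of_mul_eq_zero aD (fun z hz' => hz hz') isPreconnected_univ
  simpa using this

/-- Constant extension of a function from `[0,1]` to the line. -/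
noncomputable def ext01 (q : ℝ → ℝ) : ℝ → ℝ := fun x => q (max 0 (min 1 x))

lemma ext01_eq (q : ℝ → ℝ) {x : ℝ} (hx : x ∈ Icc (0:ℝ) 1) : ext01 q x = q x := by
  simp only [ext01, min_eq_right hx.2, max_eq_right hx.1]

lemma ext01_mem (x : ℝ) : max 0 (min 1 x) ∈ Icc (0:ℝ) 1 :=
  ⟨le_max_left _ _, max_le zero_le_one (min_le_left _ _)⟩

lemma ext01_cont {q : ℝ → ℝ} (hq : ContinuousOn q (Icc 0 1)) : Continuous (ext01 q) :=
  hq.comp_continuous (f := fun x : ℝ => max 0 (min 1 x)) (by fun_prop) ext01_mem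

lemma ext01_bound {q : ℝ → ℝ} (hq : ContinuousOn q (Icc 0 1)) : ∃ Q, ∀ x, |ext01 q x| ≤ Q := by
  obtain ⟨Q, hQ⟩ := isCompact_Icc.exists_bound_of_continuousOn hq
  exact ⟨Q, fun x => hQ _ (ext01_mem x)⟩

lemma ext01_symm {q : ℝ → ℝ} (hs : ∀ x ∈ Icc (0:ℝ) (1/2), q (1/2 + x) = q (1/2 - x)) (x : ℝ) :
    ext01 q (1 - x) = ext01 q x := by
  have key : ∀ y ∈ Icc (0:ℝ) 1, q (1 - y) = q y := by
    intro y hy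
    rcases le_total y (1/2) with h | h
    · have := hs (1/2 - y) ⟨by linarith, by linarith [hy.1]⟩
      rw [show 1/2 + (1/2 - y) = 1 - y by ring, show 1/2 - (1/2 - y) = y by ring] at this
      exact this
    · have := hs (y - 1/2) ⟨by linarith, by linarith [hy.2]⟩
      rw [show 1/2 + (y - 1/2) = y by ring, show 1/2 - (y - 1/2) = 1 - y by ring] at this
      exact this.symm
  rw [ext01, ext01, ← key _ (ext01_mem x)]
  congr 1
  rcases le_total x 0 with h | h
  · rw [min_eq_left (by linarith), min_eq_right (by linarith), max_eq_right (by linarith),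
      max_eq_left h, sub_zero]
  rcases le_total x 1 with h' | h'
  · rw [min_eq_right (by linarith), min_eq_right (by linarith), max_eq_right (by linarith),
      max_eq_right h]
  · rw [min_eq_right (by linarith), min_eq_left (by linarith), max_eq_left (by linarith),
      max_eq_right (by linarith), sub_self]

lemma ext01_heat {q a : ℝ → ℝ} {u ux uxx ut : ℝ → ℝ → ℝ} (h : IsHeatSolution q a u ux uxx ut) :
    IsHeatSolution (ext01 q) a u ux uxx ut := by
  obtain ⟨h1, h2, h3, h4, h5, h6, h7, h8, h9⟩ := h
  refine ⟨h1, h2, h3, h4, h5, h6, fun x hx t ht => ?_, h8, h9⟩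
  rw [ext01_eq q (Ioo_subset_Icc_self hx)]
  exact h7 x hx t ht

/-- The Laplace moment identity tested against the fundamental solution. -/
lemma fund_moment {q a : ℝ → ℝ} {u ux uxx ut : ℝ → ℝ → ℝ} (hq : Continuous q)
    (hsym : ∀ x, q (1 - x) = q x) {φ φ' : ℝ → ℂ → ℂ} (hφ : IsFund q φ φ')
    (h : IsHeatSolution q a u ux uxx ut) {C c : ℝ} (hc0 : 0 ≤ c) (hC0 : 0 ≤ C)
    (hg : HeatGrowthBound u ux C c) (ha : IntegrableOn a (Ioi 0)) {s : ℝ} (hs : c < s) :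
    Tendsto (fun T : ℝ => (∫ t in (0:ℝ)..T, Real.exp (-s * t) * a t) -
      (φ 1 s).re * (∫ t in (0:ℝ)..T, Real.exp (-s * t) * ux 0 t)) atTop (𝓝 0) := by
  have d1 : ∀ x, HasDerivAt (fun y => (φ (1 - y) s).re) ((-φ' (1 - x) s).re) x := fun x =>
    Complex.reCLM.hasFDerivAt.comp_hasDerivAt x (hφ.refl1 (s := s) (x := x))
  have d2 : ∀ x, HasDerivAt (fun y => (-φ' (1 - y) s).re) ((q x + s) * (φ (1 - x) s).re) x :=
    fun x => by
      refine (Complex.reCLM.hasFDerivAt.comp_hasDerivAt x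
        (hφ.refl2 hsym (s := s) (x := x))).congr_deriv ?_
      simp [Complex.mul_re]
  have hψc : Continuous fun y => (φ (1 - y) s).re :=
    continuous_iff_continuousAt.2 fun x => (d1 x).continuousAt
  refine (moment_decay hg hψc hs).congr' ?_
  filter_upwards [eventually_ge_atTop 0] with T hT
  have := moment_identity hq h hc0 hC0 hg ha d1 d2 (by simp [hφ.z0]) (by simp [hφ.z1]) hT
  rw [← this]
  simp

theorem main
    (q1 q2 a : ℝ → ℝ)
    (hq1 : ContinuousOn q1 (Set.Icc 0 1)) (hq2 : ContinuousOn q2 (Set.Icc 0 1))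
    (hsym1 : ∀ x ∈ Set.Icc (0:ℝ) (1/2), q1 (1/2 + x) = q1 (1/2 - x))
    (hsym2 : ∀ x ∈ Set.Icc (0:ℝ) (1/2), q2 (1/2 + x) = q2 (1/2 - x))
    (ha : IsAdmissiblePulse a)
    (u1 ux1 uxx1 ut1 u2 ux2 uxx2 ut2 : ℝ → ℝ → ℝ)
    (hu1 : IsHeatSolution q1 a u1 ux1 uxx1 ut1)
    (hu2 : IsHeatSolution q2 a u2 ux2 uxx2 ut2)
    (hb1 : ∃ C > (0:ℝ), ∃ c > (0:ℝ), HeatGrowthBound u1 ux1 C c)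
    (hb2 : ∃ C > (0:ℝ), ∃ c > (0:ℝ), HeatGrowthBound u2 ux2 C c)
    (hflux : ∀ t > (0:ℝ), ux1 0 t = ux2 0 t) :
    ∀ x ∈ Set.Icc (0:ℝ) 1, q1 x = q2 x := by
  obtain ⟨hai, ⟨T0, hT0, haT⟩, hane⟩ := ha
  obtain ⟨C1, hC1, c1, hc1, hg1⟩ := hb1
  obtain ⟨C2, hC2, c2, hc2, hg2⟩ := hb2
  have k1 := ext01_cont hq1
  have k2 := ext01_cont hq2
  obtain ⟨Q1, hQ1⟩ := ext01_bound hq1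
  obtain ⟨Q2, hQ2⟩ := ext01_bound hq2
  have s1 := ext01_symm hsym1
  have s2 := ext01_symm hsym2
  obtain ⟨φ1, φ1', f1⟩ := exists_fund k1 hQ1
  obtain ⟨φ2, φ2', f2⟩ := exists_fund k2 hQ2
  -- the continuous representative of the pulse
  obtain ⟨g, hg⟩ : ∃ g : ℝ → ℝ, g = fun t => u1 1 (max t 0) := ⟨_, rfl⟩
  have hgc : Continuous g := by
    rw [hg]
    refine hu1.1.comp_continuous (f := fun t : ℝ => ((1:ℝ), max t 0)) (by fun_prop) ?_
    intro t
    exact ⟨by simp, mem_Ici.2 (le_max_right _ _)⟩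
  have hga : ∀ t > 0, g t = a t := by
    intro t ht
    rw [hg]
    simp only [max_eq_left ht.le]
    exact (hu1.2.2.2.2.2.2.2.2 t ht).2
  have hg0 : ∀ t ≤ 0, g t = 0 := by
    intro t ht
    rw [hg]
    simp only [max_eq_right ht]
    exact hu1.2.2.2.2.2.2.2.1 1 (by simp)
  have hgT : ∀ t > T0, g t = 0 := fun t ht => by
    rw [hga t (hT0.trans ht)]
    exact haT t ht
  have hgc' : Continuous fun t => (g t : ℂ) := Complex.continuous_ofReal.comp hgc
  -- the product vanishes on a half line
  have hprod : ∀ s : ℝ, max c1 c2 < s →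
      (∫ t in (0:ℝ)..T0, Complex.exp (-(s:ℂ) * t) * (g t : ℂ)) * (φ1 1 s - φ2 1 s) = 0 := by
    intro s hs
    have m1 := fund_moment k1 s1 f1 (ext01_heat hu1) hc1.le hC1.le hg1 hai
      ((le_max_left _ _).trans_lt hs)
    have m2 := fund_moment k2 s2 f2 (ext01_heat hu2) hc2.le hC2.le hg2 hai
      ((le_max_right _ _).trans_lt hs)
    have e1 : φ1 1 s = ((φ1 1 s).re : ℂ) := by
      refine Complex.ext (by simp) ?_
      rw [Complex.ofReal_im]
      exact f1.real hQ1 (by simp) 1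
    have e2 : φ2 1 s = ((φ2 1 s).re : ℂ) := by
      refine Complex.ext (by simp) ?_
      rw [Complex.ofReal_im]
      exact f2.real hQ2 (by simp) 1
    have m3 := (m1.mul_const (φ2 1 s).re).sub (m2.mul_const (φ1 1 s).re)
    have hev : (fun T : ℝ => ((∫ t in (0:ℝ)..T, Real.exp (-s * t) * a t) -
          (φ1 1 s).re * (∫ t in (0:ℝ)..T, Real.exp (-s * t) * ux1 0 t)) * (φ2 1 s).re -
        ((∫ t in (0:ℝ)..T, Real.exp (-s * t) * a t) -
          (φ2 1 s).re * (∫ t in (0:ℝ)..T, Real.exp (-s * t) * ux2 0 t)) * (φ1 1 s).re)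
        =ᶠ[atTop] fun _ => (∫ t in (0:ℝ)..T0, Real.exp (-s * t) * g t) *
          ((φ2 1 s).re - (φ1 1 s).re) := by
      filter_upwards [eventually_ge_atTop T0] with T hT
      have hTp : 0 ≤ T := hT0.le.trans hT
      have ea : ∫ t in (0:ℝ)..T, Real.exp (-s * t) * a t =
          ∫ t in (0:ℝ)..T0, Real.exp (-s * t) * g t := by
        have hgi : Continuous fun t => Real.exp (-s * t) * g t := by fun_prop
        have x1 : ∫ t in (0:ℝ)..T, Real.exp (-s * t) * a t =
            ∫ t in (0:ℝ)..T, Real.exp (-s * t) * g t := by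
          rw [intervalIntegral.integral_of_le hTp, intervalIntegral.integral_of_le hTp]
          refine setIntegral_congr_fun measurableSet_Ioc fun t ht => ?_
          rw [hga t ht.1]
        have x2 : ∫ t in T0..T, Real.exp (-s * t) * g t = 0 := by
          rw [intervalIntegral.integral_of_le hT]
          refine setIntegral_eq_zero_of_forall_eq_zero fun t ht => ?_
          rw [hgT t ht.1, mul_zero]
        rw [x1, ← intervalIntegral.integral_add_adjacent_intervals
          (hgi.intervalIntegrable 0 T0) (hgi.intervalIntegrable T0 T), x2, add_zero]
      have eb : ∫ t in (0:ℝ)..T, Real.exp (-s * t) * ux1 0 t =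
          ∫ t in (0:ℝ)..T, Real.exp (-s * t) * ux2 0 t := by
        rw [intervalIntegral.integral_of_le hTp, intervalIntegral.integral_of_le hTp]
        refine setIntegral_congr_fun measurableSet_Ioc fun t ht => ?_
        rw [hflux t ht.1]
      rw [ea, eb]
      ring
    have m4 := tendsto_nhds_unique (m3.congr' hev) tendsto_const_nhds
    have e3 : (∫ t in (0:ℝ)..T0, Complex.exp (-(s:ℂ) * t) * (g t : ℂ)) =
        ((∫ t in (0:ℝ)..T0, Real.exp (-s * t) * g t : ℝ) : ℂ) := by
      rw [← intervalIntegral.integral_ofReal]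
      congr 1
      ext t
      push_cast
      rfl
    rw [e1, e2, e3]
    norm_cast
    linarith
  have hD : ∀ s, φ1 1 s = φ2 1 s := by
    rcases entire_alt (laplace_diff hgc' T0) ((f1.an 1).sub (f2.an 1)) hprod with h | h
    · exfalso
      have := laplace_zero hgc' hT0.le (fun t ht => by rw [hg0 t ht]; simp)
        (fun t ht => by rw [hgT t ht]; simp) h
      refine hane ((ae_restrict_iff' measurableSet_Ioi).2 (Eventually.of_forall fun t ht => ?_))
      have h2 := congrFun this t
      simp only [Pi.zero_apply, Complex.ofReal_eq_zero] at h2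
      rw [← hga t ht, h2]
      rfl
    · exact fun s => sub_eq_zero.1 (h s)
  have hioo := borg f1 f2 k1 k2 (fun x => (hQ1 x).trans (le_max_left Q1 Q2))
    (fun x => (hQ2 x).trans (le_max_right Q1 Q2)) s1 s2 hD
  have hcl : EqOn (ext01 q1) (ext01 q2) (closure (Ioo 0 1)) :=
    Set.EqOn.closure (fun x hx => hioo x hx) k1 k2
  rw [closure_Ioo zero_ne_one] at hcl
  intro x hx
  have := hcl hx
  rwa [ext01_eq q1 hx, ext01_eq q2 hx] at this

end Borg

/-- if two continuous potentials are each symmetric about `x = 1/2` and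
the corresponding classical heat solutions (same admissible pulse `a`) have the same
flux at `x = 0` for all `t > 0`, then the potentials coincide on `[0,1]`. -/
theorem flux_at_left_end_determines_symmetric_potential
    (q1 q2 a : ℝ → ℝ)
    (hq1 : ContinuousOn q1 (Set.Icc 0 1)) (hq2 : ContinuousOn q2 (Set.Icc 0 1))
    (hsym1 : ∀ x ∈ Set.Icc (0:ℝ) (1/2), q1 (1/2 + x) = q1 (1/2 - x))
    (hsym2 : ∀ x ∈ Set.Icc (0:ℝ) (1/2), q2 (1/2 + x) = q2 (1/2 - x))
    (ha : IsAdmissiblePulse a)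
    (u1 ux1 uxx1 ut1 u2 ux2 uxx2 ut2 : ℝ → ℝ → ℝ)
    (hu1 : IsHeatSolution q1 a u1 ux1 uxx1 ut1)
    (hu2 : IsHeatSolution q2 a u2 ux2 uxx2 ut2)
    (hb1 : ∃ C > (0:ℝ), ∃ c > (0:ℝ), HeatGrowthBound u1 ux1 C c)
    (hb2 : ∃ C > (0:ℝ), ∃ c > (0:ℝ), HeatGrowthBound u2 ux2 C c)
    (hflux : ∀ t > (0:ℝ), ux1 0 t = ux2 0 t) :
    ∀ x ∈ Set.Icc (0:ℝ) 1, q1 x = q2 x := by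
  exact Borg.main q1 q2 a hq1 hq2 hsym1 hsym2 ha u1 ux1 uxx1 ut1 u2 ux2 uxx2 ut2 hu1 hu2
    hb1 hb2 hflux
end

section
/- Let q be a continuous real-valued potential on [0,1], a an admissible boundary pulse with support in [0,T], and u a classical solution of the heat problem for q with boundary data a, satisfying |u| + |∂x u| ≤ C e^{ct}. Then for every real λ > c, the Laplace transforms B(λ) = ∫₀^∞ e^{−λt} ∂x u(1,t) dt and A(λ) = ∫₀^T e^{−λt} a(t) dt satisfy the identity B(λ) · φ(1,−λ;q) = A(λ) · ∂x φ(1,−λ;q). -/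
/-- `IsSLSolution q nu f f'` : `f` solves `-f'' + q f = nu * f` on `[0,1]`
with `f 0 = 0`, `f' 0 = 1`, where `f'` is the derivative of `f` on `[0,1]`. -/
def IsSLSolution (q : ℝ → ℝ) (ν : ℝ) (φ φ' : ℝ → ℝ) : Prop :=
  (∀ x ∈ Set.Icc (0:ℝ) 1, HasDerivAt φ (φ' x) x) ∧
  (∀ x ∈ Set.Icc (0:ℝ) 1, HasDerivAt φ' (q x * φ x - ν * φ x) x) ∧
  φ 0 = 0 ∧ φ' 0 = 1

open Set Filter Topology MeasureTheory

lemma lti_second_test {f f1 : ℝ → ℝ} {x d : ℝ} (h1 : ∀ᶠ y in 𝓝 x, HasDerivAt f (f1 y) y)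
    (h2 : HasDerivAt f1 d x) (hm : IsLocalMax f x) : d ≤ 0 := by
  by_contra hd
  push Not at hd
  have e1 : deriv f =ᶠ[𝓝 x] f1 := h1.mono fun y hy => hy.deriv
  have e2 : deriv (deriv f) x = d := by rw [e1.deriv_eq, h2.deriv]
  have hmin : IsLocalMin f x := isLocalMin_of_deriv_deriv_pos (by rw [e2]; exact hd)
    hm.deriv_eq_zero h1.self_of_nhds.continuousAt
  have e3 : f =ᶠ[𝓝 x] fun _ => f x := by
    filter_upwards [hm, hmin] with y a b using le_antisymm a b
  have e4 : deriv f =ᶠ[𝓝 x] fun _ => 0 := by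
    have := e3.deriv
    simpa using this
  have := e4.deriv_eq
  rw [e2] at this
  simp at this
  exact hd.ne' this

lemma lti_left_max {f : ℝ → ℝ} {t t0 d : ℝ} (ht : t0 < t) (h : HasDerivAt f d t)
    (hm : ∀ s ∈ Icc t0 t, f s ≤ f t) : 0 ≤ d := by
  have h1 := h.hasDerivWithinAt (s := Iio t)
  rw [hasDerivWithinAt_iff_tendsto_slope' (by simp)] at h1
  refine ge_of_tendsto h1 ?_
  have : Ioo t0 t ∈ 𝓝[<] t := Ioo_mem_nhdsLT ht
  filter_upwards [this] with s hs
  rw [slope_def_field]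
  exact div_nonneg_of_nonpos (by linarith [hm s ⟨hs.1.le, hs.2.le⟩]) (by linarith [hs.2])

lemma lti_mp (z zx zxx zt : ℝ → ℝ → ℝ) (t0 t1 ε : ℝ) (hε : 0 < ε)
    (hc : ContinuousOn (fun p : ℝ × ℝ => z p.1 p.2) (Icc 0 1 ×ˢ Icc t0 t1))
    (hx : ∀ x ∈ Ioo (0:ℝ) 1, ∀ t ∈ Ioc t0 t1, HasDerivAt (fun y => z y t) (zx x t) x)
    (hxx : ∀ x ∈ Ioo (0:ℝ) 1, ∀ t ∈ Ioc t0 t1, HasDerivAt (fun y => zx y t) (zxx x t) x)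
    (ht : ∀ x ∈ Ioo (0:ℝ) 1, ∀ t ∈ Ioc t0 t1, HasDerivAt (fun s => z x s) (zt x t) t)
    (hs : ∀ x ∈ Ioo (0:ℝ) 1, ∀ t ∈ Ioc t0 t1, zt x t - zxx x t ≤ ε)
    (hb0 : ∀ t ∈ Icc t0 t1, z 0 t ≤ ε) (hb1 : ∀ t ∈ Icc t0 t1, z 1 t ≤ ε)
    (hi : ∀ x ∈ Icc (0:ℝ) 1, z x t0 ≤ ε) :
    ∀ x ∈ Icc (0:ℝ) 1, ∀ t ∈ Icc t0 t1, z x t ≤ 2 * ε := by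
  intro x hx0 t ht0
  set Z : ℝ × ℝ → ℝ := fun p => z p.1 p.2 - ε * (p.1 * (1 - p.1)) with hZ
  have hZc : ContinuousOn Z (Icc 0 1 ×ˢ Icc t0 t1) := hc.sub (by fun_prop)
  obtain ⟨⟨a, b⟩, ⟨ha, hb⟩, hmax⟩ := (isCompact_Icc.prod isCompact_Icc).exists_isMaxOn
    ⟨(x, t), hx0, ht0⟩ hZc
  simp only at ha hb
  have hM : ∀ y ∈ Icc (0:ℝ) 1, ∀ s ∈ Icc t0 t1, Z (y, s) ≤ Z (a, b) :=
    fun y hy s hs => hmax (show (y, s) ∈ _ from ⟨hy, hs⟩)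
  have key : Z (a, b) ≤ ε := by
    by_cases h0 : a = 0
    · subst h0; simpa [hZ] using hb0 b hb
    by_cases h1 : a = 1
    · subst h1; simpa [hZ] using hb1 b hb
    by_cases h2 : b = t0
    · subst h2
      have := hi a ha
      have h3 : 0 ≤ ε * (a * (1 - a)) :=
        mul_nonneg hε.le (mul_nonneg ha.1 (by linarith [ha.2]))
      simp only [hZ]; linarith
    exfalso
    have ha' : a ∈ Ioo (0:ℝ) 1 := ⟨lt_of_le_of_ne ha.1 (Ne.symm h0), lt_of_le_of_ne ha.2 h1⟩
    have hb' : b ∈ Ioc t0 t1 := ⟨lt_of_le_of_ne hb.1 (Ne.symm h2), hb.2⟩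
    have d1 : 0 ≤ zt a b := by
      refine lti_left_max hb'.1 (ht a ha' b hb') fun s hs => ?_
      have := hM a ha s ⟨hs.1, hs.2.trans hb.2⟩
      simp only [hZ] at this; linarith
    have d2 : zxx a b + 2 * ε ≤ 0 := by
      refine lti_second_test (f := fun y => Z (y, b)) (f1 := fun y => zx y b - ε * (1 - 2 * y))
        (x := a) ?_ ?_ ?_
      · filter_upwards [Ioo_mem_nhds ha'.1 ha'.2] with y hy
        have q : HasDerivAt (fun y : ℝ => ε * (y * (1 - y))) (ε * (1 - 2 * y)) y := by
          have := ((hasDerivAt_id y).mul ((hasDerivAt_id y).const_sub 1)).const_mul ε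
          refine this.congr_deriv ?_
          simp only [id]; ring
        exact (hx y hy b hb').sub q
      · have q : HasDerivAt (fun y : ℝ => ε * (1 - 2 * y)) (-(2 * ε)) a := by
          have := (((hasDerivAt_id a).const_mul 2).const_sub 1).const_mul ε
          refine this.congr_deriv ?_
          ring
        have := (hxx a ha' b hb').sub q
        exact this.congr_deriv (by ring)
      · filter_upwards [Ioo_mem_nhds ha'.1 ha'.2] with y hy
        exact hM y ⟨hy.1.le, hy.2.le⟩ b hb
    linarith [hs a ha' b hb']
  have h1 := hM x hx0 t ht0
  have h2 : x * (1 - x) ≤ 1 := by nlinarith [sq_nonneg x, hx0.1, hx0.2]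
  have : ε * (x * (1 - x)) ≤ ε := by nlinarith
  simp only [hZ] at h1 key
  linarith

lemma lti_mp_abs (z zx zxx zt : ℝ → ℝ → ℝ) (t0 t1 ε : ℝ) (hε : 0 < ε)
    (hc : ContinuousOn (fun p : ℝ × ℝ => z p.1 p.2) (Icc 0 1 ×ˢ Icc t0 t1))
    (hx : ∀ x ∈ Ioo (0:ℝ) 1, ∀ t ∈ Ioc t0 t1, HasDerivAt (fun y => z y t) (zx x t) x)
    (hxx : ∀ x ∈ Ioo (0:ℝ) 1, ∀ t ∈ Ioc t0 t1, HasDerivAt (fun y => zx y t) (zxx x t) x)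
    (ht : ∀ x ∈ Ioo (0:ℝ) 1, ∀ t ∈ Ioc t0 t1, HasDerivAt (fun s => z x s) (zt x t) t)
    (hs : ∀ x ∈ Ioo (0:ℝ) 1, ∀ t ∈ Ioc t0 t1, |zt x t - zxx x t| ≤ ε)
    (hb0 : ∀ t ∈ Icc t0 t1, |z 0 t| ≤ ε) (hb1 : ∀ t ∈ Icc t0 t1, |z 1 t| ≤ ε)
    (hi : ∀ x ∈ Icc (0:ℝ) 1, |z x t0| ≤ ε) :
    ∀ x ∈ Icc (0:ℝ) 1, ∀ t ∈ Icc t0 t1, |z x t| ≤ 2 * ε := by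
  intro x hx0 t ht0
  rw [abs_le]
  constructor
  · have := lti_mp (fun x t => - z x t) (fun x t => - zx x t) (fun x t => - zxx x t)
      (fun x t => - zt x t) t0 t1 ε hε hc.neg (fun x h t h' => (hx x h t h').neg)
      (fun x h t h' => (hxx x h t h').neg) (fun x h t h' => (ht x h t h').neg)
      (fun x h t h' => by linarith [(abs_le.1 (hs x h t h')).1])
      (fun t h => by linarith [(abs_le.1 (hb0 t h)).1])
      (fun t h => by linarith [(abs_le.1 (hb1 t h)).1])
      (fun t h => by linarith [(abs_le.1 (hi t h)).1]) x hx0 t ht0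
    linarith
  · exact lti_mp z zx zxx zt t0 t1 ε hε hc hx hxx ht
      (fun x h t h' => (abs_le.1 (hs x h t h')).2)
      (fun t h => (abs_le.1 (hb0 t h)).2) (fun t h => (abs_le.1 (hb1 t h)).2)
      (fun t h => (abs_le.1 (hi t h)).2) x hx0 t ht0

lemma lti_poly (m : ℝ) (hm : m ≠ 0) : ∀ n : ℕ, ∀ h : Polynomial ℝ,
    (Polynomial.derivative^[2 * n] h = 0) →
    ∃ p : Polynomial ℝ, Polynomial.C m * p - Polynomial.derivative (Polynomial.derivative p) = h := by
  intro n
  induction n with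
  | zero => intro h hh; exact ⟨0, by simpa using hh.symm⟩
  | succ n ih =>
    intro h hh
    obtain ⟨p, hp⟩ := ih (Polynomial.derivative (Polynomial.derivative h)) (by
      rw [← Function.iterate_succ_apply, ← Function.iterate_succ_apply]; exact hh)
    refine ⟨Polynomial.C m⁻¹ * (h + p), ?_⟩
    have e : Polynomial.C m * Polynomial.C m⁻¹ = 1 := by
      rw [← Polynomial.C_mul, mul_inv_cancel₀ hm, Polynomial.C_1]
    simp only [Polynomial.derivative_C_mul, Polynomial.derivative_add]
    linear_combination (h + p - p) * e - Polynomial.C m⁻¹ * (-hp)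

lemma lti_bvp (m : ℕ) (hm : 1 ≤ m) (k : ℕ) (c α : ℝ) : ∃ y y1 y2 : ℝ → ℝ,
    (∀ x, HasDerivAt y (y1 x) x) ∧ (∀ x, HasDerivAt y1 (y2 x) x) ∧
    (∀ x, m * y x - y2 x = c * x ^ k) ∧ y 0 = 0 ∧ y 1 = α := by
  have hm0 : (0:ℝ) < m := by exact_mod_cast hm
  obtain ⟨p, hp⟩ := lti_poly m hm0.ne' (k + 1) (Polynomial.C c * Polynomial.X ^ k) (by
    apply Polynomial.iterate_derivative_eq_zero
    refine lt_of_le_of_lt (Polynomial.natDegree_C_mul_X_pow_le c k) (by omega))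
  set r := √(m:ℝ) with hr
  have hr0 : 0 < r := Real.sqrt_pos.2 hm0
  have hrr : r * r = m := Real.mul_self_sqrt hm0.le
  have hsh : Real.sinh r ≠ 0 := (Real.sinh_pos_iff.2 hr0).ne'
  set A := - p.eval 0
  set B := (α - p.eval 1 - A * Real.cosh r) / Real.sinh r with hB
  have dl : ∀ x, HasDerivAt (fun x : ℝ => r * x) r x := fun x => by
    simpa using (hasDerivAt_id x).const_mul r
  have dc : ∀ x, HasDerivAt (fun x : ℝ => Real.cosh (r * x)) (Real.sinh (r * x) * r) x :=
    fun x => (dl x).cosh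
  have ds : ∀ x, HasDerivAt (fun x : ℝ => Real.sinh (r * x)) (Real.cosh (r * x) * r) x :=
    fun x => (dl x).sinh
  refine ⟨fun x => p.eval x + A * Real.cosh (r * x) + B * Real.sinh (r * x),
    fun x => p.derivative.eval x + A * (Real.sinh (r * x) * r) + B * (Real.cosh (r * x) * r),
    fun x => p.derivative.derivative.eval x + A * (Real.cosh (r * x) * r * r)
      + B * (Real.sinh (r * x) * r * r), ?_, ?_, ?_, ?_, ?_⟩
  · intro x
    exact ((p.hasDerivAt x).add ((dc x).const_mul A)).add ((ds x).const_mul B)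
  · intro x
    exact ((p.derivative.hasDerivAt x).add (((ds x).mul_const r).const_mul A)).add
      (((dc x).mul_const r).const_mul B)
  · intro x
    have := congrArg (Polynomial.eval x) hp
    simp at this
    simp only
    linear_combination this - (A * Real.cosh (r * x) + B * Real.sinh (r * x)) * hrr
  · simp [A]
  · simp only [mul_one]
    rw [hB]; field_simp; ring

structure LtiNice (τ lam : ℝ) (v g vx vxx vt : ℝ → ℝ → ℝ) (W W1 : ℝ → ℝ) : Prop where
  cont : Continuous fun p : ℝ × ℝ => v p.1 p.2
  hx : ∀ x t, HasDerivAt (fun y => v y t) (vx x t) x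
  hxx : ∀ x t, HasDerivAt (fun y => vx y t) (vxx x t) x
  ht : ∀ x t, HasDerivAt (fun s => v x s) (vt x t) t
  ct : ∀ x, Continuous (vt x)
  cxx : ∀ x, Continuous (vxx x)
  src : ∀ x t, vt x t - vxx x t = g x t
  hW : ∀ x, HasDerivAt W (W1 x) x
  hW1 : ∀ x, HasDerivAt W1 (∫ t in (0:ℝ)..τ, Real.exp (-lam * t) * vxx x t) x
  eW : ∀ x, W x = ∫ t in (0:ℝ)..τ, Real.exp (-lam * t) * v x t
  dec : ∃ K, ∀ x ∈ Icc (0:ℝ) 1, ∀ t ≤ (0:ℝ), |v x t| ≤ K * Real.exp t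

lemma LtiNice.contt {τ lam : ℝ} {v g vx vxx vt : ℝ → ℝ → ℝ} {W W1 : ℝ → ℝ}
    (h : LtiNice τ lam v g vx vxx vt W W1) (x : ℝ) : Continuous (v x) :=
  continuous_iff_continuousAt.2 fun t => (h.ht x t).continuousAt

lemma LtiNice.add {τ lam : ℝ} {v g vx vxx vt v' g' vx' vxx' vt' : ℝ → ℝ → ℝ}
    {W W1 W' W1' : ℝ → ℝ}
    (h : LtiNice τ lam v g vx vxx vt W W1) (h' : LtiNice τ lam v' g' vx' vxx' vt' W' W1') :
    LtiNice τ lam (fun x t => v x t + v' x t) (fun x t => g x t + g' x t)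
      (fun x t => vx x t + vx' x t) (fun x t => vxx x t + vxx' x t) (fun x t => vt x t + vt' x t)
      (fun x => W x + W' x) (fun x => W1 x + W1' x) where
  cont := h.cont.add h'.cont
  hx x t := (h.hx x t).add (h'.hx x t)
  hxx x t := (h.hxx x t).add (h'.hxx x t)
  ht x t := (h.ht x t).add (h'.ht x t)
  ct x := (h.ct x).add (h'.ct x)
  cxx x := (h.cxx x).add (h'.cxx x)
  src x t := by rw [← h.src, ← h'.src]; ring
  hW x := (h.hW x).add (h'.hW x)
  hW1 x := by
    refine ((h.hW1 x).add (h'.hW1 x)).congr_deriv ?_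
    have c1 := h.cxx x
    have c2 := h'.cxx x
    rw [← intervalIntegral.integral_add]
    · congr 1; ext t; ring
    · exact Continuous.intervalIntegrable (by fun_prop) _ _
    · exact Continuous.intervalIntegrable (by fun_prop) _ _
  eW x := by
    have c1 := h.contt x
    have c2 := h'.contt x
    rw [h.eW, h'.eW, ← intervalIntegral.integral_add]
    · congr 1; ext t; ring
    · exact Continuous.intervalIntegrable (by fun_prop) _ _
    · exact Continuous.intervalIntegrable (by fun_prop) _ _
  dec := by
    obtain ⟨K, hK⟩ := h.dec
    obtain ⟨K', hK'⟩ := h'.dec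
    refine ⟨K + K', fun x hx t ht => (abs_add_le _ _).trans ?_⟩
    linarith [hK x hx t ht, hK' x hx t ht]

lemma lti_nice_base (τ lam : ℝ) (m : ℕ) (hm : 1 ≤ m) (y y1 y2 : ℝ → ℝ)
    (h1 : ∀ x, HasDerivAt y (y1 x) x) (h2 : ∀ x, HasDerivAt y1 (y2 x) x) :
    LtiNice τ lam (fun x t => Real.exp (m * t) * y x)
      (fun x t => Real.exp (m * t) * (m * y x - y2 x))
      (fun x t => Real.exp (m * t) * y1 x) (fun x t => Real.exp (m * t) * y2 x)
      (fun x t => Real.exp (m * t) * m * y x)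
      (fun x => (∫ t in (0:ℝ)..τ, Real.exp (-lam * t) * Real.exp (m * t)) * y x)
      (fun x => (∫ t in (0:ℝ)..τ, Real.exp (-lam * t) * Real.exp (m * t)) * y1 x) where
  cont := by
    have : Continuous y := continuous_iff_continuousAt.2 fun t => (h1 t).continuousAt
    fun_prop
  hx x t := (h1 x).const_mul _
  hxx x t := (h2 x).const_mul _
  ht x t := by
    have : HasDerivAt (fun s : ℝ => (m:ℝ) * s) m t := by
      simpa using (hasDerivAt_id t).const_mul (m:ℝ)
    exact this.exp.mul_const _
  ct x := by fun_prop
  cxx x := by fun_prop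
  src x t := by ring
  hW x := (h1 x).const_mul _
  hW1 x := by
    refine ((h2 x).const_mul _).congr_deriv ?_
    rw [← intervalIntegral.integral_mul_const]
    congr 1; ext t; ring
  eW x := by
    rw [← intervalIntegral.integral_mul_const]
    congr 1; ext t; ring
  dec := by
    have hc : Continuous y := continuous_iff_continuousAt.2 fun t => (h1 t).continuousAt
    obtain ⟨K, hK⟩ := isCompact_Icc.exists_bound_of_continuousOn (s := Icc (0:ℝ) 1) hc.continuousOn
    refine ⟨K, fun x hx t ht => ?_⟩
    rw [abs_mul, Real.abs_exp, mul_comm]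
    have hk := hK x hx
    rw [Real.norm_eq_abs] at hk
    refine mul_le_mul hk (Real.exp_le_exp.2 ?_) (Real.exp_pos _).le ((abs_nonneg _).trans hk)
    have : (1:ℝ) ≤ m := by exact_mod_cast hm
    nlinarith

lemma lti_src (τ lam : ℝ) (p : MvPolynomial (Fin 2) ℝ) : ∃ v g vx vxx vt W W1,
    LtiNice τ lam v g vx vxx vt W W1 ∧ (∀ t, v 0 t = 0) ∧ (∀ t, v 1 t = 0) ∧
    ∀ x t, g x t = Real.exp t * MvPolynomial.eval ![x, Real.exp t] p := by
  induction p using MvPolynomial.induction_on' with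
  | monomial d c =>
    obtain ⟨y, y1, y2, h1, h2, h3, h4, h5⟩ := lti_bvp (d 1 + 1) (by omega) (d 0) c 0
    refine ⟨_, _, _, _, _, _, _, lti_nice_base τ lam (d 1 + 1) (by omega) y y1 y2 h1 h2,
      fun t => by simp [h4], fun t => by simp [h5], fun x t => ?_⟩
    rw [h3, MvPolynomial.eval_monomial, Finsupp.prod_fintype _ _ (by simp)]
    simp only [Fin.prod_univ_two, Matrix.cons_val_zero, Matrix.cons_val_one]
    rw [Real.exp_nat_mul, pow_succ]
    ring
  | add p q hp hq =>
    obtain ⟨v, g, vx, vxx, vt, W, W1, h, h0, h1, hg⟩ := hp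
    obtain ⟨v', g', vx', vxx', vt', W', W1', h', h0', h1', hg'⟩ := hq
    refine ⟨_, _, _, _, _, _, _, h.add h', fun t => by simp [h0, h0'], fun t => by simp [h1, h1'],
      fun x t => ?_⟩
    simp only [hg, hg', map_add]; ring

lemma lti_bdry (τ lam : ℝ) (p : Polynomial ℝ) : ∃ v g vx vxx vt W W1,
    LtiNice τ lam v g vx vxx vt W W1 ∧ (∀ t, v 0 t = 0) ∧
    (∀ t, v 1 t = Real.exp t * p.eval (Real.exp t)) ∧ ∀ x t, g x t = 0 := by
  induction p using Polynomial.induction_on' with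
  | monomial n c =>
    obtain ⟨y, y1, y2, h1, h2, h3, h4, h5⟩ := lti_bvp (n + 1) (by omega) 0 0 c
    refine ⟨_, _, _, _, _, _, _, lti_nice_base τ lam (n + 1) (by omega) y y1 y2 h1 h2,
      fun t => by simp [h4], fun t => ?_, fun x t => ?_⟩
    · simp only [h5, Polynomial.eval_monomial]
      rw [Real.exp_nat_mul, pow_succ]
      ring
    · rw [h3]; simp
  | add p q hp hq =>
    obtain ⟨v, g, vx, vxx, vt, W, W1, h, h0, h1, hg⟩ := hp
    obtain ⟨v', g', vx', vxx', vt', W', W1', h', h0', h1', hg'⟩ := hq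
    refine ⟨_, _, _, _, _, _, _, h.add h', fun t => by simp [h0, h0'], fun t => ?_,
      fun x t => by simp [hg, hg']⟩
    simp only [h1, h1', Polynomial.eval_add]; ring

lemma lti_weier (K : Set (ℝ × ℝ)) (hK : IsCompact K) (F : ℝ × ℝ → ℝ) (hF : ContinuousOn F K)
    (ε : ℝ) (hε : 0 < ε) : ∃ p : MvPolynomial (Fin 2) ℝ, ∀ z ∈ K,
      |MvPolynomial.eval ![z.1, z.2] p - F z| < ε := by
  have := isCompact_iff_compactSpace.mp hK
  let X : Fin 2 → C(K, ℝ) := ![⟨fun z => z.1.1, by fun_prop⟩, ⟨fun z => z.1.2, by fun_prop⟩]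
  let A : Subalgebra ℝ C(K, ℝ) := (MvPolynomial.aeval (R := ℝ) X).range
  have hA : A.SeparatesPoints := by
    intro z w hzw
    have hm : ∀ i, X i ∈ A := fun i => ⟨MvPolynomial.X i, by simp⟩
    by_cases h : z.1.1 = w.1.1
    · refine ⟨X 1, ⟨X 1, hm 1, rfl⟩, fun h' => hzw (Subtype.ext (Prod.ext h h'))⟩
    · exact ⟨X 0, ⟨X 0, hm 0, rfl⟩, h⟩
  obtain ⟨⟨g, p, rfl⟩, hg⟩ :=
    ContinuousMap.exists_mem_subalgebra_near_continuous_of_separatesPoints A hA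
      (fun z : K => F z) (by exact continuousOn_iff_continuous_domRestrict.mp hF) ε hε
  refine ⟨p, fun z hz => ?_⟩
  have hev : ∀ r : MvPolynomial (Fin 2) ℝ,
      MvPolynomial.eval ![z.1, z.2] r = (MvPolynomial.aeval (R := ℝ) X r : C(K, ℝ)) ⟨z, hz⟩ := by
    intro r
    induction r using MvPolynomial.induction_on with
    | C a => simp
    | add p q hp hq => rw [map_add, map_add, hp, hq]; rfl
    | mul_X p i hp =>
      rw [map_mul, map_mul, hp, ContinuousMap.mul_apply, MvPolynomial.eval_X, MvPolynomial.aeval_X]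
      congr 1
      fin_cases i <;> rfl
  have := hg ⟨z, hz⟩
  rw [Real.norm_eq_abs] at this
  rw [hev]
  exact this

lemma lti_approx (q a : ℝ → ℝ) (hq : ContinuousOn q (Icc 0 1))
    (u ux uxx ut : ℝ → ℝ → ℝ) (hu : IsHeatSolution q a u ux uxx ut)
    (τ lam ε : ℝ) (hτ : 0 < τ) (hε : 0 < ε) : ∃ v g vx vxx vt W W1,
    LtiNice τ lam v g vx vxx vt W W1 ∧
    (∀ x ∈ Icc (0:ℝ) 1, ∀ t ∈ Icc 0 τ, |v x t - u x t| ≤ 4 * ε) ∧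
    (∀ x ∈ Icc (0:ℝ) 1, ∀ t ∈ Icc 0 τ, |g x t + q x * u x t| ≤ ε) := by
  obtain ⟨uc, uhx, uhxx, -, uht, -, upde, ui, ub⟩ := hu
  set S := Real.exp τ with hS
  have hS0 : 0 < S := Real.exp_pos _
  have hlog : Continuous fun s : ℝ => Real.log (max s 1) :=
    Continuous.log (by fun_prop) fun s => by positivity
  have hlog0 : ∀ s, 0 ≤ Real.log (max s 1) := fun s => Real.log_nonneg (le_max_right _ _)
  have hlexp : ∀ t, 0 ≤ t → Real.log (max (Real.exp t) 1) = t := fun t ht => by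
    rw [max_eq_left (Real.one_le_exp ht), Real.log_exp]
  have hlexp' : ∀ t, t ≤ 0 → Real.log (max (Real.exp t) 1) = 0 := fun t ht => by
    rw [max_eq_right (Real.exp_le_one_iff.2 ht), Real.log_one]
  set G : ℝ × ℝ → ℝ := fun z => (max z.2 1)⁻¹ * u z.1 (Real.log (max z.2 1)) with hG
  have hGc : ContinuousOn G (Icc 0 1 ×ˢ Icc 0 S) := by
    refine ContinuousOn.mul (Continuous.continuousOn ?_) ?_
    · exact Continuous.inv₀ (by fun_prop) fun z => by positivity
    · refine uc.comp (f := fun z : ℝ × ℝ => (z.1, Real.log (max z.2 1))) ?_ ?_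
      · exact (Continuous.prodMk continuous_fst (hlog.comp continuous_snd)).continuousOn
      · intro z hz
        exact ⟨hz.1, hlog0 _⟩
  have hGpos : ∀ x, ∀ t, 0 ≤ t → Real.exp t * G (x, Real.exp t) = u x t := fun x t ht => by
    simp only [hG]
    rw [hlexp t ht, max_eq_left (Real.one_le_exp ht), ← mul_assoc,
      mul_inv_cancel₀ (Real.exp_pos t).ne', one_mul]
  have hGneg : ∀ x ∈ Icc (0:ℝ) 1, ∀ t, t ≤ 0 → G (x, Real.exp t) = 0 := fun x hx t ht => by
    simp only [hG]
    rw [hlexp' t ht, ui x hx, mul_zero]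
  obtain ⟨p, hp⟩ := lti_weier _ (isCompact_Icc.prod isCompact_Icc) (fun z => -(q z.1) * G z)
    (((hq.comp continuousOn_fst fun z hz => hz.1).neg).mul hGc) (ε / S) (by positivity)
  obtain ⟨r, hr⟩ := exists_polynomial_near_of_continuousOn 0 S (fun s => G (1, s))
    (hGc.comp (f := fun s => ((1:ℝ), s)) (by fun_prop) fun s hs => ⟨by simp, hs⟩)
    (ε / S) (by positivity)
  have hexpS : ∀ t, t ≤ τ → Real.exp t ∈ Icc 0 S := fun t ht =>
    ⟨(Real.exp_pos t).le, Real.exp_le_exp.2 ht⟩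
  have hmul : ∀ t, t ≤ τ → ∀ A B : ℝ, |A - B| < ε / S →
      |Real.exp t * A - Real.exp t * B| ≤ ε := by
    intro t ht A B h
    rw [← mul_sub, abs_mul, Real.abs_exp]
    calc Real.exp t * |A - B| ≤ S * (ε / S) :=
          mul_le_mul (hexpS t ht).2 h.le (abs_nonneg _) hS0.le
      _ = ε := by field_simp
  obtain ⟨v, g, vx, vxx, vt, W, W1, h, h0, h1, hg⟩ := lti_src τ lam p
  obtain ⟨v', g', vx', vxx', vt', W', W1', h', h0', h1', hg'⟩ := lti_bdry τ lam r
  have H := h.add h'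
  have sg : ∀ x ∈ Icc (0:ℝ) 1, ∀ t ∈ Icc 0 τ, |g x t + g' x t + q x * u x t| ≤ ε := by
    intro x hx t ht
    have := hmul t ht.2 _ _ (hp (x, Real.exp t) ⟨hx, hexpS t ht.2⟩)
    simp only at this
    rw [hg, hg']
    rw [← hGpos x t ht.1]
    convert this using 2; ring
  have sgn : ∀ x ∈ Icc (0:ℝ) 1, ∀ t ≤ 0, |g x t + g' x t| ≤ ε := by
    intro x hx t ht
    have := hmul t (ht.trans hτ.le) _ _ (hp (x, Real.exp t) ⟨hx, hexpS t (ht.trans hτ.le)⟩)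
    simp only at this
    rw [hGneg x hx t ht] at this
    rw [hg, hg']
    convert this using 2; ring
  have sb : ∀ t ∈ Icc 0 τ, |v 1 t + v' 1 t - u 1 t| ≤ ε := by
    intro t ht
    have := hmul t ht.2 _ _ (hr (Real.exp t) (hexpS t ht.2))
    rw [hGpos 1 t ht.1] at this
    rw [h1, h1', zero_add]; exact this
  have sbn : ∀ t ≤ 0, |v 1 t + v' 1 t| ≤ ε := by
    intro t ht
    have := hmul t (ht.trans hτ.le) _ _ (hr (Real.exp t) (hexpS t (ht.trans hτ.le)))
    rw [hGneg 1 (by simp) t ht] at this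
    rw [h1, h1', zero_add]; simpa using this
  have sv0 : ∀ x ∈ Icc (0:ℝ) 1, |v x 0 + v' x 0| ≤ 2 * ε := by
    obtain ⟨K, hK⟩ := H.dec
    have : ∀ᶠ N in atBot, K * Real.exp N < ε := by
      have : Tendsto (fun N => K * Real.exp N) atBot (𝓝 (K * 0)) :=
        Real.tendsto_exp_atBot.const_mul K
      rw [mul_zero] at this
      exact this.eventually_lt_const hε
    obtain ⟨N, hN, hN0⟩ := (this.and (eventually_le_atBot 0)).exists
    intro x hx
    refine lti_mp_abs _ _ _ _ N 0 ε hε H.cont.continuousOn (fun x _ t _ => H.hx x t)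
      (fun x _ t _ => H.hxx x t) (fun x _ t _ => H.ht x t) ?_ ?_ ?_ ?_ x hx 0 ⟨hN0, le_rfl⟩
    · intro x hx t ht
      rw [H.src]; exact sgn x (Ioo_subset_Icc_self hx) t ht.2
    · intro t ht; simp [h0, h0', hε.le]
    · intro t ht; exact sbn t ht.2
    · intro x hx; exact (hK x hx N hN0).trans hN.le
  refine ⟨_, _, _, _, _, _, _, H, ?_, sg⟩
  have u0 : ∀ t, 0 ≤ t → u 0 t = 0 := by
    intro t ht
    rcases ht.eq_or_lt with rfl | h
    · exact ui 0 (by simp)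
    · exact (ub t h).1
  have := lti_mp_abs (fun x t => v x t + v' x t - u x t) (fun x t => vx x t + vx' x t - ux x t)
    (fun x t => vxx x t + vxx' x t - uxx x t) (fun x t => vt x t + vt' x t - ut x t) 0 τ (2 * ε)
    (by positivity)
    (H.cont.continuousOn.sub (uc.mono (prod_mono le_rfl Icc_subset_Ici_self)))
    (fun x hx t ht => (H.hx x t).sub (uhx t ht.1 x (Ioo_subset_Icc_self hx)))
    (fun x hx t ht => (H.hxx x t).sub (uhxx t ht.1 x (Ioo_subset_Icc_self hx)))
    (fun x hx t ht => (H.ht x t).sub (uht x (Ioo_subset_Icc_self hx) t ht.1))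
    ?_ ?_ ?_ ?_
  · intro x hx t ht
    have := this x hx t ht
    linarith
  · intro x hx t ht
    have e := H.src x t
    have b := sg x (Ioo_subset_Icc_self hx) t ⟨ht.1.le, ht.2⟩
    rw [upde x hx t ht.1]
    have : vt x t + vt' x t - (uxx x t - q x * u x t) - (vxx x t + vxx' x t - uxx x t)
      = g x t + g' x t + q x * u x t := by linarith
    rw [this]; linarith
  · intro t ht; simp [h0, h0', u0 t ht.1, hε.le]
  · intro t ht; exact (sb t ht).trans (by linarith)
  · intro x hx; simp only [ui x hx, sub_zero]; exact sv0 x hx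

lemma lti_bd {u ux : ℝ → ℝ → ℝ} {C c : ℝ} (hb : HeatGrowthBound u ux C c) (lam : ℝ)
    {x : ℝ} (hx : x ∈ Icc (0:ℝ) 1) {t : ℝ} (ht : 0 ≤ t) :
    |Real.exp (-lam * t) * u x t| ≤ C * Real.exp ((c - lam) * t) := by
  rw [abs_mul, Real.abs_exp]
  have h := hb x hx t ht
  have h2 : |u x t| ≤ C * Real.exp (c * t) := by linarith [abs_nonneg (ux x t)]
  calc Real.exp (-lam * t) * |u x t| ≤ Real.exp (-lam * t) * (C * Real.exp (c * t)) := by gcongr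
    _ = C * (Real.exp (-lam * t) * Real.exp (c * t)) := by ring
    _ = _ := by rw [← Real.exp_add]; congr 2; ring

lemma lti_int {u ux : ℝ → ℝ → ℝ} {C c : ℝ} (hb : HeatGrowthBound u ux C c) {lam : ℝ}
    (hlam : c < lam)
    (uc : ContinuousOn (fun p : ℝ × ℝ => u p.1 p.2) (Set.Icc 0 1 ×ˢ Set.Ici 0))
    {x : ℝ} (hx : x ∈ Icc (0:ℝ) 1) :
    IntegrableOn (fun t => Real.exp (-lam * t) * u x t) (Ioi 0) := by
  have huc : ContinuousOn (u x) (Ioi 0) :=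
    uc.comp (f := fun t => (x, t)) (by fun_prop) fun t ht => ⟨hx, Ioi_subset_Ici_self ht⟩
  have hi : IntegrableOn (fun t => C * Real.exp ((c - lam) * t)) (Ioi 0) :=
    (integrableOn_exp_mul_Ioi (by linarith) 0).const_mul C
  refine Integrable.mono' hi ?_ ?_
  · exact ContinuousOn.aestronglyMeasurable (by fun_prop) measurableSet_Ioi
  · filter_upwards [ae_restrict_mem measurableSet_Ioi] with t ht
    exact lti_bd hb lam hx (le_of_lt ht)

lemma lti_tail {u ux : ℝ → ℝ → ℝ} {C c : ℝ} (hb : HeatGrowthBound u ux C c) {lam : ℝ}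
    (hlam : c < lam) {x : ℝ} (hx : x ∈ Icc (0:ℝ) 1) {τ : ℝ} (hτ : 0 ≤ τ) :
    |∫ t in Ioi τ, Real.exp (-lam * t) * u x t| ≤ C * Real.exp ((c - lam) * τ) / (lam - c) := by
  have hi : IntegrableOn (fun t => C * Real.exp ((c - lam) * t)) (Ioi τ) :=
    (integrableOn_exp_mul_Ioi (by linarith) τ).const_mul C
  have := norm_integral_le_of_norm_le (μ := volume.restrict (Ioi τ)) hi
    (f := fun t => Real.exp (-lam * t) * u x t) (by
      filter_upwards [ae_restrict_mem measurableSet_Ioi] with t ht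
      exact lti_bd hb lam hx (hτ.trans (le_of_lt ht)))
  rw [Real.norm_eq_abs] at this
  refine this.trans (le_of_eq ?_)
  rw [integral_const_mul, integral_exp_mul_Ioi (by linarith)]
  have : lam - c ≠ 0 := by linarith
  have : c - lam ≠ 0 := by intro h; apply this; linarith
  field_simp
  ring

lemma lti_W (q a : ℝ → ℝ) (hq : ContinuousOn q (Icc 0 1))
    (u ux uxx ut : ℝ → ℝ → ℝ) (hu : IsHeatSolution q a u ux uxx ut)
    (C c : ℝ) (hC : 0 < C) (hc : 0 < c) (hb : HeatGrowthBound u ux C c)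
    (lam : ℝ) (hlam : c < lam) (η : ℝ) (hη : 0 < η) : ∃ W W1 W2 : ℝ → ℝ,
    (∀ x, HasDerivAt W (W1 x) x) ∧ (∀ x, HasDerivAt W1 (W2 x) x) ∧
    ∀ x ∈ Icc (0:ℝ) 1, |W x - ∫ t in Ioi (0:ℝ), Real.exp (-lam * t) * u x t| ≤ η ∧
      |W2 x - (lam + q x) * ∫ t in Ioi (0:ℝ), Real.exp (-lam * t) * u x t| ≤ η := by
  obtain ⟨Q, hQ⟩ := isCompact_Icc.exists_bound_of_continuousOn hq
  have hQ0 : 0 ≤ Q := (norm_nonneg _).trans (hQ 0 (by simp))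
  have hl0 : 0 < lam := hc.trans hlam
  have hlc : 0 < lam - c := by linarith
  have hτex : ∃ τ > 0, C * Real.exp ((c - lam) * τ) * (1 + 1 / (lam - c)) * (2 + lam + Q) ≤ η / 2 := by
    have h1 : Tendsto (fun τ => Real.exp ((c - lam) * τ)) atTop (𝓝 0) := by
      refine Real.tendsto_exp_atBot.comp ?_
      exact tendsto_id.const_mul_atTop_of_neg (by linarith)
    have h2 := ((h1.const_mul C).mul_const (1 + 1 / (lam - c))).mul_const (2 + lam + Q)
    simp only [mul_zero, zero_mul] at h2
    obtain ⟨τ, h, h'⟩ := ((h2.eventually_lt_const (half_pos hη)).and (eventually_gt_atTop 0)).exists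
    exact ⟨τ, h', h.le⟩
  obtain ⟨τ, hτ, hδ⟩ := hτex
  set e := C * Real.exp ((c - lam) * τ) with he
  have he0 : 0 < e := by positivity
  set δ := e * (1 + 1 / (lam - c)) with hδdef
  have hδ0 : 0 < δ := by positivity
  have heδ : e ≤ δ := by rw [hδdef]; exact le_mul_of_one_le_right he0.le (by simp [hlc.le])
  have heδ' : e / (lam - c) ≤ δ := by rw [hδdef, mul_add, mul_one, mul_one_div]; linarith
  set ε := η / 2 / (8 + 4 * lam * τ + 4 * τ) with hεdef
  have hε : 0 < ε := by positivity
  have hεη : ε * (8 + 4 * lam * τ + 4 * τ) = η / 2 := by rw [hεdef]; field_simp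
  have hετ : 0 ≤ ε * τ := by positivity
  have hεlτ : 0 ≤ ε * lam * τ := by positivity
  obtain ⟨v, g, vx, vxx, vt, W, W1, H, hv, hg⟩ :=
    lti_approx q a hq u ux uxx ut hu τ lam ε hτ hε
  obtain ⟨uc, -, -, -, -, -, -, ui, -⟩ := hu
  refine ⟨W, W1, _, H.hW, H.hW1, fun x hx => ?_⟩
  have hint := lti_int hb hlam uc hx
  set w := ∫ t in Ioi (0:ℝ), Real.exp (-lam * t) * u x t with hw
  set I := ∫ t in (0:ℝ)..τ, Real.exp (-lam * t) * u x t with hI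
  set R := ∫ t in Ioi τ, Real.exp (-lam * t) * u x t with hR
  have hwIR : w = I + R :=
    (intervalIntegral.integral_interval_add_Ioi hint (hint.mono_set (Ioi_subset_Ioi hτ.le))).symm
  have hRδ : |R| ≤ δ := (lti_tail hb hlam hx hτ.le).trans heδ'
  have uI : IntervalIntegrable (fun t => Real.exp (-lam * t) * u x t) volume 0 τ := by
    rw [intervalIntegrable_iff_integrableOn_Ioc_of_le hτ.le]
    exact hint.mono_set Ioc_subset_Ioi_self
  have cv := H.contt x
  have cvt := H.ct x
  have cvxx := H.cxx x
  have cg : Continuous (g x) := by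
    have : g x = fun t => vt x t - vxx x t := funext fun t => (H.src x t).symm
    rw [this]; exact cvt.sub cvxx
  have bexp : ∀ t, 0 ≤ t → ∀ A b : ℝ, |A| ≤ b → |Real.exp (-lam * t) * A| ≤ b := by
    intro t ht A b hA
    rw [abs_mul, Real.abs_exp]
    have : Real.exp (-lam * t) ≤ 1 := Real.exp_le_one_iff.2 (by nlinarith)
    calc _ ≤ 1 * |A| := by gcongr
      _ ≤ b := by linarith
  have hWI : |W x - I| ≤ 4 * ε * τ := by
    rw [H.eW, hI, ← intervalIntegral.integral_sub (Continuous.intervalIntegrable (by fun_prop) _ _) uI]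
    have := intervalIntegral.norm_integral_le_of_norm_le_const (a := 0) (b := τ) (C := 4 * ε)
      (f := fun t => Real.exp (-lam * t) * v x t - Real.exp (-lam * t) * u x t) (by
        intro t ht
        rw [uIoc_of_le hτ.le] at ht
        rw [← mul_sub]
        exact bexp t ht.1.le _ _ (hv x hx t ⟨ht.1.le, ht.2⟩))
    rw [sub_zero, abs_of_pos hτ] at this
    exact this
  set J := ∫ t in (0:ℝ)..τ, Real.exp (-lam * t) * (g x t + q x * u x t) with hJ
  have hJb : |J| ≤ ε * τ := by
    have := intervalIntegral.norm_integral_le_of_norm_le_const (a := 0) (b := τ) (C := ε)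
      (f := fun t => Real.exp (-lam * t) * (g x t + q x * u x t)) (by
        intro t ht
        rw [uIoc_of_le hτ.le] at ht
        exact bexp t ht.1.le _ _ (hg x hx t ⟨ht.1.le, ht.2⟩))
    rw [sub_zero, abs_of_pos hτ] at this
    exact this
  have hJe : J = (∫ t in (0:ℝ)..τ, Real.exp (-lam * t) * g x t) + q x * I := by
    rw [hI, ← intervalIntegral.integral_const_mul, ← intervalIntegral.integral_add
      (Continuous.intervalIntegrable (by fun_prop) _ _) (uI.const_mul _), hJ]
    congr 1; ext t; ring
  have hFTC : ∫ t in (0:ℝ)..τ, (Real.exp (-lam * t) * vt x t - lam * (Real.exp (-lam * t) * v x t))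
      = Real.exp (-lam * τ) * v x τ - v x 0 := by
    rw [intervalIntegral.integral_eq_sub_of_hasDerivAt
      (f := fun t => Real.exp (-lam * t) * v x t)]
    · simp
    · intro t _
      have d : HasDerivAt (fun t : ℝ => -lam * t) (-lam) t := by
        simpa using (hasDerivAt_id t).const_mul (-lam)
      exact (d.exp.mul (H.ht x t)).congr_deriv (by ring)
    · exact Continuous.intervalIntegrable (by fun_prop) _ _
  have hW2 : ∫ t in (0:ℝ)..τ, Real.exp (-lam * t) * vxx x t
      = Real.exp (-lam * τ) * v x τ - v x 0 + lam * W x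
        - ∫ t in (0:ℝ)..τ, Real.exp (-lam * t) * g x t := by
    rw [← hFTC, H.eW, ← intervalIntegral.integral_const_mul, ← intervalIntegral.integral_add
      (Continuous.intervalIntegrable (by fun_prop) _ _)
      (Continuous.intervalIntegrable (by fun_prop) _ _), ← intervalIntegral.integral_sub
      (Continuous.intervalIntegrable (by fun_prop) _ _)
      (Continuous.intervalIntegrable (by fun_prop) _ _)]
    congr 1; ext t; rw [← H.src]; ring
  have hvτ : |Real.exp (-lam * τ) * v x τ| ≤ 4 * ε + δ := by
    have e1 := bexp τ hτ.le _ _ (hv x hx τ ⟨hτ.le, le_rfl⟩)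
    have e2 := (lti_bd hb lam hx hτ.le).trans heδ
    have : Real.exp (-lam * τ) * v x τ
      = Real.exp (-lam * τ) * (v x τ - u x τ) + Real.exp (-lam * τ) * u x τ := by ring
    rw [this]
    exact (abs_add_le _ _).trans (add_le_add e1 e2)
  have hv0 : |v x 0| ≤ 4 * ε := by
    have := hv x hx 0 ⟨le_rfl, hτ.le⟩
    rwa [ui x hx, sub_zero] at this
  have hqR : |q x * R| ≤ Q * δ := by
    rw [abs_mul]; exact mul_le_mul (hQ x hx) hRδ (abs_nonneg _) hQ0
  have hlR : |lam * R| ≤ lam * δ := by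
    rw [abs_mul, abs_of_pos hl0]; gcongr
  have hlWI : |lam * (W x - I)| ≤ lam * (4 * ε * τ) := by
    rw [abs_mul, abs_of_pos hl0]; gcongr
  have hlδ : 0 ≤ lam * δ := by positivity
  have hQδ : 0 ≤ Q * δ := by positivity
  have hδ' : 2 * δ + lam * δ + Q * δ ≤ η / 2 := by linarith
  have hεη' : 8 * ε + 4 * (ε * lam * τ) + 4 * (ε * τ) = η / 2 := by linarith
  clear_value δ ε w I R J
  rw [abs_le] at hWI hRδ hJb hvτ hv0 hqR hlR hlWI
  constructor
  · rw [hwIR, abs_le]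
    constructor <;> linarith
  · have : (∫ t in (0:ℝ)..τ, Real.exp (-lam * t) * vxx x t) - (lam + q x) * w
      = Real.exp (-lam * τ) * v x τ - v x 0 + lam * (W x - I) - lam * R - J - q x * R := by
      rw [hW2, hJe, hwIR]; ring
    rw [this, abs_le]
    constructor <;> linarith

lemma lti_B (u ux : ℝ → ℝ → ℝ)
    (uc : ContinuousOn (fun p : ℝ × ℝ => u p.1 p.2) (Set.Icc 0 1 ×ˢ Set.Ici 0))
    (uhx : ∀ t > (0:ℝ), ∀ x ∈ Set.Icc (0:ℝ) 1, HasDerivAt (fun y => u y t) (ux x t) x)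
    (C c : ℝ) (hb : HeatGrowthBound u ux C c) (lam : ℝ) (hlam : c < lam) (h : ℕ → ℝ)
    (h0 : ∀ n, 0 < h n) (h1 : ∀ n, h n ≤ 1) (hh : Tendsto h atTop (𝓝 0)) :
    Tendsto (fun n => ((∫ t in Ioi (0:ℝ), Real.exp (-lam * t) * u 1 t)
      - ∫ t in Ioi (0:ℝ), Real.exp (-lam * t) * u (1 - h n) t) / h n) atTop
      (𝓝 (∫ t in Ioi (0:ℝ), Real.exp (-lam * t) * ux 1 t)) := by
  have hm : ∀ n, 1 - h n ∈ Icc (0:ℝ) 1 := fun n => ⟨by linarith [h1 n], by linarith [h0 n]⟩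
  have m1 : (1:ℝ) ∈ Icc (0:ℝ) 1 := by simp
  have i1 := lti_int hb hlam uc m1
  have i2 := fun n => lti_int hb hlam uc (hm n)
  have e : ∀ n, ((∫ t in Ioi (0:ℝ), Real.exp (-lam * t) * u 1 t)
      - ∫ t in Ioi (0:ℝ), Real.exp (-lam * t) * u (1 - h n) t) / h n
      = ∫ t in Ioi (0:ℝ), (Real.exp (-lam * t) * u 1 t - Real.exp (-lam * t) * u (1 - h n) t) / h n := by
    intro n
    rw [integral_div, integral_sub i1 (i2 n)]
  simp only [e]
  refine tendsto_integral_of_dominated_convergence (fun t => C * Real.exp ((c - lam) * t)) ?_ ?_ ?_ ?_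
  · intro n
    exact ((i1.sub (i2 n)).div_const (h n)).aestronglyMeasurable
  · exact (integrableOn_exp_mul_Ioi (by linarith) 0).const_mul C
  · intro n
    filter_upwards [ae_restrict_mem measurableSet_Ioi] with t ht
    have ht' : 0 < t := ht
    have hmv := (convex_Icc (0:ℝ) 1).norm_image_sub_le_of_norm_hasDerivWithin_le
      (f := fun y => u y t) (f' := fun y => ux y t) (C := C * Real.exp (c * t))
      (fun y hy => (uhx t ht y hy).hasDerivWithinAt)
      (fun y hy => by
        have := hb y hy t ht'.le
        rw [Real.norm_eq_abs]; linarith [abs_nonneg (u y t)]) (hm n) m1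
    simp only [Real.norm_eq_abs, sub_sub_cancel, abs_of_pos (h0 n)] at hmv
    rw [← mul_sub, Real.norm_eq_abs, abs_div, abs_mul, Real.abs_exp, abs_of_pos (h0 n),
      div_le_iff₀ (h0 n)]
    calc Real.exp (-lam * t) * |u 1 t - u (1 - h n) t|
        ≤ Real.exp (-lam * t) * (C * Real.exp (c * t) * h n) := by gcongr
      _ = C * (Real.exp (-lam * t) * Real.exp (c * t)) * h n := by ring
      _ = _ := by rw [← Real.exp_add]; congr 3; ring
  · filter_upwards [ae_restrict_mem measurableSet_Ioi] with t ht
    have hd := uhx t ht 1 m1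
    rw [hasDerivAt_iff_tendsto_slope] at hd
    have hs : Tendsto (fun n => 1 - h n) atTop (𝓝[≠] 1) := by
      rw [tendsto_nhdsWithin_iff]
      refine ⟨by simpa using hh.const_sub 1, Eventually.of_forall fun n => ?_⟩
      simpa using (h0 n).ne'
    refine ((hd.comp hs).const_mul (Real.exp (-lam * t))).congr fun n => ?_
    have := (h0 n).ne'
    simp only [Function.comp, slope_def_field]
    rw [show 1 - h n - 1 = -h n by ring]
    field_simp
    ring

/-- Laplace-transform identity `B(λ) φ(1,-λ) = A(λ) φ'(1,-λ)` for the
flux at `x = 1`, valid for every real `λ > c`. -/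
theorem laplace_transform_identity_flux_right
    (q a : ℝ → ℝ) (hq : ContinuousOn q (Set.Icc 0 1))
    (ha : IsAdmissiblePulse a)
    (T : ℝ) (hT : 0 < T) (hsupp : ∀ t > T, a t = 0)
    (u ux uxx ut : ℝ → ℝ → ℝ) (hu : IsHeatSolution q a u ux uxx ut)
    (C c : ℝ) (hC : 0 < C) (hc : 0 < c) (hbound : HeatGrowthBound u ux C c)
    (lam : ℝ) (hlam : c < lam)
    (φ φ' : ℝ → ℝ) (hφ : IsSLSolution q (-lam) φ φ') :
    (∫ t in Set.Ioi (0:ℝ), Real.exp (-lam * t) * ux 1 t) * φ 1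
      = (∫ t in (0:ℝ)..T, Real.exp (-lam * t) * a t) * φ' 1 := by
  obtain ⟨P, hP⟩ := isCompact_Icc.exists_bound_of_continuousOn (s := Icc (0:ℝ) 1) (f := φ)
    fun x hx => (hφ.1 x hx).continuousAt.continuousWithinAt
  obtain ⟨Q, hQ⟩ := isCompact_Icc.exists_bound_of_continuousOn hq
  have hP0 : 0 ≤ P := (norm_nonneg _).trans (hP 0 (by simp))
  have hQ0 : 0 ≤ Q := (norm_nonneg _).trans (hQ 0 (by simp))
  have hl0 : 0 < lam := hc.trans hlam
  have hlc : 0 < lam - c := by linarith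
  have hWW := lti_W q a hq u ux uxx ut hu C c hC hc hbound lam hlam
  obtain ⟨uc, uhx, -, -, -, -, -, ui, ub⟩ := hu
  obtain ⟨p1, p2, p3, p4⟩ := hφ
  have m1 : (1:ℝ) ∈ Icc (0:ℝ) 1 := by simp
  have m0 : (0:ℝ) ∈ Icc (0:ℝ) 1 := by simp
  set w : ℝ → ℝ := fun x => ∫ t in Ioi (0:ℝ), Real.exp (-lam * t) * u x t with hw
  have hWW' : ∀ η > 0, ∃ W W1 W2 : ℝ → ℝ,
    (∀ x, HasDerivAt W (W1 x) x) ∧ (∀ x, HasDerivAt W1 (W2 x) x) ∧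
    ∀ x ∈ Icc (0:ℝ) 1, |W x - w x| ≤ η ∧ |W2 x - (lam + q x) * w x| ≤ η := hWW
  have hA : w 1 = ∫ t in (0:ℝ)..T, Real.exp (-lam * t) * a t := by
    have i1 := lti_int hbound hlam uc m1
    have e1 := intervalIntegral.integral_interval_add_Ioi i1
      (i1.mono_set (Ioi_subset_Ioi hT.le))
    have e2 : ∫ t in Ioi T, Real.exp (-lam * t) * u 1 t = 0 := by
      rw [setIntegral_congr_fun (g := fun _ => (0:ℝ)) measurableSet_Ioi]
      · simp
      · intro t ht
        have ht' : T < t := ht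
        simp only
        rw [(ub t (hT.trans ht')).2, hsupp t ht', mul_zero]
    simp only [hw]
    rw [← e1, e2, add_zero]
    refine intervalIntegral.integral_congr_ae (Eventually.of_forall fun t ht => ?_)
    rw [uIoc_of_le hT.le] at ht
    rw [(ub t ht.1).2]
  have hw0 : w 0 = 0 := by
    simp only [hw]
    rw [setIntegral_congr_fun (g := fun _ => (0:ℝ)) measurableSet_Ioi]
    · simp
    · intro t ht
      simp only
      rw [(ub t ht).1, mul_zero]
  set Mw := C / (lam - c) with hMw
  have hMw0 : 0 < Mw := by positivity
  have hwb : ∀ x ∈ Icc (0:ℝ) 1, |w x| ≤ Mw := by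
    intro x hx
    have := lti_tail hbound hlam hx le_rfl
    rwa [mul_zero, Real.exp_zero, mul_one] at this
  have hlq : ∀ x ∈ Icc (0:ℝ) 1, |lam + q x| ≤ lam + Q := by
    intro x hx
    refine (abs_add_le _ _).trans ?_
    rw [abs_of_pos hl0]; linarith [hQ x hx, Real.norm_eq_abs (q x)]
  set M2 := 1 + (lam + Q) * Mw with hM2
  have hM20 : 0 ≤ M2 := by positivity
  have key : ∀ h, 0 < h → h ≤ 1 → |φ 1 * ((w 1 - w (1 - h)) / h) - φ' 1 * w 1| ≤ |φ 1| * (M2 * h) := by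
    intro h hh0 hh1
    have mh : 1 - h ∈ Icc (0:ℝ) 1 := ⟨by linarith, by linarith⟩
    have main : ∀ η ∈ Ioo (0:ℝ) 1, |φ 1 * ((w 1 - w (1 - h)) / h) - φ' 1 * w 1|
        ≤ (P * ((1 + (lam + Q)) * η) + η + |φ' 1| * η) + |φ 1| * (M2 * h + 2 * η / h) := by
      intro η hη
      obtain ⟨W, W1, W2, hW, hW1, hWb⟩ := hWW' η hη.1
      have s1 : |φ 1 * W1 1 - φ' 1 * W 1 - (φ 0 * W1 0 - φ' 0 * W 0)|
          ≤ P * ((1 + (lam + Q)) * η) := by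
        refine norm_image_sub_le_of_norm_deriv_le_segment_01'
          (f := fun x => φ x * W1 x - φ' x * W x)
          (f' := fun x => φ x * (W2 x - (lam + q x) * W x)) ?_ ?_
        · intro x hx
          exact ((((p1 x hx).mul (hW1 x)).sub ((p2 x hx).mul (hW x))).congr_deriv
            (by ring)).hasDerivWithinAt
        · intro x hx
          have hx' := Ico_subset_Icc_self hx
          obtain ⟨b1, b2⟩ := hWb x hx'
          rw [norm_mul]
          refine mul_le_mul (hP x hx') ?_ (norm_nonneg _) hP0
          have e : W2 x - (lam + q x) * W x
            = (W2 x - (lam + q x) * w x) - (lam + q x) * (W x - w x) := by ring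
          rw [e, Real.norm_eq_abs]
          refine (abs_sub _ _).trans ?_
          rw [abs_mul]
          have := mul_le_mul (hlq x hx') b1 (abs_nonneg _) (by positivity)
          linarith
      have s2 : ∀ x ∈ Icc (0:ℝ) 1, |W2 x| ≤ M2 := by
        intro x hx
        obtain ⟨b1, b2⟩ := hWb x hx
        have := mul_le_mul (hlq x hx) (hwb x hx) (abs_nonneg _) (by positivity)
        rw [← abs_mul] at this
        have e : W2 x = (W2 x - (lam + q x) * w x) + (lam + q x) * w x := by ring
        rw [e]
        refine (abs_add_le _ _).trans ?_
        linarith [hη.2]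
      have s3 : ∀ x ∈ Icc (1 - h) 1, |W1 x - W1 1| ≤ M2 * h := by
        intro x hx
        have hx' : x ∈ Icc (0:ℝ) 1 := ⟨by linarith [hx.1], hx.2⟩
        have := (convex_Icc (0:ℝ) 1).norm_image_sub_le_of_norm_hasDerivWithin_le
          (fun y _ => (hW1 y).hasDerivWithinAt) s2 m1 hx'
        refine this.trans ?_
        gcongr
        rw [Real.norm_eq_abs, abs_le]
        constructor <;> linarith [hx.1, hx.2]
      have s4 : |(W 1 - W1 1 * 1) - (W (1 - h) - W1 1 * (1 - h))| ≤ M2 * h * h := by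
        have := (convex_Icc (1 - h) 1).norm_image_sub_le_of_norm_hasDerivWithin_le
          (f := fun y => W y - W1 1 * y) (f' := fun y => W1 y - W1 1) (C := M2 * h)
          (fun y _ => by
            have d : HasDerivAt (fun y : ℝ => W1 1 * y) (W1 1) y := by
              simpa using (hasDerivAt_id y).const_mul (W1 1)
            exact ((hW y).sub d).hasDerivWithinAt) s3
          (show 1 - h ∈ Icc (1 - h) 1 from ⟨le_rfl, by linarith⟩)
          (show (1:ℝ) ∈ Icc (1 - h) 1 from ⟨by linarith, le_rfl⟩)
        rw [show (1:ℝ) - (1 - h) = h by ring, Real.norm_eq_abs h, abs_of_pos hh0] at this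
        exact this
      have b1 := (hWb 1 m1).1
      have bh := (hWb (1 - h) mh).1
      have b0 := (hWb 0 m0).1
      rw [hw0, sub_zero] at b0
      rw [p3, p4] at s1
      have s5 : |(w 1 - w (1 - h)) / h - W1 1| ≤ M2 * h + 2 * η / h := by
        have e : (w 1 - w (1 - h)) / h - W1 1 = (w 1 - w (1 - h) - W1 1 * h) / h := by
          field_simp
        have e' : M2 * h + 2 * η / h = (M2 * h * h + 2 * η) / h := by field_simp
        rw [e, e', abs_div, abs_of_pos hh0]
        gcongr
        rw [abs_le] at s4 b1 bh ⊢
        constructor <;> nlinarith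
      have s6 : |φ 1 * W1 1 - φ' 1 * w 1| ≤ P * ((1 + (lam + Q)) * η) + η + |φ' 1| * η := by
        have e : φ 1 * W1 1 - φ' 1 * w 1
          = (φ 1 * W1 1 - φ' 1 * W 1 - (0 * W1 0 - 1 * W 0)) - W 0 + φ' 1 * (W 1 - w 1) := by ring
        rw [e]
        refine (abs_add_le _ _).trans (add_le_add ((abs_sub _ _).trans (add_le_add s1 b0)) ?_)
        rw [abs_mul]; gcongr
      have e : φ 1 * ((w 1 - w (1 - h)) / h) - φ' 1 * w 1
        = (φ 1 * W1 1 - φ' 1 * w 1) + φ 1 * ((w 1 - w (1 - h)) / h - W1 1) := by ring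
      rw [e]
      refine (abs_add_le _ _).trans (add_le_add s6 ?_)
      rw [abs_mul]; gcongr
    have lim : Tendsto (fun η : ℝ => (P * ((1 + (lam + Q)) * η) + η + |φ' 1| * η)
        + |φ 1| * (M2 * h + 2 * η / h)) (𝓝[>] 0) (𝓝 (|φ 1| * (M2 * h))) := by
      have : Continuous (fun η : ℝ => (P * ((1 + (lam + Q)) * η) + η + |φ' 1| * η)
        + |φ 1| * (M2 * h + 2 * η / h)) := by fun_prop
      have := (this.tendsto 0).mono_left (nhdsWithin_le_nhds (s := Ioi 0))
      simpa using this
    refine ge_of_tendsto lim ?_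
    filter_upwards [Ioo_mem_nhdsGT (zero_lt_one (α := ℝ))] with η hη using main η hη
  set h : ℕ → ℝ := fun n => 1 / ((n:ℝ) + 1) with hh
  have hh0 : ∀ n, 0 < h n := fun n => by simp only [hh]; positivity
  have hh1 : ∀ n, h n ≤ 1 := fun n => by
    simp only [hh]; rw [div_le_one (by positivity)]; linarith [Nat.cast_nonneg (α := ℝ) n]
  have hht : Tendsto h atTop (𝓝 0) := tendsto_one_div_add_atTop_nhds_zero_nat
  have hB := lti_B u ux uc uhx C c hbound lam hlam h hh0 hh1 hht
  set B := ∫ t in Ioi (0:ℝ), Real.exp (-lam * t) * ux 1 t with hBdef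
  have hB' : Tendsto (fun n => (w 1 - w (1 - h n)) / h n) atTop (𝓝 B) := hB
  have L1 : Tendsto (fun n => |φ 1 * ((w 1 - w (1 - h n)) / h n) - φ' 1 * w 1|) atTop
    (𝓝 |φ 1 * B - φ' 1 * w 1|) := ((hB'.const_mul _).sub_const _).abs
  have L2 : Tendsto (fun n => |φ 1| * (M2 * h n)) atTop (𝓝 0) := by
    simpa using (hht.const_mul M2).const_mul |φ 1|
  have fin := le_of_tendsto_of_tendsto' L1 L2 fun n => key (h n) (hh0 n) (hh1 n)
  have fin' := abs_nonpos_iff.1 fin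
  rw [← hA]
  linarith
end

section
/- Let q be a continuous real-valued potential on [0,1], a an admissible boundary pulse with support in [0,T], and u a classical solution of the heat problem for q with boundary data a, satisfying |u| + |∂x u| ≤ C e^{ct}. Then for every real λ > c, the Laplace transforms B₀(λ) = ∫₀^∞ e^{−λt} ∂x u(0,t) dt and A(λ) = ∫₀^T e^{−λt} a(t) dt satisfy the identity B₀(λ) · φ(1,−λ;q) = A(λ). -/
open Set Filter Topology MeasureTheory

/-- `R` solves `R_t = R_xx - Q R` pointwise on `(0,1) × (0,τ)` and is continuous up to the boundary. -/
def PtSol (Q : ℝ → ℝ) (τ : ℝ) (R : ℝ → ℝ → ℝ) : Prop :=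
  ContinuousOn (fun z : ℝ × ℝ => R z.1 z.2) (Icc 0 1 ×ˢ Icc 0 τ) ∧
  ∃ Rx Rxx Rt : ℝ → ℝ → ℝ, ∀ x ∈ Ioo (0:ℝ) 1, ∀ t ∈ Ioo (0:ℝ) τ,
    HasDerivAt (fun y => R y t) (Rx x t) x ∧ HasDerivAt (fun y => Rx y t) (Rxx x t) x ∧
    HasDerivAt (fun s => R x s) (Rt x t) t ∧ Rt x t = Rxx x t - Q x * R x t

lemma second_deriv_nonpos {f f' : ℝ → ℝ} {f'' x : ℝ}
    (h1 : ∀ᶠ y in 𝓝 x, HasDerivAt f (f' y) y) (h2 : HasDerivAt f' f'' x)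
    (hm : IsLocalMax f x) : f'' ≤ 0 := by
  by_contra hpos
  push Not at hpos
  have e1 : deriv f =ᶠ[𝓝 x] f' := h1.mono fun y hy => hy.deriv
  have e2 : deriv (deriv f) x = f'' := by rw [e1.deriv_eq, h2.deriv]
  have hmin := isLocalMin_of_deriv_deriv_pos (f := f) (x₀ := x) (by rw [e2]; exact hpos)
    hm.deriv_eq_zero h1.self_of_nhds.continuousAt
  have e3 : f =ᶠ[𝓝 x] fun _ => f x := by
    filter_upwards [hm, hmin] with y a b using le_antisymm a b
  have e4 : deriv f =ᶠ[𝓝 x] fun _ => 0 := by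
    have := e3.deriv
    simpa using this
  have : deriv (deriv f) x = 0 := by rw [e4.deriv_eq]; simp
  rw [e2] at this
  exact absurd this hpos.ne'

lemma comparison {Q U p p' : ℝ → ℝ} {K : ℝ} (hK : 0 ≤ K) (hQ : ∀ x ∈ Icc (0:ℝ) 1, |Q x| ≤ K)
    (hp : ∀ x ∈ Icc (0:ℝ) 1, HasDerivAt p (p' x) x)
    (hp' : ∀ x ∈ Icc (0:ℝ) 1, HasDerivAt p' (Q x * U x) x)
    (h0 : U 0 = p 0) (h1 : U 1 = p 1)
    (happ : ∀ η > (0:ℝ), ∃ τ, 0 < τ ∧ τ ≤ 1 ∧ ∃ R, PtSol Q τ R ∧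
      ∀ x ∈ Icc (0:ℝ) 1, ∀ t ∈ Icc (0:ℝ) τ, |R x t - U x| ≤ η * τ) :
    ∀ x ∈ Icc (0:ℝ) 1, U x ≤ p x := by
  intro xs hxs
  by_contra hcon
  push Not at hcon
  set δ := (U xs - p xs) / 2 with hδ
  have hδ0 : 0 < δ := by rw [hδ]; linarith
  obtain ⟨τ, hτ, hτ1, R, ⟨hRc, Rx, Rxx, Rt, hR⟩, happ⟩ := happ (δ / (9 * (1 + K))) (by positivity)
  set ε := δ / (9 * (1 + K)) * τ with hε
  have hε0 : 0 < ε := by positivity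
  have hε1 : 9 * (ε * (1 + K)) = δ * τ := by rw [hε]; field_simp
  have hε2 : 9 * ε ≤ δ * τ := by nlinarith
  have hε3 : δ * τ ≤ δ := by nlinarith
  have hε4 : 9 * (K * ε) ≤ δ := by nlinarith
  set E : ℝ × ℝ → ℝ := fun z => R z.1 z.2 - p z.1 + δ * (z.1 ^ 2 - z.1) - δ / τ * (z.2 - τ / 2) ^ 2
    with hE
  have hpc : ContinuousOn p (Icc 0 1) := fun x hx => (hp x hx).continuousAt.continuousWithinAt
  have hEc : ContinuousOn E (Icc 0 1 ×ˢ Icc 0 τ) := by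
    have : ContinuousOn (fun z : ℝ × ℝ => p z.1) (Icc 0 1 ×ˢ Icc 0 τ) :=
      hpc.comp continuousOn_fst (fun z hz => hz.1)
    exact ((hRc.sub this).add (by fun_prop)).sub (by fun_prop)
  have hcomp : IsCompact ((Icc (0:ℝ) 1) ×ˢ (Icc (0:ℝ) τ)) := isCompact_Icc.prod isCompact_Icc
  have hmid : τ / 2 ∈ Icc (0:ℝ) τ := ⟨by linarith, by linarith⟩
  obtain ⟨⟨x0, t0⟩, ⟨hx0, ht0⟩, hmax⟩ := hcomp.exists_isMaxOn ⟨(xs, τ / 2), hxs, hmid⟩ hEc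
  simp only at hx0 ht0
  have hmax' : ∀ x ∈ Icc (0:ℝ) 1, ∀ t ∈ Icc (0:ℝ) τ, E (x, t) ≤ E (x0, t0) :=
    fun x hx t ht => hmax (show (x, t) ∈ _ from ⟨hx, ht⟩)
  have hdt : δ / τ * (τ / 2) ^ 2 = δ * τ / 4 := by field_simp; norm_num
  have hpen : 0 ≤ δ / τ * (t0 - τ / 2) ^ 2 := by positivity
  have hval : δ - ε ≤ E (x0, t0) := by
    refine le_trans ?_ (hmax' xs hxs _ hmid)
    have := (abs_le.1 (happ xs hxs _ hmid)).1
    simp only [hE, sub_self]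
    have : xs - xs ^ 2 ≤ 1 := by nlinarith [hxs.1, hxs.2]
    nlinarith
  have hb := (abs_le.1 (happ x0 hx0 t0 ht0)).2
  have hx0' : x0 ∈ Ioo (0:ℝ) 1 := by
    refine ⟨lt_of_le_of_ne hx0.1 ?_, lt_of_le_of_ne hx0.2 ?_⟩
    · rintro rfl
      simp only [hE] at hval
      nlinarith
    · rintro rfl
      simp only [hE] at hval
      nlinarith
  have ht0' : t0 ∈ Ioo (0:ℝ) τ := by
    have hv := hmax' x0 hx0 _ hmid
    have hb2 := (abs_le.1 (happ x0 hx0 _ hmid)).1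
    simp only [hE, sub_self] at hv
    refine ⟨lt_of_le_of_ne ht0.1 ?_, lt_of_le_of_ne ht0.2 ?_⟩
    · rintro rfl
      have : δ / τ * (0 - τ / 2) ^ 2 = δ * τ / 4 := by rw [← hdt]; ring
      nlinarith
    · rintro rfl
      have : δ / t0 * (t0 - t0 / 2) ^ 2 = δ * t0 / 4 := by rw [← hdt]; ring
      nlinarith
  obtain ⟨-, d2, d3, heq⟩ := hR x0 hx0' t0 ht0'
  have hlt : IsLocalMax (fun s => E (x0, s)) t0 := by
    filter_upwards [Ioo_mem_nhds ht0'.1 ht0'.2] with s hs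
    exact hmax' x0 hx0 s (Ioo_subset_Icc_self hs)
  have hdE : HasDerivAt (fun s => E (x0, s)) (Rt x0 t0 - δ / τ * (2 * (t0 - τ / 2))) t0 := by
    simp only [hE]
    have := ((d3.sub_const (p x0)).add_const (δ * (x0 ^ 2 - x0))).sub
      ((((hasDerivAt_id t0).sub_const (τ / 2)).pow 2).const_mul (δ / τ))
    exact this.congr_deriv (by simp)
  have ht := hlt.hasDerivAt_eq_zero hdE
  have hlx : IsLocalMax (fun y => E (y, t0)) x0 := by
    filter_upwards [Ioo_mem_nhds hx0'.1 hx0'.2] with s hs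
    exact hmax' s (Ioo_subset_Icc_self hs) t0 ht0
  have hx := second_deriv_nonpos (f := fun y => E (y, t0))
    (f' := fun y => Rx y t0 - p' y + δ * (2 * y - 1)) (f'' := Rxx x0 t0 - Q x0 * U x0 + δ * 2)
    (x := x0) (by
      filter_upwards [Ioo_mem_nhds hx0'.1 hx0'.2] with y hy
      have := (((hR y hy t0 ht0').1.sub (hp y (Ioo_subset_Icc_self hy))).add
        ((((hasDerivAt_id y).pow 2).sub (hasDerivAt_id y)).const_mul δ)).sub_const
          (δ / τ * (t0 - τ / 2) ^ 2)
      exact this.congr_deriv (by simp)) (by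
      have := (d2.sub (hp' x0 hx0)).add
        ((((hasDerivAt_id x0).const_mul 2).sub_const 1).const_mul δ)
      exact this.congr_deriv (by simp)) hlx
  have hQe : |Q x0 * (R x0 t0 - U x0)| ≤ K * ε := by
    rw [abs_mul]
    exact mul_le_mul (hQ x0 hx0) (happ x0 hx0 t0 ht0) (abs_nonneg _) hK
  have h3 := (abs_le.1 hQe).1
  have h4 : -δ ≤ δ / τ * (2 * (t0 - τ / 2)) := by
    have : δ / τ * (2 * (t0 - τ / 2)) = 2 * (δ / τ * t0) - δ := by field_simp
    rw [this]
    have : 0 ≤ δ / τ * t0 := mul_nonneg (by positivity) ht0.1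
    linarith
  nlinarith

lemma approx {v : ℝ → ℝ → ℝ} {C κ : ℝ} (hC : 0 < C) (hκ : 0 < κ)
    (hv : ContinuousOn (fun z : ℝ × ℝ => v z.1 z.2) (Icc 0 1 ×ˢ Ici 0))
    (hb : ∀ x ∈ Icc (0:ℝ) 1, ∀ t ∈ Ici (0:ℝ), |v x t| ≤ C * Real.exp (-κ * t))
    (h0 : ∀ x ∈ Icc (0:ℝ) 1, v x 0 = 0) (η : ℝ) (hη : 0 < η) :
    ∃ τ, 0 < τ ∧ τ ≤ 1 ∧ ∃ h : ℝ, 0 < h ∧ ∃ M : ℕ, ∀ x ∈ Icc (0:ℝ) 1, ∀ t ∈ Icc (0:ℝ) τ,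
      |∑ i ∈ Finset.range M, h * v x (t + i * h) - ∫ s in Ioi (0:ℝ), v x s| ≤ η * τ := by
  have huc : ∀ L : ℝ, ∀ ε > 0, ∃ d > 0, ∀ x ∈ Icc (0:ℝ) 1, ∀ s ∈ Icc 0 L, ∀ s' ∈ Icc 0 L,
      |s - s'| < d → |v x s - v x s'| < ε := by
    intro L ε hε
    have hc : IsCompact ((Icc (0:ℝ) 1) ×ˢ (Icc (0:ℝ) L)) := isCompact_Icc.prod isCompact_Icc
    have := hc.uniformContinuousOn_of_continuous
      (hv.mono (prod_mono le_rfl Icc_subset_Ici_self))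
    rw [Metric.uniformContinuousOn_iff] at this
    obtain ⟨d, hd, H⟩ := this ε hε
    refine ⟨d, hd, fun x hx s hs s' hs' hss => ?_⟩
    have := H (x, s) ⟨hx, hs⟩ (x, s') ⟨hx, hs'⟩ (by
      rw [Prod.dist_eq]; simp [Real.dist_eq, hss])
    simpa [Real.dist_eq] using this
  have hct : ∀ x ∈ Icc (0:ℝ) 1, ContinuousOn (v x) (Ici 0) := fun x hx =>
    hv.comp (f := fun t => (x, t)) (by fun_prop) (fun t ht => ⟨hx, ht⟩)
  have hexp : ∀ b : ℝ, IntegrableOn (fun t => C * Real.exp (-κ * t)) (Ioi b) := fun b =>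
    (integrableOn_exp_mul_Ioi (by linarith) b).const_mul C
  have hvint : ∀ x ∈ Icc (0:ℝ) 1, IntegrableOn (v x) (Ioi 0) := by
    intro x hx
    refine Integrable.mono' (hexp 0)
      (((hct x hx).mono Ioi_subset_Ici_self).aestronglyMeasurable measurableSet_Ioi) ?_
    exact (ae_restrict_iff' measurableSet_Ioi).2 (ae_of_all _ fun t ht => hb x hx t (mem_Ici.2 (le_of_lt ht)))
  have hii : ∀ x ∈ Icc (0:ℝ) 1, ∀ a b : ℝ, 0 ≤ a → 0 ≤ b → IntervalIntegrable (v x) volume a b := by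
    intro x hx a b ha hb
    refine ((hct x hx).mono ?_).intervalIntegrable
    intro y hy
    exact le_trans (le_min ha hb) hy.1
  obtain ⟨d, hd, hd'⟩ := huc 1 (η / 3) (by positivity)
  obtain ⟨τ, hτ, hτ1, hτd⟩ : ∃ τ : ℝ, 0 < τ ∧ τ ≤ 1 ∧ τ < d :=
    ⟨min 1 (d / 2), by positivity, min_le_left _ _, lt_of_le_of_lt (min_le_right _ _) (by linarith)⟩
  have hlim : Tendsto (fun L : ℝ => C / κ * Real.exp (-κ * L)) atTop (𝓝 (C / κ * 0)) := by
    refine Tendsto.const_mul _ (Real.tendsto_exp_atBot.comp ?_)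
    exact tendsto_id.const_mul_atTop_of_neg (by linarith)
  rw [mul_zero] at hlim
  obtain ⟨L, hL, hL0⟩ := ((hlim.eventually (gt_mem_nhds (show 0 < η * τ / 3 by positivity))).and
    (eventually_gt_atTop 0)).exists
  obtain ⟨e, he, he'⟩ := huc (1 + L) (η * τ / (3 * L)) (by positivity)
  obtain ⟨M, hM⟩ := exists_nat_gt (L / e)
  have hM0 : (0:ℝ) < M := lt_trans (by positivity) hM
  set h := L / M with hh
  have hh0 : 0 < h := by positivity
  have hhe : h < e := by
    rw [div_lt_iff₀ he] at hM
    rw [hh, div_lt_iff₀ hM0]; linarith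
  have hMh : M * h = L := by rw [hh]; field_simp
  refine ⟨τ, hτ, hτ1, h, hh0, M, fun x hx t ht => ?_⟩
  have ht1 : t ≤ 1 := ht.2.trans hτ1
  have s1 : ∫ s in Ioi (0:ℝ), v x s =
      (∫ s in (0:ℝ)..t, v x s) + (∫ s in t..(t + L), v x s) + ∫ s in Ioi (t + L), v x s := by
    rw [intervalIntegral.integral_add_adjacent_intervals (hii x hx _ _ le_rfl ht.1)
      (hii x hx _ _ ht.1 (by linarith [ht.1]))]
    exact (intervalIntegral.integral_interval_add_Ioi (hvint x hx)
      ((hvint x hx).mono_set (Ioi_subset_Ioi (by linarith [ht.1])))).symm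
  have b1 : |∫ s in (0:ℝ)..t, v x s| ≤ η * τ / 3 := by
    have := intervalIntegral.norm_integral_le_of_norm_le_const (f := v x) (a := 0) (b := t)
      (C := η / 3) (by
        intro s hs
        rw [uIoc_of_le ht.1] at hs
        have := hd' x hx s ⟨hs.1.le, hs.2.trans ht1⟩ 0 ⟨le_rfl, zero_le_one⟩ (by
          rw [sub_zero, abs_of_pos hs.1]; linarith [hs.2, ht.2])
        rw [h0 x hx, sub_zero] at this
        exact this.le)
    rw [sub_zero, abs_of_nonneg ht.1] at this
    refine this.trans ?_
    nlinarith [ht.2]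
  have b3 : |∫ s in Ioi (t + L), v x s| ≤ η * τ / 3 := by
    have hst : 0 ≤ t + L := by linarith [ht.1]
    have := norm_integral_le_of_norm_le (μ := volume.restrict (Ioi (t + L))) (f := v x) (hexp (t + L))
      ((ae_restrict_iff' measurableSet_Ioi).2 (ae_of_all _ fun s hs =>
        hb x hx s (hst.trans (le_of_lt hs))))
    refine this.trans ?_
    rw [integral_const_mul, integral_exp_mul_Ioi (by linarith)]
    refine le_trans ?_ hL.le
    rw [neg_div_neg_eq, div_mul_eq_mul_div, mul_div_assoc]
    have : Real.exp (-κ * (t + L)) ≤ Real.exp (-κ * L) := by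
      apply Real.exp_le_exp.2; nlinarith [ht.1]
    gcongr
  have b2 : |∑ i ∈ Finset.range M, h * v x (t + i * h) - ∫ s in t..(t + L), v x s|
      ≤ η * τ / 3 := by
    have hpos : ∀ i : ℕ, 0 ≤ t + i * h := fun i => by have := ht.1; positivity
    have := intervalIntegral.sum_integral_adjacent_intervals (f := v x) (μ := volume)
      (a := fun i : ℕ => t + i * h) (n := M) (fun k _ => hii x hx _ _ (hpos _) (hpos _))
    simp only [Nat.cast_zero, zero_mul, add_zero, hMh] at this
    rw [← this, ← Finset.sum_sub_distrib]
    have hterm : ∀ i ∈ Finset.range M, |h * v x (t + i * h) -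
        ∫ s in (t + i * h)..(t + (i + 1 : ℕ) * h), v x s| ≤ η * τ / (3 * L) * h := by
      intro i hi
      have hiM : ((i:ℝ) + 1) ≤ M := by exact_mod_cast Finset.mem_range.1 hi
      have hiL : (i + 1) * h ≤ L := by rw [← hMh]; gcongr
      have e1 : h * v x (t + i * h) = ∫ s in (t + i * h)..(t + (i + 1 : ℕ) * h), v x (t + i * h) := by
        rw [intervalIntegral.integral_const, smul_eq_mul]; push_cast; ring
      rw [e1, ← intervalIntegral.integral_sub (by simp) (hii x hx _ _ (hpos _) (hpos _))]
      have := intervalIntegral.norm_integral_le_of_norm_le_const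
        (f := fun s => v x (t + i * h) - v x s) (a := t + i * h) (b := t + (i + 1 : ℕ) * h)
        (C := η * τ / (3 * L)) (by
          intro s hs
          have hle : t + i * h ≤ t + (i + 1 : ℕ) * h := by push_cast; nlinarith
          rw [uIoc_of_le hle] at hs
          have hs2 := hs.2
          push_cast at hs2
          refine (he' x hx _ ⟨hpos i, by nlinarith⟩ s ⟨(hpos i).trans hs.1.le, by nlinarith⟩ ?_).le
          rw [abs_sub_comm, abs_of_pos (by linarith [hs.1])]
          nlinarith)
      refine this.trans (le_of_eq ?_)
      congr 1
      push_cast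
      rw [show t + (i + 1) * h - (t + i * h) = h by ring, abs_of_pos hh0]
    refine (Finset.abs_sum_le_sum_abs _ _).trans ((Finset.sum_le_sum hterm).trans ?_)
    rw [Finset.sum_const, Finset.card_range, nsmul_eq_mul]
    rw [show (M:ℝ) * (η * τ / (3 * L) * h) = η * τ / (3 * L) * (M * h) by ring, hMh]
    apply le_of_eq; field_simp
  rw [s1]
  rw [abs_le] at *
  constructor <;> linarith [b1.1, b1.2, b2.1, b2.2, b3.1, b3.2]

lemma ode_unique {Q p p' φ φ' : ℝ → ℝ} {K : ℝ} (hQ : ∀ x ∈ Icc (0:ℝ) 1, |Q x| ≤ K)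
    (hp : ∀ x ∈ Icc (0:ℝ) 1, HasDerivAt p (p' x) x)
    (hp' : ∀ x ∈ Icc (0:ℝ) 1, HasDerivAt p' (Q x * p x) x)
    (hf : ∀ x ∈ Icc (0:ℝ) 1, HasDerivAt φ (φ' x) x)
    (hf' : ∀ x ∈ Icc (0:ℝ) 1, HasDerivAt φ' (Q x * φ x) x)
    (p0 : p 0 = 0) (f0 : φ 0 = 0) (f1 : φ' 0 = 1) : p 1 = p' 0 * φ 1 := by
  set k := p' 0 with hk
  set y : ℝ → ℝ := fun x => p x - k * φ x with hy
  set z : ℝ → ℝ := fun x => p' x - k * φ' x with hz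
  have dy : ∀ x ∈ Icc (0:ℝ) 1, HasDerivAt y (z x) x := fun x hx =>
    (hp x hx).sub ((hf x hx).const_mul k)
  have dz : ∀ x ∈ Icc (0:ℝ) 1, HasDerivAt z (Q x * y x) x := fun x hx =>
    ((hp' x hx).sub ((hf' x hx).const_mul k)).congr_deriv (by simp only [hy]; ring)
  set F : ℝ → ℝ := fun x => (y x ^ 2 + z x ^ 2) * Real.exp (-(1 + K) * x) with hF
  have dF : ∀ x ∈ Icc (0:ℝ) 1, HasDerivAt F ((2 * y x * z x + 2 * z x * (Q x * y x)
      - (1 + K) * (y x ^ 2 + z x ^ 2)) * Real.exp (-(1 + K) * x)) x := by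
    intro x hx
    have he : HasDerivAt (fun x => Real.exp (-(1 + K) * x)) (Real.exp (-(1 + K) * x) * (-(1 + K))) x := by
      have := ((hasDerivAt_id x).const_mul (-(1 + K))).exp
      exact this.congr_deriv (by simp)
    have := (((dy x hx).pow 2).add ((dz x hx).pow 2)).mul he
    exact this.congr_deriv (by simp; ring)
  have hanti : AntitoneOn F (Icc 0 1) := by
    refine antitoneOn_of_hasDerivWithinAt_nonpos (convex_Icc 0 1)
      (fun x hx => (dF x hx).continuousAt.continuousWithinAt)
      (fun x hx => (dF x (interior_subset hx)).hasDerivWithinAt) ?_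
    intro x hx
    refine mul_nonpos_of_nonpos_of_nonneg ?_ (Real.exp_pos _).le
    have hq := abs_le.1 (hQ x (interior_subset hx))
    have h1 : 2 * (y x * z x) * (1 + Q x) ≤ |2 * (y x * z x)| * (1 + K) := by
      refine (le_abs_self _).trans ?_
      rw [abs_mul]
      refine mul_le_mul_of_nonneg_left ?_ (abs_nonneg _)
      rw [abs_le]; constructor <;> linarith [hq.1, hq.2]
    have h2 : |2 * (y x * z x)| ≤ y x ^ 2 + z x ^ 2 := by
      rw [abs_le]; constructor <;> nlinarith [sq_nonneg (y x - z x), sq_nonneg (y x + z x)]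
    have hK : 0 ≤ 1 + K := by linarith [hq.1, hq.2]
    nlinarith [mul_le_mul_of_nonneg_right h2 hK]
  have h01 := hanti (left_mem_Icc.2 zero_le_one) (right_mem_Icc.2 zero_le_one) zero_le_one
  have hF0 : F 0 = 0 := by simp [hF, hy, hz, p0, f0, f1, hk]
  rw [hF0] at h01
  have hE : y 1 ^ 2 + z 1 ^ 2 ≤ 0 := by
    by_contra hc
    push Not at hc
    have : 0 < F 1 := mul_pos hc (Real.exp_pos _)
    linarith
  have : y 1 = 0 := by nlinarith [sq_nonneg (y 1), sq_nonneg (z 1)]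
  simp only [hy] at this
  linarith

lemma PtSol.neg {Q : ℝ → ℝ} {τ : ℝ} {R : ℝ → ℝ → ℝ} (h : PtSol Q τ R) :
    PtSol Q τ (fun x t => - R x t) := by
  obtain ⟨hc, Rx, Rxx, Rt, H⟩ := h
  refine ⟨hc.neg, fun x t => - Rx x t, fun x t => - Rxx x t, fun x t => - Rt x t, ?_⟩
  intro x hx t ht
  obtain ⟨a, b, c, d⟩ := H x hx t ht
  exact ⟨a.neg, b.neg, c.neg, by simp only [d]; ring⟩

lemma ptSol_sum {q a : ℝ → ℝ} {u ux uxx ut : ℝ → ℝ → ℝ} (hu : IsHeatSolution q a u ux uxx ut)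
    (lam τ h : ℝ) (hh : 0 < h) (M : ℕ) :
    PtSol (fun x => q x + lam) τ (fun x t => ∑ i ∈ Finset.range M,
      h * (Real.exp (-lam * (t + i * h)) * u x (t + i * h))) := by
  obtain ⟨hc, hx1, hx2, -, ht1, -, heq, -, -⟩ := hu
  have hsh : ∀ i : ℕ, 0 ≤ (i:ℝ) * h := fun i => by positivity
  refine ⟨?_, fun x t => ∑ i ∈ Finset.range M, h * (Real.exp (-lam * (t + i * h)) * ux x (t + i * h)),
    fun x t => ∑ i ∈ Finset.range M, h * (Real.exp (-lam * (t + i * h)) * uxx x (t + i * h)),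
    fun x t => ∑ i ∈ Finset.range M, h * (Real.exp (-lam * (t + i * h)) *
      (ut x (t + i * h) - lam * u x (t + i * h))), ?_⟩
  · refine continuousOn_finset_sum _ fun i _ => ?_
    refine continuousOn_const.mul (ContinuousOn.mul (by fun_prop) ?_)
    refine hc.comp (f := fun z : ℝ × ℝ => (z.1, z.2 + i * h)) (by fun_prop) ?_
    intro z hz
    exact ⟨hz.1, add_nonneg hz.2.1 (hsh i)⟩
  · intro x hx t ht
    have hpos : ∀ i : ℕ, 0 < t + i * h := fun i => add_pos_of_pos_of_nonneg ht.1 (hsh i)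
    have hxI := Ioo_subset_Icc_self hx
    refine ⟨?_, ?_, ?_, ?_⟩
    · exact HasDerivAt.fun_sum fun i _ => ((hx1 _ (hpos i) x hxI).const_mul _).const_mul h
    · exact HasDerivAt.fun_sum fun i _ => ((hx2 _ (hpos i) x hxI).const_mul _).const_mul h
    · refine HasDerivAt.fun_sum fun i _ => ?_
      refine HasDerivAt.const_mul h ?_
      have e1 : HasDerivAt (fun s : ℝ => s + i * h) 1 t := (hasDerivAt_id t).add_const _
      have e2 : HasDerivAt (fun s => u x (s + i * h)) (ut x (t + i * h)) t :=
        (ht1 x hxI _ (hpos i)).comp_add_const t (i * h)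
      have e3 : HasDerivAt (fun s => Real.exp (-lam * (s + i * h)))
          (Real.exp (-lam * (t + i * h)) * (-lam)) t :=
        ((e1.const_mul (-lam)).exp).congr_deriv (by simp)
      exact (e3.mul e2).congr_deriv (by ring)
    · rw [Finset.mul_sum, ← Finset.sum_sub_distrib]
      refine Finset.sum_congr rfl fun i _ => ?_
      rw [heq x hx _ (hpos i)]
      ring

/-- Laplace-transform identity `B₀(λ) φ(1,-λ) = A(λ)` for the flux at
`x = 0`, valid for every real `λ > c`. -/
theorem laplace_transform_identity_flux_left
    (q a : ℝ → ℝ) (hq : ContinuousOn q (Set.Icc 0 1))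
    (ha : IsAdmissiblePulse a)
    (T : ℝ) (hT : 0 < T) (hsupp : ∀ t > T, a t = 0)
    (u ux uxx ut : ℝ → ℝ → ℝ) (hu : IsHeatSolution q a u ux uxx ut)
    (C c : ℝ) (hC : 0 < C) (hc : 0 < c) (hbound : HeatGrowthBound u ux C c)
    (lam : ℝ) (hlam : c < lam)
    (φ φ' : ℝ → ℝ) (hφ : IsSLSolution q (-lam) φ φ') :
    (∫ t in Set.Ioi (0:ℝ), Real.exp (-lam * t) * ux 0 t) * φ 1
      = ∫ t in (0:ℝ)..T, Real.exp (-lam * t) * a t := by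
  have hu' := hu
  obtain ⟨huc, hx1, -, -, -, -, -, hu0, hbd⟩ := hu
  set v : ℝ → ℝ → ℝ := fun x t => Real.exp (-lam * t) * u x t with hv
  set U : ℝ → ℝ := fun x => ∫ s in Ioi (0:ℝ), v x s with hU
  set Q : ℝ → ℝ := fun x => q x + lam with hQdef
  have hQc : ContinuousOn Q (Icc 0 1) := hq.add continuousOn_const
  obtain ⟨K, hK⟩ := isCompact_Icc.exists_bound_of_continuousOn hQc
  have hQ : ∀ x ∈ Icc (0:ℝ) 1, |Q x| ≤ K := hK
  have hK0 : 0 ≤ K := (abs_nonneg _).trans (hQ 0 ⟨le_rfl, zero_le_one⟩)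
  have hee : ∀ t, Real.exp (-lam * t) * (C * Real.exp (c * t)) = C * Real.exp (-(lam - c) * t) := by
    intro t
    rw [mul_left_comm, ← Real.exp_add]; ring_nf
  have hvc : ContinuousOn (fun z : ℝ × ℝ => v z.1 z.2) (Icc 0 1 ×ˢ Ici 0) :=
    ContinuousOn.mul (by fun_prop) huc
  have hvb : ∀ x ∈ Icc (0:ℝ) 1, ∀ t ∈ Ici (0:ℝ), |v x t| ≤ C * Real.exp (-(lam - c) * t) := by
    intro x hx t ht
    rw [← hee, hv]
    simp only [abs_mul, Real.abs_exp]
    exact mul_le_mul_of_nonneg_left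
      ((le_add_of_nonneg_right (abs_nonneg _)).trans (hbound x hx t ht)) (Real.exp_pos _).le
  have hv0 : ∀ x ∈ Icc (0:ℝ) 1, v x 0 = 0 := fun x hx => by simp [hv, hu0 x hx]
  have hexp : IntegrableOn (fun t => C * Real.exp (-(lam - c) * t)) (Ioi 0) :=
    (integrableOn_exp_mul_Ioi (by linarith) 0).const_mul C
  have hmeas : ∀ x ∈ Icc (0:ℝ) 1, AEStronglyMeasurable (v x) (volume.restrict (Ioi 0)) := by
    intro x hx
    refine ContinuousOn.aestronglyMeasurable ?_ measurableSet_Ioi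
    exact hvc.comp (f := fun t => (x, t)) (by fun_prop) (fun t ht => ⟨hx, mem_Ici.2 (le_of_lt ht)⟩)
  have hUc : ContinuousOn U (Icc 0 1) := by
    refine continuousOn_of_dominated (bound := fun t => C * Real.exp (-(lam - c) * t)) hmeas ?_ hexp ?_
    · intro x hx
      exact (ae_restrict_iff' measurableSet_Ioi).2
        (ae_of_all _ fun t ht => hvb x hx t (mem_Ici.2 (le_of_lt ht)))
    · refine (ae_restrict_iff' measurableSet_Ioi).2 (ae_of_all _ fun t ht => ?_)
      exact hvc.comp (f := fun x => (x, t)) (by fun_prop) (fun x hx => ⟨hx, mem_Ici.2 (le_of_lt ht)⟩)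
  set G : ℝ → ℝ := IccExtend (zero_le_one (α := ℝ)) ((Icc (0:ℝ) 1).restrict (fun x => Q x * U x))
    with hG
  have hGc : Continuous G := (continuousOn_iff_continuous_restrict.1 (hQc.mul hUc)).Icc_extend'
  have hGe : ∀ x ∈ Icc (0:ℝ) 1, G x = Q x * U x := fun x hx => by
    rw [hG, IccExtend_of_mem _ _ hx]; rfl
  have hU0 : U 0 = 0 := by
    rw [hU]
    refine (setIntegral_congr_fun measurableSet_Ioi (g := fun _ => 0) fun t ht => ?_).trans (by simp)
    simp [hv, (hbd t ht).1]
  set P : ℝ → ℝ := fun x => ∫ s in (0:ℝ)..x, G s with hP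
  have dP : ∀ x, HasDerivAt P (G x) x := fun x => hGc.integral_hasStrictDerivAt 0 x |>.hasDerivAt
  have hPc : Continuous P := continuous_iff_continuousAt.2 fun x => (dP x).continuousAt
  set S : ℝ → ℝ := fun x => ∫ s in (0:ℝ)..x, P s with hS
  have dS : ∀ x, HasDerivAt S (P x) x := fun x => hPc.integral_hasStrictDerivAt 0 x |>.hasDerivAt
  set m : ℝ := U 1 - S 1 with hm
  set p : ℝ → ℝ := fun x => S x + m * x with hp
  set p' : ℝ → ℝ := fun x => P x + m with hp'
  have dp : ∀ x, HasDerivAt p (p' x) x := fun x =>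
    ((dS x).add ((hasDerivAt_id x).const_mul m)).congr_deriv (by simp [hp'])
  have dp' : ∀ x, HasDerivAt p' (G x) x := fun x => (dP x).add_const m
  have hp0 : p 0 = 0 := by simp [hp, hS]
  have hp1 : p 1 = U 1 := by simp [hp, hm]
  have happ := approx hC (sub_pos.2 hlam) hvc hvb hv0
  have hle : ∀ x ∈ Icc (0:ℝ) 1, U x ≤ p x := by
    refine comparison (p' := p') hK0 hQ (fun x _ => dp x) (fun x hx => ?_) (by rw [hU0, hp0]) hp1.symm ?_
    · rw [← hGe x hx]; exact dp' x
    · intro η hη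
      obtain ⟨τ, h1, h2, h, h3, M, H⟩ := happ η hη
      exact ⟨τ, h1, h2, _, ptSol_sum hu' lam τ h h3 M, H⟩
  have hge : ∀ x ∈ Icc (0:ℝ) 1, - U x ≤ - p x := by
    refine comparison (U := fun x => - U x) (p := fun x => - p x) (p' := fun x => - p' x) hK0 hQ
      (fun x _ => (dp x).neg) (fun x hx => ?_) (by rw [hU0, hp0]) (by rw [hp1]) ?_
    · rw [mul_neg, ← hGe x hx]; exact (dp' x).neg
    · intro η hη
      obtain ⟨τ, h1, h2, h, h3, M, H⟩ := happ η hη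
      refine ⟨τ, h1, h2, _, (ptSol_sum hu' lam τ h h3 M).neg, fun x hx t ht => ?_⟩
      have := H x hx t ht
      rw [← abs_neg] at this
      refine le_trans (le_of_eq ?_) this
      congr 1
      simp only [hU, hv]
      ring
  have hUp : ∀ x ∈ Icc (0:ℝ) 1, U x = p x := fun x hx =>
    le_antisymm (hle x hx) (by linarith [hge x hx])
  obtain ⟨f1, f2, f3, f4⟩ := hφ
  have key : p 1 = p' 0 * φ 1 := by
    refine ode_unique hQ (fun x _ => dp x) (fun x hx => ?_) f1 (fun x hx => ?_) hp0 f3 f4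
    · rw [← hUp x hx, ← hGe x hx]; exact dp' x
    · exact (f2 x hx).congr_deriv (by simp only [hQdef]; ring)
  have hI : Ioo (0:ℝ) 1 ∈ 𝓝[>] (0:ℝ) := Ioo_mem_nhdsGT zero_lt_one
  have hflux : Tendsto (fun x => ∫ t in Ioi (0:ℝ), x⁻¹ * v x t) (𝓝[>] 0)
      (𝓝 (∫ t in Ioi (0:ℝ), Real.exp (-lam * t) * ux 0 t)) := by
    refine tendsto_integral_filter_of_dominated_convergence
      (fun t => C * Real.exp (-(lam - c) * t)) ?_ ?_ hexp ?_
    · filter_upwards [hI] with x hx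
      exact (hmeas x (Ioo_subset_Icc_self hx)).const_mul _
    · filter_upwards [hI] with x hx
      refine (ae_restrict_iff' measurableSet_Ioi).2 (ae_of_all _ fun t ht => ?_)
      have ht0 : (0:ℝ) < t := ht
      have hmv := (convex_Icc (0:ℝ) 1).norm_image_sub_le_of_norm_hasDerivWithin_le
        (f := fun y => u y t) (f' := fun y => ux y t) (C := C * Real.exp (c * t))
        (fun y hy => (hx1 t ht0 y hy).hasDerivWithinAt)
        (fun y hy => (le_add_of_nonneg_left (abs_nonneg _)).trans (hbound y hy t ht0.le))
        (left_mem_Icc.2 zero_le_one) (Ioo_subset_Icc_self hx)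
      simp only [(hbd t ht0).1, sub_zero, Real.norm_eq_abs, abs_of_pos hx.1] at hmv
      rw [← hee, Real.norm_eq_abs, abs_mul, abs_of_pos (inv_pos.2 hx.1)]
      simp only [hv, abs_mul, Real.abs_exp]
      rw [mul_left_comm]
      refine mul_le_mul_of_nonneg_left ?_ (Real.exp_pos _).le
      rw [inv_mul_le_iff₀ hx.1]
      linarith
    · refine (ae_restrict_iff' measurableSet_Ioi).2 (ae_of_all _ fun t ht => ?_)
      have ht0 : (0:ℝ) < t := ht
      have := (hx1 t ht0 0 (left_mem_Icc.2 zero_le_one)).tendsto_slope_zero_right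
      simp only [zero_add, (hbd t ht0).1, sub_zero, smul_eq_mul] at this
      refine (this.const_mul (Real.exp (-lam * t))).congr fun x => ?_
      simp only [hv]; ring
  have hpl : Tendsto (fun x => ∫ t in Ioi (0:ℝ), x⁻¹ * v x t) (𝓝[>] 0) (𝓝 (p' 0)) := by
    have := (dp 0).tendsto_slope_zero_right
    simp only [zero_add, hp0, sub_zero, smul_eq_mul] at this
    refine this.congr' ?_
    filter_upwards [hI] with x hx
    rw [integral_const_mul, ← hUp x (Ioo_subset_Icc_self hx)]
  have hB := tendsto_nhds_unique hflux hpl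
  rw [hB, ← key, hp1]
  rw [hU, intervalIntegral.integral_of_le hT.le]
  simp only [hv]
  rw [setIntegral_congr_fun measurableSet_Ioi
    (g := fun t => Real.exp (-lam * t) * a t) (fun t ht => by simp only [(hbd t ht).2])]
  refine setIntegral_eq_of_subset_of_forall_diff_eq_zero measurableSet_Ioi Ioc_subset_Ioi_self ?_
  intro t ht
  have : T < t := by
    by_contra hcon
    exact ht.2 ⟨ht.1, not_lt.1 hcon⟩
  rw [hsupp t this, mul_zero]
end
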